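/- arXiv:2212.13343 — 4 statements merged into one kernel-verified Lean document; each statement's English description precedes it below -/
import Mathlib

section
/- For every m ∈ [2,∞) and every ζ ∈ (1 + m/2, ∞) there exists a constant C = C(m,ζ) > 0 such that for every continuously differentiable function v : ℝ² → ℝ whose gradient ∇v belongs to L²(ℝ²), one has (∫_{ℝ²} |v(x)|^m (e+|x|²)^{-1} (log(e+|x|²))^{-ζ} dx)^{1/m} ≤ C‖v‖_{L²(B₁)} + C‖∇v‖_{L²(ℝ²)}. -/
open MeasureTheory Real Set Metric

noncomputable section

abbrev E2 := EuclideanSpace ℝ (Fin 2)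

open scoped ENNReal NNReal

lemma local_sobolev (m : ℝ) (hm : 2 ≤ m) : ∃ K : ℝ≥0, ∀ u : E2 → ℝ, ContDiff ℝ 1 u →
    ∫⁻ x in ball (0 : E2) (1/2), ‖u x‖ₑ ^ m ≤
      K * ((∫⁻ x in ball (0 : E2) 1, ‖u x‖ₑ ^ 2) +
        ∫⁻ x in ball (0 : E2) 1, ‖fderiv ℝ u x‖ₑ ^ 2) ^ (m / 2) := by
  let χ : ContDiffBump (0 : E2) := ⟨1/2, 1, by norm_num, by norm_num⟩
  have hχ : ContDiff ℝ 1 χ := χ.contDiff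
  have hcs : HasCompactSupport (fun x => fderiv ℝ χ x) := χ.hasCompactSupport.fderiv (𝕜 := ℝ)
  obtain ⟨L, hL⟩ := hcs.exists_bound_of_continuous (hχ.continuous_fderiv (by norm_num))
  have hL0 : 0 ≤ L := (norm_nonneg _).trans (hL 0)
  let p : ℝ≥0 := ⟨2 * m / (m + 2), by positivity⟩
  let q : ℝ≥0 := ⟨m, by positivity⟩
  have hp1 : 1 ≤ p := by
    rw [← NNReal.coe_le_coe]
    change (1:ℝ) ≤ 2 * m / (m+2)
    rw [le_div_iff₀ (by linarith)]; linarith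
  have hp2 : p < 2 := by
    rw [← NNReal.coe_lt_coe]
    change 2 * m / (m+2) < (2:ℝ)
    rw [div_lt_iff₀ (by linarith)]; linarith
  let μ : Measure E2 := volume.restrict (ball 0 1)
  let c1 : ℝ≥0 := eLpNormLESNormFDerivOfLeConst ℝ (volume : Measure E2) (ball 0 1) p q
  let e : ℝ := 1 / (p : ℝ≥0∞).toReal - 1 / (2 : ℝ≥0∞).toReal
  have he : 0 ≤ e := by
    have : (p:ℝ) ≤ 2 := by exact_mod_cast hp2.le
    have h1 : (0:ℝ) < p := by exact_mod_cast lt_of_lt_of_le one_pos hp1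
    simp only [e, ENNReal.coe_toReal, ENNReal.toReal_ofNat, sub_nonneg]
    gcongr
  have hvol : (μ univ) ^ e ≠ ∞ := by
    apply ENNReal.rpow_ne_top_of_nonneg he
    simp only [μ, Measure.restrict_apply_univ]
    exact measure_ball_lt_top.ne
  let K1 : ℝ≥0∞ := c1 * (μ univ) ^ e * (1 + ENNReal.ofReal L)
  have hK1 : K1 ≠ ∞ := by
    apply ENNReal.mul_ne_top (ENNReal.mul_ne_top ENNReal.coe_ne_top hvol)
    simp
  refine ⟨((K1 * 2) ^ m).toNNReal, fun u hu => ?_⟩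
  have hK2 : (K1 * 2) ^ m ≠ ∞ := ENNReal.rpow_ne_top_of_nonneg (by positivity)
    (ENNReal.mul_ne_top hK1 (by simp))
  rw [ENNReal.coe_toNNReal hK2]
  set N := ∫⁻ x in ball (0 : E2) 1, ‖u x‖ₑ ^ 2
  set D := ∫⁻ x in ball (0 : E2) 1, ‖fderiv ℝ u x‖ₑ ^ 2
  have hN : eLpNorm u 2 μ = N ^ (1/2 : ℝ) := by
    rw [eLpNorm_eq_lintegral_rpow_enorm_toReal (by norm_num) (by norm_num)]
    simp [N, μ]
  have hD : eLpNorm (fderiv ℝ u) 2 μ = D ^ (1/2 : ℝ) := by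
    rw [eLpNorm_eq_lintegral_rpow_enorm_toReal (by norm_num) (by norm_num)]
    simp [D, μ]
  let w : E2 → ℝ := fun x => χ x * u x
  have hw : ContDiff ℝ 1 w := hχ.mul hu
  have hws : w.support ⊆ ball 0 1 := by
    intro x hx
    have : χ x ≠ 0 := fun h => hx (by simp [w, h])
    have h2 := χ.support_eq
    rw [← h2]; exact this
  have h1 : eLpNorm w q volume ≤ c1 * eLpNorm (fderiv ℝ w) p volume := by
    apply eLpNorm_le_eLpNorm_fderiv_of_le (μ := (volume : Measure E2)) hw hws hp1 (by simpa using hp2) _ isBounded_ball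
    simp only [finrank_euclideanSpace_fin]
    change (2 * m / (m+2))⁻¹ - (2:ℝ)⁻¹ ≤ m⁻¹
    apply le_of_eq
    field_simp
    ring
  have hfs : (fderiv ℝ w).support ⊆ closedBall 0 1 := by
    refine (support_fderiv_subset ℝ).trans ?_
    exact closure_minimal (hws.trans ball_subset_closedBall) isClosed_closedBall
  have h2 : eLpNorm (fderiv ℝ w) p volume = eLpNorm (fderiv ℝ w) p μ := by
    have hr : eLpNorm (fderiv ℝ w) p (volume.restrict (closedBall 0 1)) = eLpNorm (fderiv ℝ w) p volume :=
      eLpNorm_restrict_eq_of_support_subset (ε := E2 →L[ℝ] ℝ) hfs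
    rw [← hr]
    have : (volume : Measure E2).restrict (closedBall 0 1) = μ := by
      apply Measure.restrict_congr_set
      exact (ae_eq_of_subset_of_measure_ge ball_subset_closedBall
        (Measure.addHaar_closedBall_eq_addHaar_ball _ _ _).le measurableSet_ball.nullMeasurableSet
        measure_closedBall_lt_top.ne).symm
    rw [this]
  have hcw : Continuous (fderiv ℝ w) := hw.continuous_fderiv (by norm_num)
  have h3 : eLpNorm (fderiv ℝ w) p μ ≤ eLpNorm (fderiv ℝ w) 2 μ * (μ univ) ^ e :=
    eLpNorm_le_eLpNorm_mul_rpow_measure_univ (by exact_mod_cast hp2.le) hcw.aestronglyMeasurable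
  have h4 : eLpNorm (fderiv ℝ w) 2 μ ≤ (1 + ENNReal.ofReal L) * (N ^ (1/2:ℝ) + D ^ (1/2:ℝ)) := by
    have hcu : Continuous u := hu.continuous
    have hcd : Continuous (fderiv ℝ u) := hu.continuous_fderiv (by norm_num)
    calc eLpNorm (fderiv ℝ w) 2 μ ≤ eLpNorm (fun x => ‖fderiv ℝ u x‖ + L * ‖u x‖) 2 μ := by
          apply eLpNorm_mono_real
          intro x
          have : fderiv ℝ w x = χ x • fderiv ℝ u x + u x • fderiv ℝ χ x :=
            fderiv_mul (hχ.differentiable (by norm_num) x) (hu.differentiable (by norm_num) x)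
          rw [this]
          refine (norm_add_le _ _).trans ?_
          rw [norm_smul, norm_smul]
          have a1 : ‖χ x‖ ≤ 1 := by
            rw [Real.norm_of_nonneg χ.nonneg]; exact χ.le_one
          have a2 := hL x
          have a3 := norm_nonneg (u x)
          have a4 := norm_nonneg (fderiv ℝ u x)
          nlinarith
      _ ≤ eLpNorm (fun x => ‖fderiv ℝ u x‖) 2 μ + eLpNorm (fun x => L * ‖u x‖) 2 μ :=
          eLpNorm_add_le (by fun_prop) (by fun_prop) (by norm_num)
      _ = D ^ (1/2:ℝ) + ENNReal.ofReal L * N ^ (1/2:ℝ) := by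
          have : (fun x => L * ‖u x‖) = L • (fun x => ‖u x‖) := rfl
          rw [this, eLpNorm_const_smul, eLpNorm_norm, eLpNorm_norm, hN, hD, Real.enorm_of_nonneg hL0]
      _ ≤ _ := by
          rw [add_mul, one_mul, mul_add]
          calc _ ≤ D ^ (1/2:ℝ) + ENNReal.ofReal L * N ^ (1/2:ℝ) + (N ^ (1/2:ℝ) + ENNReal.ofReal L * D ^ (1/2:ℝ)) := le_self_add
            _ = _ := by ring
  have h5 : eLpNorm w q volume ≤ K1 * (2 * (N + D) ^ (1/2:ℝ)) := by
    calc _ ≤ c1 * (((1 + ENNReal.ofReal L) * (N ^ (1/2:ℝ) + D ^ (1/2:ℝ))) * (μ univ) ^ e) := by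
          refine h1.trans ?_
          rw [h2]
          gcongr
          refine h3.trans ?_
          gcongr
      _ = K1 * (N ^ (1/2:ℝ) + D ^ (1/2:ℝ)) := by simp only [K1]; ring
      _ ≤ _ := by
          rw [two_mul]
          gcongr
          · exact le_self_add
          · exact le_add_self
  have hq0 : (q : ℝ≥0∞) ≠ 0 := by
    have : q ≠ 0 := by
      intro h
      have : (q : ℝ) = 0 := by rw [h]; rfl
      change m = 0 at this
      linarith
    exact_mod_cast this
  have h6 : ∫⁻ x in ball (0 : E2) (1/2), ‖u x‖ₑ ^ m ≤ (eLpNorm w q volume) ^ m := by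
    rw [eLpNorm_eq_lintegral_rpow_enorm_toReal hq0 ENNReal.coe_ne_top]
    rw [← ENNReal.rpow_mul]
    have : ((q : ℝ≥0∞).toReal) = m := rfl
    rw [this, one_div_mul_cancel (by positivity), ENNReal.rpow_one]
    calc _ = ∫⁻ x in ball (0 : E2) (1/2), ‖w x‖ₑ ^ m := by
          apply setLIntegral_congr_fun measurableSet_ball
          intro x hx
          have : χ x = 1 := χ.one_of_mem_closedBall (ball_subset_closedBall hx)
          simp [w, this]
      _ ≤ _ := setLIntegral_le_lintegral _ _
  refine h6.trans ?_
  calc _ ≤ (K1 * (2 * (N + D) ^ (1/2:ℝ))) ^ m := by gcongr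
    _ = _ := by
      rw [← mul_assoc, ENNReal.mul_rpow_of_nonneg _ _ (by positivity), ← ENNReal.rpow_mul]
      congr 2; ring

lemma lint_smul (f : E2 → ℝ≥0∞) (s : ℝ) (hs : 0 < s) :
    ∫⁻ x : E2, f (s • x) = ENNReal.ofReal ((s ^ 2)⁻¹) * ∫⁻ x, f x := by
  have h := Measure.map_addHaar_smul (volume : Measure E2) hs.ne'
  have h2 : ∫⁻ x, f x ∂(Measure.map (fun x : E2 => s • x) volume) = ∫⁻ x : E2, f (s • x) :=
    (Homeomorph.smulOfNeZero s hs.ne').measurableEmbedding.lintegral_map f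
  rw [← h2, h, lintegral_smul_measure]
  simp

lemma lint_ball_smul (f : E2 → ℝ≥0∞) (s r : ℝ) (hs : 0 < s) :
    ∫⁻ x in ball (0 : E2) r, f (s • x) =
      ENNReal.ofReal ((s ^ 2)⁻¹) * ∫⁻ x in ball (0:E2) (s * r), f x := by
  rw [← lintegral_indicator measurableSet_ball, ← lintegral_indicator measurableSet_ball,
    ← lint_smul _ s hs]
  congr 1
  ext x
  simp only [indicator, mem_ball, dist_zero_right, norm_smul, Real.norm_of_nonneg hs.le]
  simp [hs]

lemma one_dim (g g' : ℝ → ℝ) (hg : ∀ t, HasDerivAt g (g' t) t) (hc : Continuous g')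
    (s : ℝ) (hs : 1 ≤ s) :
    (g s - g 1) ^ 2 ≤ Real.log s * ∫ t in (1:ℝ)..s, t * g' t ^ 2 := by
  rcases hs.eq_or_lt with rfl | hs1
  · simp
  have hL : 0 < Real.log s := Real.log_pos hs1
  have hD : ∫ t in (1:ℝ)..s, g' t = g s - g 1 :=
    intervalIntegral.integral_eq_sub_of_hasDerivAt (fun t _ => hg t) (hc.intervalIntegrable _ _)
  have hinv : ∫ t in (1:ℝ)..s, t⁻¹ = Real.log s := by
    rw [integral_inv_of_pos one_pos (by linarith)]; simp
  set d := g s - g 1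
  set lam := d / Real.log s
  have hi1 : IntervalIntegrable (fun t : ℝ => t⁻¹) volume 1 s := by
    apply intervalIntegral.intervalIntegrable_inv _ continuousOn_id
    intro x hx
    rw [uIcc_of_le hs] at hx
    simp only [id]; linarith [hx.1]
  have hi2 : IntervalIntegrable (fun t => t * g' t ^ 2) volume 1 s :=
    Continuous.intervalIntegrable (by fun_prop) _ _
  have key : ∫ t in (1:ℝ)..s, 2 * lam * g' t ≤ ∫ t in (1:ℝ)..s, (lam ^ 2 * t⁻¹ + t * g' t ^ 2) := by
    apply intervalIntegral.integral_mono_on hs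
    · exact Continuous.intervalIntegrable (by fun_prop) _ _
    · exact (hi1.const_mul _).add hi2
    · intro t ht
      have ht0 : 0 < t := by linarith [ht.1]
      have : lam ^ 2 * t⁻¹ + t * g' t ^ 2 - 2 * lam * g' t = t⁻¹ * (lam - t * g' t) ^ 2 := by
        field_simp; ring
      have h2 : 0 ≤ t⁻¹ * (lam - t * g' t) ^ 2 := by positivity
      linarith
  rw [intervalIntegral.integral_add (hi1.const_mul _) hi2, intervalIntegral.integral_const_mul,
    intervalIntegral.integral_const_mul, hinv, hD] at key
  have e1 : lam * Real.log s = d := by simp only [lam]; field_simp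
  have : lam * d ≤ ∫ t in (1:ℝ)..s, t * g' t ^ 2 := by
    have : lam ^ 2 * Real.log s = lam * d := by rw [← e1]; ring
    linarith
  calc d ^ 2 = Real.log s * (lam * d) := by rw [← e1]; ring
    _ ≤ _ := by gcongr

lemma pointwise (v : E2 → ℝ) (hv : ContDiff ℝ 1 v) (s : ℝ) (hs : 1 ≤ s) (x : E2) :
    ‖v (s • x)‖ₑ ^ 2 ≤ 2 * ‖v x‖ₑ ^ 2 + 2 * ENNReal.ofReal (Real.log s) *
      ∫⁻ t in Ioc 1 s, ENNReal.ofReal (t * (‖fderiv ℝ v (t • x)‖ ^ 2 * ‖x‖ ^ 2)) := by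
  have hcd : Continuous (fderiv ℝ v) := hv.continuous_fderiv (by norm_num)
  have h1 := one_dim (fun t => v (t • x)) (fun t => fderiv ℝ v (t • x) x) (by
    intro t
    have h1 : HasFDerivAt v (fderiv ℝ v (t • x)) (t • x) :=
      (hv.differentiable (by norm_num) _).hasFDerivAt
    have h2 : HasDerivAt (fun t : ℝ => t • x) x t := by
      simpa using (hasDerivAt_id t).smul_const x
    exact h1.comp_hasDerivAt t h2) (by fun_prop) s hs
  have hL : 0 ≤ Real.log s := Real.log_nonneg hs
  have h2 : ∫ t in (1:ℝ)..s, t * (fderiv ℝ v (t • x) x) ^ 2 ≤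
      ∫ t in (1:ℝ)..s, t * (‖fderiv ℝ v (t • x)‖ ^ 2 * ‖x‖ ^ 2) := by
    apply intervalIntegral.integral_mono_on hs
    · exact Continuous.intervalIntegrable (by fun_prop) _ _
    · exact Continuous.intervalIntegrable (by fun_prop) _ _
    · intro t ht
      have ht0 : 0 ≤ t := by linarith [ht.1]
      gcongr
      rw [← mul_pow, ← sq_abs]
      gcongr
      exact (fderiv ℝ v (t • x)).le_opNorm x
  have h3 : ENNReal.ofReal (∫ t in (1:ℝ)..s, t * (‖fderiv ℝ v (t • x)‖ ^ 2 * ‖x‖ ^ 2)) =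
      ∫⁻ t in Ioc 1 s, ENNReal.ofReal (t * (‖fderiv ℝ v (t • x)‖ ^ 2 * ‖x‖ ^ 2)) := by
    rw [intervalIntegral.integral_of_le hs]
    apply ofReal_integral_eq_lintegral_ofReal
    · exact (Continuous.intervalIntegrable (by fun_prop) 1 s).1
    · filter_upwards [ae_restrict_mem measurableSet_Ioc] with t ht
      have ht0 : 0 ≤ t := by linarith [ht.1]
      simp only [Pi.zero_apply]
      positivity
  rw [← h3]
  set Q := ∫ t in (1:ℝ)..s, t * (‖fderiv ℝ v (t • x)‖ ^ 2 * ‖x‖ ^ 2)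
  have hsq : ∀ a : ℝ, ‖a‖ₑ ^ 2 = ENNReal.ofReal (a ^ 2) := by
    intro a
    rw [← ofReal_norm, ← ENNReal.ofReal_pow (norm_nonneg _), Real.norm_eq_abs, sq_abs]
  have h4 : v (s • x) ^ 2 ≤ 2 * v x ^ 2 + 2 * Real.log s * Q := by
    simp only [one_smul] at h1
    have : (v (s • x) - v x) ^ 2 ≤ Real.log s * Q := h1.trans (by gcongr)
    nlinarith [sq_nonneg (v (s • x) - 2 * v x)]
  have hQ : 0 ≤ Q := by
    apply intervalIntegral.integral_nonneg hs
    intro t ht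
    have ht0 : 0 ≤ t := by linarith [ht.1]
    positivity
  rw [hsq, hsq]
  refine (ENNReal.ofReal_le_ofReal h4).trans ?_
  rw [ENNReal.ofReal_add (by positivity) (by positivity), ENNReal.ofReal_mul (by norm_num),
    ENNReal.ofReal_mul (by positivity), ENNReal.ofReal_mul (by norm_num)]
  simp

lemma inner_t (c : ℝ) (hc : 0 < c) :
    ∫⁻ t in Ioi c, ENNReal.ofReal (c ^ 2 * t ^ (-3 : ℝ)) ≤ 1 := by
  have h1 : IntegrableOn (fun t : ℝ => t ^ (-3:ℝ)) (Ioi c) :=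
    integrableOn_Ioi_rpow_of_lt (by norm_num) hc
  rw [← ofReal_integral_eq_lintegral_ofReal (h1.const_mul _)]
  · rw [integral_const_mul, integral_Ioi_rpow_of_lt (by norm_num) hc]
    rw [ENNReal.ofReal_le_one]
    have : c ^ ((-3:ℝ) + 1) = (c ^ 2)⁻¹ := by
      rw [show (-3:ℝ) + 1 = -(2:ℕ) by norm_num, Real.rpow_neg hc.le, Real.rpow_natCast]
    rw [this]
    field_simp
    norm_num
  · filter_upwards [ae_restrict_mem measurableSet_Ioi] with t ht
    have : 0 < t := hc.trans ht
    simp only [Pi.zero_apply]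
    positivity

lemma growth (v : E2 → ℝ) (hv : ContDiff ℝ 1 v) (s : ℝ) (hs : 1 ≤ s) :
    ∫⁻ x in ball (0 : E2) 1, ‖v (s • x)‖ₑ ^ 2 ≤
      2 * (∫⁻ x in ball (0 : E2) 1, ‖v x‖ₑ ^ 2) +
      2 * ENNReal.ofReal (Real.log s) * ∫⁻ x, ‖fderiv ℝ v x‖ₑ ^ 2 := by
  have hcv : Continuous v := hv.continuous
  have hcd : Continuous (fderiv ℝ v) := hv.continuous_fderiv (by norm_num)
  have hmeas : Measurable (fun z : E2 × ℝ =>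
      ENNReal.ofReal (z.2 * (‖fderiv ℝ v (z.2 • z.1)‖ ^ 2 * ‖z.1‖ ^ 2))) := by
    apply Measurable.ennreal_ofReal
    apply Continuous.measurable
    fun_prop
  let G : ℝ → E2 → ℝ≥0∞ := fun t y => (ball (0:E2) t).indicator (fun y =>
    ENNReal.ofReal (‖y‖ ^ 2 * t ^ (-3:ℝ)) * ‖fderiv ℝ v y‖ₑ ^ 2) y
  have hGm : Measurable (Function.uncurry G) := by
    have : Function.uncurry G = {z : ℝ × E2 | ‖z.2‖ < z.1}.indicator (fun z =>
        ENNReal.ofReal (‖z.2‖ ^ 2 * z.1 ^ (-3:ℝ)) * ‖fderiv ℝ v z.2‖ₑ ^ 2) := by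
      ext ⟨t, y⟩
      simp [G, Function.uncurry, indicator]
    rw [this]
    apply Measurable.indicator
    · have : Measurable fun z : ℝ × E2 => ‖fderiv ℝ v z.2‖ₑ ^ 2 :=
        Continuous.measurable (by fun_prop)
      fun_prop
    · exact measurableSet_lt (by fun_prop) (by fun_prop)
  have key : ∫⁻ x in ball (0 : E2) 1, ∫⁻ t in Ioc 1 s,
      ENNReal.ofReal (t * (‖fderiv ℝ v (t • x)‖ ^ 2 * ‖x‖ ^ 2)) ≤
      ∫⁻ x, ‖fderiv ℝ v x‖ₑ ^ 2 := by
    rw [lintegral_lintegral_swap hmeas.aemeasurable]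
    calc _ = ∫⁻ t in Ioc 1 s, ∫⁻ y, G t y := by
          apply setLIntegral_congr_fun measurableSet_Ioc
          intro t ht
          have ht0 : 0 < t := by linarith [ht.1]
          have := lint_ball_smul (fun y => ENNReal.ofReal (t⁻¹ * (‖fderiv ℝ v y‖ ^ 2 * ‖y‖ ^ 2))) t 1 ht0
          simp only [G]
          rw [lintegral_indicator measurableSet_ball]
          calc _ = ∫⁻ x in ball (0:E2) 1, ENNReal.ofReal (t⁻¹ * (‖fderiv ℝ v (t • x)‖ ^ 2 * ‖t • x‖ ^ 2)) := by
                apply lintegral_congr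
                intro x
                congr 1
                rw [norm_smul, Real.norm_of_nonneg ht0.le]
                field_simp
            _ = _ := by
                rw [this, mul_one, ← lintegral_const_mul' _ _ ENNReal.ofReal_ne_top]
                apply lintegral_congr
                intro y
                rw [← ENNReal.ofReal_mul (by positivity), ← ofReal_norm,
                  ← ENNReal.ofReal_pow (norm_nonneg _), ← ENNReal.ofReal_mul (by positivity)]
                congr 1
                rw [show (-3:ℝ) = -(3:ℕ) by norm_num, Real.rpow_neg ht0.le, Real.rpow_natCast]
                field_simp
      _ = ∫⁻ y, ∫⁻ t in Ioc 1 s, G t y := lintegral_lintegral_swap hGm.aemeasurable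
      _ ≤ _ := by
          apply lintegral_mono
          intro y
          simp only
          have hGy : ∀ t, G t y = (Ioi ‖y‖).indicator (fun t =>
              ENNReal.ofReal (‖y‖ ^ 2 * t ^ (-3:ℝ))) t * ‖fderiv ℝ v y‖ₑ ^ 2 := by
            intro t
            simp [G, indicator]
          simp_rw [hGy]
          rw [lintegral_mul_const' _ _ (by simp)]
          refine mul_le_of_le_one_left (zero_le) ?_
          refine (setLIntegral_le_lintegral _ _).trans ?_
          rw [lintegral_indicator measurableSet_Ioi]
          rcases (norm_nonneg y).eq_or_lt with h | h
          · simp [← h]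
          · exact inner_t _ h
  calc _ ≤ ∫⁻ x in ball (0 : E2) 1, (2 * ‖v x‖ₑ ^ 2 + 2 * ENNReal.ofReal (Real.log s) *
      ∫⁻ t in Ioc 1 s, ENNReal.ofReal (t * (‖fderiv ℝ v (t • x)‖ ^ 2 * ‖x‖ ^ 2))) :=
        lintegral_mono fun x => pointwise v hv s hs x
    _ ≤ _ := by
      rw [lintegral_add_left (by fun_prop), lintegral_const_mul' _ _ (by simp),
        lintegral_const_mul' _ _ (by finiteness)]
      gcongr

lemma ball_bound (m : ℝ) (hm : 2 ≤ m) : ∃ K : ℝ≥0, ∀ v : E2 → ℝ, ContDiff ℝ 1 v → ∀ k : ℕ,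
    ∫⁻ x in ball (0 : E2) (2 ^ k), ‖v x‖ₑ ^ m ≤
      K * (ENNReal.ofReal (4 ^ k * ((k:ℝ) + 1) ^ (m/2))) * ((∫⁻ x in ball (0 : E2) 1, ‖v x‖ₑ ^ 2) +
        ∫⁻ x, ‖fderiv ℝ v x‖ₑ ^ 2) ^ (m / 2) := by
  obtain ⟨K, hK⟩ := local_sobolev m hm
  refine ⟨(4 * ENNReal.ofReal (4 ^ (m/2)) * K).toNNReal, fun v hv k => ?_⟩
  rw [ENNReal.coe_toNNReal (by finiteness)]
  set N := ∫⁻ x in ball (0 : E2) 1, ‖v x‖ₑ ^ 2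
  set D := ∫⁻ x, ‖fderiv ℝ v x‖ₑ ^ 2
  let s : ℝ := 2 ^ (k+1)
  have hs1 : 1 ≤ s := one_le_pow₀ (by norm_num)
  have hs : 0 < s := by positivity
  have hu := hK (fun x => v (s • x)) (hv.comp (contDiff_const_smul s))
  have hg := growth v hv s hs1
  rw [lint_ball_smul (fun x => ‖v x‖ₑ ^ m) s _ hs] at hu
  have hD : ∫⁻ x in ball (0 : E2) 1, ‖fderiv ℝ (fun x => v (s • x)) x‖ₑ ^ 2 ≤ D := by
    refine (setLIntegral_le_lintegral _ _).trans ?_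
    have : ∀ x, ‖fderiv ℝ (fun x => v (s • x)) x‖ₑ ^ 2 =
        ENNReal.ofReal (s ^ 2) * ‖fderiv ℝ v (s • x)‖ₑ ^ 2 := by
      intro x
      rw [fderiv_comp_smul, enorm_smul, mul_pow, Real.enorm_of_nonneg hs.le,
        ENNReal.ofReal_pow hs.le]
    simp_rw [this]
    rw [lintegral_const_mul' _ _ (by simp), lint_smul (fun x => ‖fderiv ℝ v x‖ₑ ^ 2) s hs, ← mul_assoc,
      ← ENNReal.ofReal_mul (by positivity), mul_inv_cancel₀ (by positivity)]
    simp [D]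
  have hlog : Real.log s ≤ k + 1 := by
    simp only [s]
    rw [Real.log_pow]
    push_cast
    have := Real.log_two_lt_d9
    nlinarith
  have hsum : (∫⁻ x in ball (0 : E2) 1, ‖v (s • x)‖ₑ ^ 2) +
      ∫⁻ x in ball (0 : E2) 1, ‖fderiv ℝ (fun x => v (s • x)) x‖ₑ ^ 2 ≤
      ENNReal.ofReal (4 * (k + 1)) * (N + D) := by
    calc _ ≤ (2 * N + 2 * ENNReal.ofReal (k+1) * D) + D := by
          gcongr
          refine hg.trans ?_
          gcongr
      _ ≤ ENNReal.ofReal (4 * (k + 1)) * N + ENNReal.ofReal (4 * (k + 1)) * D := by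
          rw [add_assoc]
          gcongr
          · rw [← ENNReal.ofReal_ofNat]
            apply ENNReal.ofReal_le_ofReal
            have : (0:ℝ) ≤ k := by positivity
            linarith
          · rw [← ENNReal.ofReal_ofNat 2, ← ENNReal.ofReal_mul (by norm_num)]
            nth_rw 2 [← one_mul D]
            rw [← add_mul, ← ENNReal.ofReal_one, ← ENNReal.ofReal_add (by positivity) (by positivity)]
            gcongr
            have : (0:ℝ) ≤ k := by positivity
            linarith
      _ = _ := by ring
  have hsr : s * (1/2) = 2 ^ k := by simp only [s]; ring
  rw [hsr] at hu
  set I := ∫⁻ x in ball (0 : E2) (2 ^ k), ‖v x‖ₑ ^ m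
  have : I = ENNReal.ofReal (s^2) * (ENNReal.ofReal ((s^2)⁻¹) * I) := by
    rw [← mul_assoc, ← ENNReal.ofReal_mul (by positivity), mul_inv_cancel₀ (by positivity)]
    simp
  rw [this]
  calc _ ≤ ENNReal.ofReal (s^2) * (K * (ENNReal.ofReal (4 * (k + 1)) * (N + D)) ^ (m/2)) := by
        refine mul_le_mul_right ?_ _
        refine hu.trans ?_
        gcongr
    _ = _ := by
        have e1 : s ^ 2 = 4 * 4 ^ k := by
          simp only [s]; rw [← pow_mul, mul_comm, pow_mul]; norm_num; ring
        rw [e1, ENNReal.mul_rpow_of_nonneg _ _ (by positivity), ENNReal.ofReal_rpow_of_nonneg (by positivity) (by positivity),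
          Real.mul_rpow (by norm_num) (by positivity), ENNReal.ofReal_mul (by positivity),
          ENNReal.ofReal_mul (by positivity), ENNReal.ofReal_mul (by positivity)]
        simp
        ring

lemma weight_bound (ζ : ℝ) (hζ : 0 < ζ) (x : E2) :
    ∃ k : ℕ, x ∈ ball (0:E2) (2 ^ k) ∧ (Real.exp 1 + ‖x‖ ^ 2)⁻¹ *
      (Real.log (Real.exp 1 + ‖x‖ ^ 2)) ^ (-ζ) ≤ 4 * 4 ^ ζ * ((4 ^ k)⁻¹ * ((k:ℝ) + 1) ^ (-ζ)) := by
  have hex : ∃ k : ℕ, ‖x‖ < 2 ^ k := pow_unbounded_of_one_lt _ (by norm_num)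
  classical
  let k := Nat.find hex
  have hk : ‖x‖ < 2 ^ k := Nat.find_spec hex
  refine ⟨k, by simpa using hk, ?_⟩
  have he : (1:ℝ) ≤ Real.exp 1 := Real.one_le_exp (by norm_num)
  have hA : Real.exp 1 ≤ Real.exp 1 + ‖x‖ ^ 2 := by nlinarith [sq_nonneg ‖x‖]
  have hA0 : 0 < Real.exp 1 + ‖x‖ ^ 2 := by positivity
  have hlog1 : 1 ≤ Real.log (Real.exp 1 + ‖x‖ ^ 2) := by
    rw [Real.le_log_iff_exp_le hA0]; exact hA
  have hx : k ≠ 0 → (4:ℝ) ^ k ≤ 4 * ‖x‖ ^ 2 := by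
    intro h0
    have h1 : ¬ ‖x‖ < 2 ^ (k - 1) := Nat.find_min hex (by change k - 1 < k; omega)
    push Not at h1
    obtain ⟨j, hj⟩ := Nat.exists_eq_succ_of_ne_zero h0
    rw [hj] at h1 ⊢
    simp only [Nat.succ_eq_add_one, Nat.add_sub_cancel] at h1
    have : ((2:ℝ) ^ j) ^ 2 ≤ ‖x‖ ^ 2 := by gcongr
    rw [← pow_mul, mul_comm, pow_mul] at this
    rw [pow_succ]
    norm_num at this
    linarith
  have h1 : (4:ℝ) ^ k ≤ 4 * (Real.exp 1 + ‖x‖ ^ 2) := by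
    by_cases h0 : k = 0
    · rw [h0]; nlinarith [sq_nonneg ‖x‖]
    · have := hx h0; linarith
  have h2 : ((k:ℝ) + 1) / 4 ≤ Real.log (Real.exp 1 + ‖x‖ ^ 2) := by
    by_cases h0 : k ≤ 1
    · have : (k:ℝ) ≤ 1 := by exact_mod_cast h0
      linarith
    · have hk2 : (2:ℝ) ≤ k := by exact_mod_cast (by omega : 2 ≤ k)
      have h3 := hx (by omega)
      have h4 : (4:ℝ) ^ k / 4 ≤ Real.exp 1 + ‖x‖ ^ 2 := by linarith
      have h5 := Real.log_le_log (by positivity) h4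
      rw [Real.log_div (by positivity) (by norm_num), Real.log_pow,
        show (4:ℝ) = 2 ^ 2 by norm_num, Real.log_pow] at h5
      have := Real.log_two_gt_d9
      push_cast at h5
      nlinarith
  calc _ ≤ (4 ^ k / 4)⁻¹ * (((k:ℝ) + 1) / 4) ^ (-ζ) := by
        gcongr ?_ * ?_
        · gcongr; linarith
        · exact Real.rpow_le_rpow_of_nonpos (by positivity) h2 (by linarith)
    _ = _ := by
        rw [Real.div_rpow (by positivity) (by norm_num), Real.rpow_neg (by norm_num : (0:ℝ) ≤ 4)]
        field_simp

lemma main_lint (m : ℝ) (hm : 2 ≤ m) (ζ : ℝ) (hζ : 1 + m / 2 < ζ) :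
    ∃ S : ℝ≥0, ∀ v : E2 → ℝ, ContDiff ℝ 1 v →
      ∫⁻ x : E2, ENNReal.ofReal (|v x| ^ m * (Real.exp 1 + ‖x‖ ^ 2)⁻¹ *
          (Real.log (Real.exp 1 + ‖x‖ ^ 2)) ^ (-ζ)) ≤
      S * ((∫⁻ x in ball (0 : E2) 1, ‖v x‖ₑ ^ 2) + ∫⁻ x, ‖fderiv ℝ v x‖ₑ ^ 2) ^ (m / 2) := by
  obtain ⟨K, hK⟩ := ball_bound m hm
  have hsum : Summable (fun k : ℕ => ((k:ℝ) + 1) ^ (m / 2 - ζ)) := by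
    have := (Real.summable_nat_rpow (p := m / 2 - ζ)).2 (by linarith)
    simpa using (summable_nat_add_iff 1).2 this
  have hfin : ∑' k : ℕ, ENNReal.ofReal (((k:ℝ) + 1) ^ (m / 2 - ζ)) ≠ ∞ := hsum.tsum_ofReal_ne_top
  set T := ∑' k : ℕ, ENNReal.ofReal (((k:ℝ) + 1) ^ (m / 2 - ζ))
  let c : ℝ := 4 * 4 ^ ζ
  have hc : 0 < c := by positivity
  refine ⟨(ENNReal.ofReal c * K * T).toNNReal, fun v hv => ?_⟩
  rw [ENNReal.coe_toNNReal (by finiteness)]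
  set N := ∫⁻ x in ball (0 : E2) 1, ‖v x‖ₑ ^ 2
  set D := ∫⁻ x, ‖fderiv ℝ v x‖ₑ ^ 2
  let a : ℕ → ℝ := fun k => c * ((4 ^ k)⁻¹ * ((k:ℝ) + 1) ^ (-ζ))
  have hcv : Continuous v := hv.continuous
  calc _ ≤ ∫⁻ x : E2, ∑' k : ℕ, (ball (0:E2) (2 ^ k)).indicator
          (fun x => ENNReal.ofReal (a k) * ‖v x‖ₑ ^ m) x := by
        apply lintegral_mono
        intro x
        obtain ⟨k, hk, hw⟩ := weight_bound ζ (by linarith) x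
        refine le_trans ?_ (ENNReal.le_tsum k)
        rw [indicator_of_mem hk, ← ofReal_norm, Real.norm_eq_abs,
          ENNReal.ofReal_rpow_of_nonneg (abs_nonneg _) (by linarith),
          ← ENNReal.ofReal_mul (by positivity)]
        apply ENNReal.ofReal_le_ofReal
        rw [mul_assoc, mul_comm (a k)]
        gcongr
    _ = ∑' k : ℕ, ENNReal.ofReal (a k) * ∫⁻ x in ball (0:E2) (2 ^ k), ‖v x‖ₑ ^ m := by
        rw [lintegral_tsum]
        · congr 1
          ext k
          rw [lintegral_indicator measurableSet_ball, lintegral_const_mul' _ _ (by simp)]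
        · intro k
          apply AEMeasurable.indicator _ measurableSet_ball
          fun_prop
    _ ≤ ∑' k : ℕ, ENNReal.ofReal c * K * (N + D) ^ (m/2) *
          ENNReal.ofReal (((k:ℝ) + 1) ^ (m / 2 - ζ)) := by
        apply ENNReal.tsum_le_tsum
        intro k
        refine (mul_le_mul_right (hK v hv k) _).trans (le_of_eq ?_)
        have : a k * (4 ^ k * ((k:ℝ) + 1) ^ (m/2)) = c * ((k:ℝ) + 1) ^ (m / 2 - ζ) := by
          simp only [a]
          rw [show m / 2 - ζ = -ζ + m / 2 by ring, Real.rpow_add (by positivity)]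
          field_simp
        calc _ = (ENNReal.ofReal (a k) * ENNReal.ofReal (4 ^ k * ((k:ℝ) + 1) ^ (m/2))) *
              (K * (N + D) ^ (m/2)) := by ring
          _ = _ := by
            rw [← ENNReal.ofReal_mul (by positivity), this, ENNReal.ofReal_mul hc.le]
            ring
    _ = _ := by
        rw [ENNReal.tsum_mul_left]
        ring

/-- Weighted Poincaré-type inequality on the plane (Lemma 2.3 of the paper, case Ω = ℝ²). -/
theorem weighted_poincare_plane (m : ℝ) (hm : 2 ≤ m) (ζ : ℝ) (hζ : 1 + m / 2 < ζ) :
    ∃ C : ℝ, 0 < C ∧ ∀ v : E2 → ℝ, ContDiff ℝ 1 v →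
      Integrable (fun x => ‖fderiv ℝ v x‖ ^ 2) →
      (∫ x : E2, |v x| ^ m * (Real.exp 1 + ‖x‖ ^ 2)⁻¹ *
          (Real.log (Real.exp 1 + ‖x‖ ^ 2)) ^ (-ζ)) ^ (1 / m) ≤
        C * (∫ x in ball (0 : E2) 1, (v x) ^ 2) ^ (1 / 2 : ℝ) +
        C * (∫ x : E2, ‖fderiv ℝ v x‖ ^ 2) ^ (1 / 2 : ℝ) := by
  obtain ⟨S, hS⟩ := main_lint m hm ζ hζ
  refine ⟨(S:ℝ) ^ (1/m) + 1, by positivity, fun v hv hint => ?_⟩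
  have hcv : Continuous v := hv.continuous
  have h := hS v hv
  have hN : ∫⁻ x in ball (0 : E2) 1, ‖v x‖ₑ ^ 2 =
      ENNReal.ofReal (∫ x in ball (0 : E2) 1, (v x) ^ 2) := by
    rw [ofReal_integral_eq_lintegral_ofReal]
    · apply lintegral_congr
      intro x
      rw [← ofReal_norm, ← ENNReal.ofReal_pow (norm_nonneg _), Real.norm_eq_abs, sq_abs]
    · have : IntegrableOn (fun x => v x ^ 2) (closedBall (0:E2) 1) :=
        (Continuous.continuousOn (by fun_prop)).integrableOn_compact (isCompact_closedBall _ _)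
      exact this.mono_set ball_subset_closedBall
    · exact Filter.Eventually.of_forall fun x => sq_nonneg _
  have hD : ∫⁻ x, ‖fderiv ℝ v x‖ₑ ^ 2 = ENNReal.ofReal (∫ x : E2, ‖fderiv ℝ v x‖ ^ 2) := by
    rw [ofReal_integral_eq_lintegral_ofReal hint]
    · apply lintegral_congr
      intro x
      rw [← ofReal_norm, ← ENNReal.ofReal_pow (norm_nonneg _)]
    · exact Filter.Eventually.of_forall fun x => sq_nonneg _
  have hn : 0 ≤ ∫ x in ball (0 : E2) 1, (v x) ^ 2 := integral_nonneg fun x => sq_nonneg _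
  have hd : 0 ≤ ∫ x : E2, ‖fderiv ℝ v x‖ ^ 2 := integral_nonneg fun x => sq_nonneg _
  rw [hN, hD] at h
  set n := ∫ x in ball (0 : E2) 1, (v x) ^ 2
  set d := ∫ x : E2, ‖fderiv ℝ v x‖ ^ 2
  have hpos : ∀ x : E2, 0 ≤ |v x| ^ m * (Real.exp 1 + ‖x‖ ^ 2)⁻¹ *
          (Real.log (Real.exp 1 + ‖x‖ ^ 2)) ^ (-ζ) := by
    intro x
    have : 0 ≤ Real.log (Real.exp 1 + ‖x‖ ^ 2) := by
      apply Real.log_nonneg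
      nlinarith [sq_nonneg ‖x‖, Real.one_le_exp (zero_le_one' ℝ)]
    positivity
  have h1 : ∫ x : E2, |v x| ^ m * (Real.exp 1 + ‖x‖ ^ 2)⁻¹ *
          (Real.log (Real.exp 1 + ‖x‖ ^ 2)) ^ (-ζ) ≤ S * (n + d) ^ (m/2) := by
    rw [integral_eq_lintegral_of_nonneg_ae (Filter.Eventually.of_forall hpos)]
    · apply ENNReal.toReal_le_of_le_ofReal (by positivity)
      refine h.trans (le_of_eq ?_)
      rw [← ENNReal.ofReal_add hn hd, ENNReal.ofReal_rpow_of_nonneg (by positivity) (by positivity),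
        ENNReal.ofReal_mul (by positivity), ENNReal.ofReal_coe_nnreal]
    · apply Measurable.aestronglyMeasurable
      have := hcv.measurable
      fun_prop
  have h2 := Real.rpow_le_rpow (integral_nonneg hpos) h1 (by positivity : 0 ≤ 1 / m)
  refine h2.trans ?_
  rw [Real.mul_rpow (by positivity) (by positivity), ← Real.rpow_mul (by positivity),
    show m / 2 * (1 / m) = 1 / 2 by field_simp]
  have h3 : (n + d) ^ (1/2:ℝ) ≤ n ^ (1/2:ℝ) + d ^ (1/2:ℝ) :=
    Real.rpow_add_le_add_rpow hn hd (by norm_num) (by norm_num)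
  have h4 : 0 ≤ (S:ℝ) ^ (1/m) := by positivity
  have h5 : 0 ≤ n ^ (1/2:ℝ) := by positivity
  have h6 : 0 ≤ d ^ (1/2:ℝ) := by positivity
  nlinarith
end
end

section
/- For every m ∈ [2,∞) and every ζ ∈ (1 + m/2, ∞) there exists a constant C = C(m,ζ) > 0, independent of r, such that for every r ≥ 1 and every continuously differentiable function v : B_r → ℝ whose gradient ∇v belongs to L²(B_r), one has (∫_{B_r} |v(x)|^m (e+|x|²)^{-1} (log(e+|x|²))^{-ζ} dx)^{1/m} ≤ C‖v‖_{L²(B₁)} + C‖∇v‖_{L²(B_r)}. -/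
open MeasureTheory Real Set Metric
open scoped ENNReal

noncomputable section

namespace WP

lemma ftc_enorm {a b : ℝ} {h h' : ℝ → ℝ} (hd : ∀ s ∈ Ioo a b, HasDerivAt h (h' s) s)
    (hm : Measurable h') {s σ : ℝ} (hs : s ∈ Ioo a b) (hσ : σ ∈ Ioo a b) :
    ‖h s‖ₑ ≤ ‖h σ‖ₑ + ∫⁻ t in Ioo a b, ‖h' t‖ₑ := by
  by_cases hfin : ∫⁻ t in Ioo a b, ‖h' t‖ₑ = ⊤
  · simp [hfin]
  have hIntg : IntegrableOn h' (Ioo a b) :=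
    ⟨hm.aestronglyMeasurable, lt_top_iff_ne_top.2 hfin⟩
  have hsub : uIcc σ s ⊆ Ioo a b := ordConnected_Ioo.uIcc_subset hσ hs
  have hsub' : uIoc σ s ⊆ Ioo a b := uIoc_subset_uIcc.trans hsub
  have hii : IntervalIntegrable h' volume σ s :=
    intervalIntegrable_iff.2 (hIntg.mono_set hsub')
  have key := intervalIntegral.integral_eq_sub_of_hasDerivAt (fun t ht => hd t (hsub ht)) hii
  have e : h s = h σ + ∫ t in σ..s, h' t := by rw [key]; ring
  rw [e]
  refine (enorm_add_le _ _).trans ?_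
  gcongr
  have : ‖∫ t in σ..s, h' t‖ₑ = ‖∫ t in uIoc σ s, h' t‖ₑ := by
    rw [← ofReal_norm, ← ofReal_norm, intervalIntegral.norm_intervalIntegral_eq]
  rw [this]
  exact (enorm_integral_le_lintegral_enorm _).trans (lintegral_mono_set hsub')

lemma ftc_avg {a b c : ℝ} {h h' : ℝ → ℝ} (hd : ∀ s ∈ Ioo a b, HasDerivAt h (h' s) s)
    (hm : Measurable h') {s : ℝ} (hs : s ∈ Ioo a b) (hJ : Ioo c (c + 1) ⊆ Ioo a b) :
    ‖h s‖ₑ ≤ (∫⁻ t in Ioo c (c + 1), ‖h t‖ₑ) + ∫⁻ t in Ioo a b, ‖h' t‖ₑ := by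
  have h1 : ∫⁻ t in Ioo c (c + 1), ‖h s‖ₑ ≤
      ∫⁻ t in Ioo c (c + 1), (‖h t‖ₑ + ∫⁻ t in Ioo a b, ‖h' t‖ₑ) :=
    setLIntegral_mono' measurableSet_Ioo fun t ht => ftc_enorm hd hm hs (hJ ht)
  rw [lintegral_add_right _ measurable_const] at h1
  simpa using h1

/-- power weight -/
def W (α s : ℝ) : ℝ≥0∞ := ENNReal.ofReal (s ^ (-α))

lemma measurable_W (α : ℝ) : Measurable (W α) := by unfold W; fun_prop

lemma W_add {α β s : ℝ} (hs : 1 < s) : W (α + β) s = W α s * W β s := by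
  unfold W
  rw [← ENNReal.ofReal_mul (by positivity), ← rpow_add (by linarith)]
  congr 2; ring

lemma W_anti {α β s : ℝ} (hs : 1 < s) (h : α ≤ β) : W β s ≤ W α s := by
  unfold W
  exact ENNReal.ofReal_le_ofReal (rpow_le_rpow_of_exponent_le hs.le (by linarith))

lemma W_rpow {α p s : ℝ} (hs : 1 < s) (hp : 0 ≤ p) : (W α s) ^ p = W (α * p) s := by
  unfold W
  rw [ENNReal.ofReal_rpow_of_nonneg (by positivity) hp, ← rpow_mul (by linarith)]
  congr 2; ring

lemma W_int {ε : ℝ} (hε : 0 < ε) : ∫⁻ s in Ioi (1:ℝ), W (1 + ε) s < ⊤ := by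
  have := integrableOn_Ioi_rpow_of_lt (a := -(1 + ε)) (c := 1) (by linarith) one_pos
  exact this.setLIntegral_lt_top

/-- the rectangle -/
def Rect (b : ℝ) : Set (ℝ × ℝ) := Ioo 1 b ×ˢ Ioo (-π) π

lemma measurableSet_Rect (b : ℝ) : MeasurableSet (Rect b) := measurableSet_Ioo.prod measurableSet_Ioo

structure Strip (b : ℝ) (g g1 g2 : ℝ × ℝ → ℝ) (T : ℝ≥0∞) : Prop where
  hb : 2 ≤ b
  mg : Measurable g
  mg1 : Measurable g1
  mg2 : Measurable g2
  d1 : ∀ z ∈ Rect b, HasDerivAt (fun s => g (s, z.2)) (g1 z) z.1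
  d2 : ∀ z ∈ Rect b, HasDerivAt (fun s => g (z.1, s)) (g2 z) z.2
  T0 : ∫⁻ z in Rect 2, ‖g z‖ₑ ^ (2:ℝ) ≤ T
  T1 : ∫⁻ z in Rect b, ‖g1 z‖ₑ ^ (2:ℝ) ≤ T
  T2 : ∫⁻ z in Rect b, ‖g2 z‖ₑ ^ (2:ℝ) ≤ T

/-- weighted integrals -/
def I (b : ℝ) (g : ℝ × ℝ → ℝ) (q α : ℝ) : ℝ≥0∞ := ∫⁻ z in Rect b, ‖g z‖ₑ ^ q * W α z.1

lemma lint_rect {b : ℝ} {F : ℝ × ℝ → ℝ≥0∞} (hF : Measurable F) :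
    ∫⁻ z in Rect b, F z = ∫⁻ s in Ioo 1 b, ∫⁻ t in Ioo (-π) π, F (s, t) := by
  rw [Rect, Measure.volume_eq_prod, ← Measure.prod_restrict, lintegral_prod _ hF.aemeasurable]

lemma lint_rect_symm {b : ℝ} {F : ℝ × ℝ → ℝ≥0∞} (hF : Measurable F) :
    ∫⁻ z in Rect b, F z = ∫⁻ t in Ioo (-π) π, ∫⁻ s in Ioo 1 b, F (s, t) := by
  rw [Rect, Measure.volume_eq_prod, ← Measure.prod_restrict, lintegral_prod_symm _ hF.aemeasurable]

lemma lint_rect_mul {b : ℝ} {F G : ℝ → ℝ≥0∞} (hF : Measurable F) (hG : Measurable G) :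
    ∫⁻ z in Rect b, F z.1 * G z.2 = (∫⁻ s in Ioo 1 b, F s) * ∫⁻ t in Ioo (-π) π, G t := by
  rw [Rect, Measure.volume_eq_prod, ← Measure.prod_restrict,
    lintegral_prod_mul hF.aemeasurable hG.aemeasurable]

lemma add_sq_le' (a b : ℝ≥0∞) : (a + b) ^ (2:ℝ) ≤ 2 * a ^ (2:ℝ) + 2 * b ^ (2:ℝ) := by
  have := ENNReal.rpow_add_le_mul_rpow_add_rpow a b (p := 2) (by norm_num)
  rw [← mul_add]
  convert this using 2
  norm_num

lemma cs {α : Type*} [MeasurableSpace α] {μ : Measure α} {f g : α → ℝ≥0∞}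
    (hf : Measurable f) (hg : Measurable g) :
    ∫⁻ a, f a * g a ∂μ ≤ (∫⁻ a, f a ^ (2:ℝ) ∂μ) ^ (1/2:ℝ) * (∫⁻ a, g a ^ (2:ℝ) ∂μ) ^ (1/2:ℝ) := by
  have := ENNReal.lintegral_mul_norm_pow_le (μ := μ) (f := fun a => f a ^ (2:ℝ))
    (g := fun a => g a ^ (2:ℝ)) (by fun_prop) (by fun_prop) (p := 1/2) (q := 1/2)
    (by norm_num) (by norm_num) (by norm_num)
  have e : ∀ x : ℝ≥0∞, (x ^ (2:ℝ)) ^ (1/2:ℝ) = x := by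
    intro x; rw [← ENNReal.rpow_mul]; norm_num
  simpa only [e] using this

lemma holder_down {ε : ℝ} (hε : 0 < ε) {k m : ℝ} (hk : 0 < k) (hkm : k ≤ m) :
    ∃ C : ℝ≥0∞, C ≠ ⊤ ∧ ∀ b g, Measurable g →
      I b g k (k / 2 + 1 + ε) ≤ C * (I b g m (m / 2 + 1 + ε)) ^ (k / m) := by
  have hm : 0 < m := hk.trans_le hkm
  refine ⟨((∫⁻ s in Ioi (1:ℝ), W (1 + ε) s) * ENNReal.ofReal (2 * π)) ^ (1 - k / m), ?_, ?_⟩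
  · refine ENNReal.rpow_ne_top_of_nonneg ?_ ?_
    · rw [sub_nonneg]; exact div_le_one_of_le₀ hkm hm.le
    · exact ENNReal.mul_ne_top (W_int hε).ne ENNReal.ofReal_ne_top
  intro b g hg
  have hkm1 : k / m ≤ 1 := div_le_one_of_le₀ hkm hm.le
  have mW1 := measurable_W (m / 2 + 1 + ε)
  have mW2 := measurable_W (1 + ε)
  have := ENNReal.lintegral_mul_norm_pow_le (μ := volume.restrict (Rect b))
    (f := fun z => ‖g z‖ₑ ^ m * W (m / 2 + 1 + ε) z.1)
    (g := fun z => W (1 + ε) z.1) (by fun_prop) (by fun_prop) (p := k / m) (q := 1 - k / m)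
    (by positivity) (by linarith) (by ring)
  have h2 : ∫⁻ z in Rect b, W (1 + ε) z.1 ≤
      (∫⁻ s in Ioi (1:ℝ), W (1 + ε) s) * ENNReal.ofReal (2 * π) := by
    have e := lint_rect_mul (b := b) mW2 (measurable_const (a := (1:ℝ≥0∞)))
    simp only [mul_one] at e
    rw [e]
    gcongr
    · exact Ioo_subset_Ioi_self
    · rw [setLIntegral_one, Real.volume_Ioo]
      exact ENNReal.ofReal_le_ofReal (by linarith)
  calc I b g k (k / 2 + 1 + ε)
      = ∫⁻ z in Rect b, (‖g z‖ₑ ^ m * W (m / 2 + 1 + ε) z.1) ^ (k / m) *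
          (W (1 + ε) z.1) ^ (1 - k / m) := by
        refine setLIntegral_congr_fun (measurableSet_Rect b) fun z hz => ?_
        have hz1 : 1 < z.1 := hz.1.1
        rw [ENNReal.mul_rpow_of_nonneg _ _ (by positivity), ← ENNReal.rpow_mul, mul_assoc,
          W_rpow hz1 (by positivity), W_rpow hz1 (by linarith), ← W_add hz1]
        congr 2 <;> field_simp
        ring
    _ ≤ _ := this
    _ ≤ _ := by
        rw [mul_comm]
        refine mul_le_mul' (ENNReal.rpow_le_rpow h2 (by linarith)) le_rfl

lemma base {ε : ℝ} (hε : 0 < ε) : ∃ C : ℝ≥0∞, C ≠ ⊤ ∧ ∀ b g g1 g2 T, Strip b g g1 g2 T →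
    I b g 2 (2 + ε) ≤ C * T := by
  refine ⟨(∫⁻ s in Ioi (1:ℝ), W (1 + ε) s) * 6, ENNReal.mul_ne_top (W_int hε).ne (by simp), ?_⟩
  intro b g g1 g2 T S
  have hb := S.hb
  have mg := S.mg
  have mg1 := S.mg1
  set A : ℝ → ℝ≥0∞ := fun t => ∫⁻ s in Ioo 1 2, ‖g (s, t)‖ₑ ^ (2:ℝ) with hA
  set G : ℝ → ℝ≥0∞ := fun t => ∫⁻ s in Ioo 1 b, ‖g1 (s, t)‖ₑ ^ (2:ℝ) with hG
  have mA : Measurable A := by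
    apply Measurable.lintegral_prod_left' (f := fun z : ℝ × ℝ => ‖g z‖ₑ ^ (2:ℝ)); fun_prop
  have mG : Measurable G := by
    apply Measurable.lintegral_prod_left' (f := fun z : ℝ × ℝ => ‖g1 z‖ₑ ^ (2:ℝ)); fun_prop
  have pw : ∀ z ∈ Rect b, ‖g z‖ₑ ^ (2:ℝ) ≤ 2 * A z.2 + 4 * (ENNReal.ofReal z.1 * G z.2) := by
    rintro ⟨s, t⟩ hz
    have hs : 1 < s ∧ s < b := hz.1
    have hsub : Ioo 1 (min b (2 * s)) ⊆ Ioo 1 b := Ioo_subset_Ioo_right (min_le_left _ _)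
    have h1 : ‖g (s, t)‖ₑ ≤ (∫⁻ σ in Ioo 1 (1 + 1), ‖g (σ, t)‖ₑ) +
        ∫⁻ σ in Ioo 1 (min b (2 * s)), ‖g1 (σ, t)‖ₑ :=
      ftc_avg (h := fun s => g (s, t)) (h' := fun s => g1 (s, t))
        (fun σ hσ => S.d1 (σ, t) ⟨hsub hσ, hz.2⟩) (by fun_prop)
        ⟨hs.1, lt_min hs.2 (by linarith)⟩
        (Ioo_subset_Ioo_right (le_min (by linarith) (by linarith)))
    have h2 : ∫⁻ σ in Ioo 1 (1 + 1), ‖g (σ, t)‖ₑ ≤ (A t) ^ (1/2:ℝ) := by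
      have := cs (μ := volume.restrict (Ioo (1:ℝ) (1 + 1))) (f := fun σ => ‖g (σ, t)‖ₑ) (g := fun _ => 1)
        (by fun_prop) (by fun_prop)
      rw [hA]
      simp only [mul_one, ENNReal.one_rpow, setLIntegral_one, Real.volume_Ioo] at this
      norm_num only [ENNReal.ofReal_one, ENNReal.one_rpow, mul_one, add_sub_cancel_left] at this ⊢
      exact this
    have h3 : ∫⁻ σ in Ioo 1 (min b (2 * s)), ‖g1 (σ, t)‖ₑ ≤
        (G t) ^ (1/2:ℝ) * (ENNReal.ofReal (2 * s)) ^ (1/2:ℝ) := by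
      have := cs (μ := volume.restrict (Ioo 1 (min b (2 * s)))) (f := fun σ => ‖g1 (σ, t)‖ₑ)
        (g := fun _ => 1) (by fun_prop) (by fun_prop)
      simp only [mul_one] at this
      refine this.trans ?_
      gcongr
      · exact lintegral_mono_set hsub
      · simp only [ENNReal.one_rpow, lintegral_const, MeasurableSet.univ, Measure.restrict_apply,
          univ_inter, one_mul, Real.volume_Ioo]
        gcongr
        have := min_le_right b (2 * s)
        linarith
    calc ‖g (s, t)‖ₑ ^ (2:ℝ) ≤ ((A t) ^ (1/2:ℝ) +
          (G t) ^ (1/2:ℝ) * (ENNReal.ofReal (2 * s)) ^ (1/2:ℝ)) ^ (2:ℝ) := by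
          gcongr
          exact h1.trans (add_le_add h2 h3)
      _ ≤ _ := add_sq_le' _ _
      _ = _ := by
        rw [ENNReal.mul_rpow_of_nonneg _ _ (by norm_num), ← ENNReal.rpow_mul, ← ENNReal.rpow_mul,
          ← ENNReal.rpow_mul, ENNReal.ofReal_mul (by norm_num)]
        norm_num
        ring
  have mW := measurable_W (1 + ε)
  calc I b g 2 (2 + ε) ≤ ∫⁻ z in Rect b, W (1 + ε) z.1 * (2 * A z.2 + 4 * G z.2) := by
        refine setLIntegral_mono' (measurableSet_Rect b) fun z hz => ?_
        have hz1 : 1 < z.1 := hz.1.1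
        have e1 : W (2 + ε) z.1 = W 1 z.1 * W (1 + ε) z.1 := by
          rw [← W_add hz1]; congr 1; ring
        have e2 : ENNReal.ofReal z.1 * W 1 z.1 = 1 := by
          unfold W
          rw [← ENNReal.ofReal_mul (by linarith), rpow_neg_one, mul_inv_cancel₀ (by linarith)]
          simp
        have e3 : W 1 z.1 ≤ 1 := by
          have := W_anti hz1 (zero_le_one (α := ℝ))
          simpa [W] using this
        calc _ ≤ (2 * A z.2 + 4 * (ENNReal.ofReal z.1 * G z.2)) * (W 1 z.1 * W (1 + ε) z.1) := by
              rw [e1]; gcongr; exact pw z hz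
          _ = W (1 + ε) z.1 * (2 * A z.2 * W 1 z.1 +
              4 * ((ENNReal.ofReal z.1 * W 1 z.1) * G z.2)) := by ring
          _ ≤ W (1 + ε) z.1 * (2 * A z.2 * 1 + 4 * (1 * G z.2)) := by
              rw [e2]; gcongr
          _ = _ := by ring
    _ = _ := lint_rect_mul mW (G := fun t => 2 * A t + 4 * G t) (by fun_prop)
    _ ≤ _ := by
      rw [mul_assoc]
      refine mul_le_mul' (lintegral_mono_set Ioo_subset_Ioi_self) ?_
      rw [lintegral_add_left (by fun_prop), lintegral_const_mul _ mA, lintegral_const_mul _ mG]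
      have a1 : ∫⁻ t in Ioo (-π) π, A t ≤ T := by
        have := S.T0
        rwa [lint_rect_symm (by fun_prop)] at this
      have a2 : ∫⁻ t in Ioo (-π) π, G t ≤ T := by
        have := S.T1
        rwa [lint_rect_symm (by fun_prop)] at this
      calc _ ≤ 2 * T + 4 * T := by gcongr
        _ = 6 * T := by ring

lemma step_raw (n : ℕ) {b : ℝ} {g g1 g2 : ℝ × ℝ → ℝ} {T : ℝ≥0∞}
    (S : Strip b g g1 g2 T) {α : ℝ} (hα : 0 < α) :
    ∫⁻ z in Rect b, (‖g z‖ₑ ^ (n + 1) * W (α + 1) z.1) * (‖g z‖ₑ ^ (n + 1) * W α z.1) ≤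
      ((∫⁻ z in Rect b, ‖g z‖ₑ ^ (n + 1) * W (α + 1) z.1) +
        (n + 1) * ∫⁻ z in Rect b, (‖g z‖ₑ ^ n * W α z.1) * ‖g2 z‖ₑ) *
      ((2 + ENNReal.ofReal α) * (∫⁻ z in Rect b, ‖g z‖ₑ ^ (n + 1) * W (α + 1) z.1) +
        (n + 1) * ∫⁻ z in Rect b, (‖g z‖ₑ ^ n * W α z.1) * ‖g1 z‖ₑ) := by
  have hb := S.hb
  have mg := S.mg
  have mg1 := S.mg1
  have mg2 := S.mg2
  have mW := measurable_W α
  have mW1 := measurable_W (α + 1)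
  set FA : ℝ × ℝ → ℝ≥0∞ := fun z =>
    ‖g z‖ₑ ^ (n + 1) * W (α + 1) z.1 + (n + 1) * ((‖g z‖ₑ ^ n * W α z.1) * ‖g2 z‖ₑ) with hFA
  set FB : ℝ × ℝ → ℝ≥0∞ := fun z => (2 + ENNReal.ofReal α) * (‖g z‖ₑ ^ (n + 1) * W (α + 1) z.1) +
    (n + 1) * ((‖g z‖ₑ ^ n * W α z.1) * ‖g1 z‖ₑ) with hFB
  have mFA : Measurable FA := by fun_prop
  have mFB : Measurable FB := by fun_prop
  have mA : Measurable (fun s => ∫⁻ t in Ioo (-π) π, FA (s, t)) := mFA.lintegral_prod_right'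
  have mB : Measurable (fun t => ∫⁻ s in Ioo 1 b, FB (s, t)) := mFB.lintegral_prod_left'
  have pA : ∀ z ∈ Rect b, ‖g z‖ₑ ^ (n + 1) * W (α + 1) z.1 ≤ ∫⁻ t in Ioo (-π) π, FA (z.1, t) := by
    rintro ⟨s, t⟩ hz
    have hs : 1 < s := hz.1.1
    have h3 := Real.pi_gt_three
    have h1 := ftc_avg (a := -π) (b := π) (c := 0) (s := t)
      (h := fun t => g (s, t) ^ (n + 1)) (h' := fun t => ((n + 1 : ℕ) : ℝ) * g (s, t) ^ n * g2 (s, t))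
      (fun τ hτ => by simpa using (S.d2 (s, τ) ⟨hz.1, hτ⟩).fun_pow (n + 1)) (by fun_prop) hz.2
      (Ioo_subset_Ioo (by linarith) (by linarith))
    have h2 : ∫⁻ τ in Ioo (0:ℝ) (0 + 1), ‖g (s, τ) ^ (n + 1)‖ₑ ≤
        ∫⁻ τ in Ioo (-π) π, ‖g (s, τ) ^ (n + 1)‖ₑ :=
      lintegral_mono_set (Ioo_subset_Ioo (by linarith) (by linarith))
    have h4 := h1.trans (add_le_add h2 le_rfl)
    rw [← lintegral_add_left (by fun_prop), enorm_pow] at h4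
    calc ‖g (s, t)‖ₑ ^ (n + 1) * W (α + 1) s ≤ _ := mul_le_mul' h4 le_rfl
      _ = _ := (lintegral_mul_const _ (by fun_prop)).symm
      _ ≤ _ := by
        refine lintegral_mono fun τ => ?_
        have := W_anti (α := α) (β := α + 1) hs (by linarith)
        simp only [hFA, enorm_mul, enorm_pow, enorm_natCast, add_mul]
        push_cast
        refine add_le_add le_rfl ?_
        calc _ ≤ (n + 1) * ‖g (s, τ)‖ₑ ^ n * ‖g2 (s, τ)‖ₑ * W α s := by gcongr
          _ = _ := by ring
  have pB : ∀ z ∈ Rect b, ‖g z‖ₑ ^ (n + 1) * W α z.1 ≤ ∫⁻ s in Ioo 1 b, FB (s, z.2) := by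
    rintro ⟨s, t⟩ hz
    have eW : ∀ (β : ℝ) (σ : ℝ), 1 < σ → ‖σ ^ (-β)‖ₑ = W β σ := fun β σ h => by
      rw [Real.enorm_eq_ofReal (by positivity)]; rfl
    have h1 := ftc_avg (a := 1) (b := b) (c := 1) (s := s)
      (h := fun s => g (s, t) ^ (n + 1) * s ^ (-α))
      (h' := fun s => (((n + 1 : ℕ) : ℝ) * g (s, t) ^ n * g1 (s, t)) * s ^ (-α) +
        g (s, t) ^ (n + 1) * ((-α) * s ^ (-(α + 1))))
      (fun σ hσ => by
        have e1 := (S.d1 (σ, t) ⟨hσ, hz.2⟩).fun_pow (n + 1)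
        have e2 := Real.hasDerivAt_rpow_const (x := σ) (p := -α) (Or.inl (by linarith [hσ.1]))
        have e3 := e1.fun_mul e2
        have : -(α + 1) = -α - 1 := by ring
        rw [this]
        simpa using e3) (by fun_prop) hz.1
      (Ioo_subset_Ioo (by linarith) (by linarith))
    have hs : 1 < s := hz.1.1
    rw [enorm_mul, enorm_pow, eW α s hs] at h1
    refine h1.trans ?_
    have h2 : ∫⁻ σ in Ioo (1:ℝ) (1 + 1), ‖g (σ, t) ^ (n + 1) * σ ^ (-α)‖ₑ ≤
        ∫⁻ σ in Ioo (1:ℝ) b, 2 * (‖g (σ, t)‖ₑ ^ (n + 1) * W (α + 1) σ) := by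
      refine (setLIntegral_mono' measurableSet_Ioo fun σ hσ => ?_).trans
        (lintegral_mono_set (Ioo_subset_Ioo_right (by linarith)))
      have hσ1 : 1 < σ := hσ.1
      have hσ2 : σ < 2 := by linarith [hσ.2]
      rw [enorm_mul, enorm_pow, eW α σ hσ1, W_add hσ1]
      have : 1 ≤ 2 * W 1 σ := by
        unfold W
        rw [rpow_neg_one, show (2:ℝ≥0∞) = ENNReal.ofReal 2 by simp, ← ENNReal.ofReal_mul (by norm_num),
          ENNReal.one_le_ofReal, ← div_eq_mul_inv, one_le_div (by linarith)]
        exact hσ2.le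
      calc _ = ‖g (σ, t)‖ₑ ^ (n + 1) * W α σ * 1 := by ring
        _ ≤ ‖g (σ, t)‖ₑ ^ (n + 1) * W α σ * (2 * W 1 σ) := by gcongr
        _ = _ := by ring
    refine (add_le_add h2 le_rfl).trans ?_
    rw [← lintegral_add_left (by fun_prop)]
    refine setLIntegral_mono' measurableSet_Ioo fun σ hσ => ?_
    have hσ1 : 1 < σ := hσ.1
    refine (add_le_add le_rfl (enorm_add_le _ _)).trans (le_of_eq ?_)
    simp only [hFB, enorm_mul, enorm_pow, enorm_natCast, enorm_neg, eW _ σ hσ1,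
      Real.enorm_eq_ofReal hα.le]
    push_cast
    ring
  calc _ ≤ ∫⁻ z in Rect b, (∫⁻ t in Ioo (-π) π, FA (z.1, t)) * ∫⁻ s in Ioo 1 b, FB (s, z.2) :=
        setLIntegral_mono' (measurableSet_Rect b) fun z hz => mul_le_mul' (pA z hz) (pB z hz)
    _ = (∫⁻ z in Rect b, FA z) * ∫⁻ z in Rect b, FB z := by
        rw [lint_rect_mul mA mB, lint_rect mFA, lint_rect_symm mFB]
    _ = _ := by
        rw [hFA, hFB, lintegral_add_left (by fun_prop), lintegral_add_left (by fun_prop),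
          lintegral_const_mul _ (by fun_prop), lintegral_const_mul _ (by fun_prop),
          lintegral_const_mul _ (by fun_prop)]

lemma even_bound (N : ℕ) : ∀ ε : ℝ, 0 < ε → ∃ C : ℝ≥0∞, C ≠ ⊤ ∧ ∀ b g g1 g2 T,
    Strip b g g1 g2 T → I b g (2 * (N + 1)) ((2 * (N + 1)) / 2 + 1 + ε) ≤ C * T ^ ((N:ℝ) + 1) := by
  induction N with
  | zero =>
    intro ε hε
    obtain ⟨C, hC, h⟩ := base hε
    refine ⟨C, hC, fun b g g1 g2 T S => ?_⟩
    have := h b g g1 g2 T S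
    norm_num
    convert this using 2
  | succ N ih =>
    intro ε hε
    have hε2 : 0 < ε / 2 := by positivity
    obtain ⟨C0, hC0, h0⟩ := ih (ε / 2) hε2
    obtain ⟨C1, hC1, h1⟩ := holder_down hε2 (k := (N:ℝ) + 1 + 1) (m := 2 * ((N:ℝ) + 1))
      (by positivity) (by have : (0:ℝ) ≤ N := N.cast_nonneg
                          linarith)
    set θ : ℝ := ((N:ℝ) + 1 + 1) / (2 * ((N:ℝ) + 1)) with hθ
    have hθ0 : 0 ≤ θ := by positivity
    set α : ℝ := ((N:ℝ) + 1 + 1) / 2 + ε / 2 with hα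
    have hα0 : 0 < α := by positivity
    set K1 : ℝ≥0∞ := C1 * C0 ^ θ with hK1
    set K2 : ℝ≥0∞ := C0 ^ (1/2:ℝ) with hK2
    have hK1t : K1 ≠ ⊤ := ENNReal.mul_ne_top hC1 (ENNReal.rpow_ne_top_of_nonneg hθ0 hC0)
    have hK2t : K2 ≠ ⊤ := ENNReal.rpow_ne_top_of_nonneg (by norm_num) hC0
    refine ⟨(K1 + ((N + 1 : ℕ) + 1) * K2) * ((2 + ENNReal.ofReal α) * K1 + ((N + 1 : ℕ) + 1) * K2),
      ?_, ?_⟩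
    · have : (((N + 1 : ℕ) : ℝ≥0∞) + 1) ≠ ⊤ := by simp
      refine ENNReal.mul_ne_top (ENNReal.add_ne_top.2 ⟨hK1t, ENNReal.mul_ne_top this hK2t⟩)
        (ENNReal.add_ne_top.2 ⟨ENNReal.mul_ne_top (by simp) hK1t, ENNReal.mul_ne_top this hK2t⟩)
    intro b g g1 g2 T S
    have mg := S.mg
    have mg1 := S.mg1
    have mg2 := S.mg2
    have mW := measurable_W α
    have key := step_raw (N + 1) S hα0
    have h0' := h0 b g g1 g2 T S
    set Q : ℝ≥0∞ := T ^ (((N:ℝ) + 1 + 1) / 2) with hQ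
    have hX : ∫⁻ z in Rect b, ‖g z‖ₑ ^ (N + 1 + 1) * W (α + 1) z.1 ≤ K1 * Q := by
      have e : ∫⁻ z in Rect b, ‖g z‖ₑ ^ (N + 1 + 1) * W (α + 1) z.1 =
          I b g ((N:ℝ) + 1 + 1) (((N:ℝ) + 1 + 1) / 2 + 1 + ε / 2) := by
        unfold I
        refine lintegral_congr fun z => ?_
        rw [← ENNReal.rpow_natCast]
        push_cast
        congr 2
        rw [hα]; ring
      rw [e]
      refine (h1 b g mg).trans ?_
      calc _ ≤ C1 * (C0 * T ^ ((N:ℝ) + 1)) ^ θ := by gcongr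
        _ = _ := by
          rw [ENNReal.mul_rpow_of_nonneg _ _ hθ0, ← ENNReal.rpow_mul, ← mul_assoc]
          congr 2
          rw [hθ]; field_simp
    have hY : ∀ G : ℝ × ℝ → ℝ, Measurable G → ∫⁻ z in Rect b, ‖G z‖ₑ ^ (2:ℝ) ≤ T →
        ∫⁻ z in Rect b, (‖g z‖ₑ ^ (N + 1) * W α z.1) * ‖G z‖ₑ ≤ K2 * Q := by
      intro G mG hG
      refine (cs (by fun_prop) (by fun_prop)).trans ?_
      have e : ∫⁻ z in Rect b, (‖g z‖ₑ ^ (N + 1) * W α z.1) ^ (2:ℝ) ≤ C0 * T ^ ((N:ℝ) + 1) := by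
        refine le_trans ?_ h0'
        refine setLIntegral_mono' (measurableSet_Rect b) fun z hz => ?_
        have hz1 : 1 < z.1 := hz.1.1
        rw [ENNReal.mul_rpow_of_nonneg _ _ (by norm_num), W_rpow hz1 (by norm_num),
          ← ENNReal.rpow_natCast, ← ENNReal.rpow_mul]
        refine mul_le_mul' (le_of_eq ?_) (W_anti hz1 ?_)
        · push_cast; congr 1; ring
        · rw [hα]; linarith
      calc _ ≤ (C0 * T ^ ((N:ℝ) + 1)) ^ (1/2:ℝ) * T ^ (1/2:ℝ) := by gcongr
        _ = _ := by
          rw [ENNReal.mul_rpow_of_nonneg _ _ (by norm_num), ← ENNReal.rpow_mul, mul_assoc,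
            ← ENNReal.rpow_add_of_nonneg _ _ (by positivity) (by positivity)]
          congr 2; ring
    have hY1 := hY g1 mg1 S.T1
    have hY2 := hY g2 mg2 S.T2
    have e : I b g (2 * ((N + 1 : ℕ) + 1)) ((2 * ((N + 1 : ℕ) + 1)) / 2 + 1 + ε) =
        ∫⁻ z in Rect b, (‖g z‖ₑ ^ (N + 1 + 1) * W (α + 1) z.1) *
          (‖g z‖ₑ ^ (N + 1 + 1) * W α z.1) := by
      refine setLIntegral_congr_fun (measurableSet_Rect b) fun z hz => ?_
      have hz1 : 1 < z.1 := hz.1.1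
      have e1 : W ((2 * (((N + 1 : ℕ):ℝ) + 1)) / 2 + 1 + ε) z.1 = W (α + 1) z.1 * W α z.1 := by
        rw [← W_add hz1]; congr 1; rw [hα]; push_cast; ring
      have e2 : ‖g z‖ₑ ^ (2 * (((N + 1 : ℕ):ℝ) + 1)) = ‖g z‖ₑ ^ (N + 1 + 1) * ‖g z‖ₑ ^ (N + 1 + 1) := by
        rw [← pow_add, ← ENNReal.rpow_natCast]; congr 1; push_cast; ring
      simp only [e1, e2]
      ring
    rw [e]
    refine key.trans ?_
    have eQ : T ^ (((N + 1 : ℕ):ℝ) + 1) = Q * Q := by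
      rw [hQ, ← ENNReal.rpow_add_of_nonneg _ _ (by positivity) (by positivity)]
      congr 1; push_cast; ring
    rw [eQ]
    calc _ ≤ (K1 * Q + ((N + 1 : ℕ) + 1) * (K2 * Q)) *
          ((2 + ENNReal.ofReal α) * (K1 * Q) + ((N + 1 : ℕ) + 1) * (K2 * Q)) := by gcongr
      _ = _ := by ring

lemma strip_main {m ζ : ℝ} (hm : 0 < m) (hζ : 1 + m / 2 < ζ) : ∃ C : ℝ≥0∞, C ≠ ⊤ ∧
    ∀ b g g1 g2 T, Strip b g g1 g2 T → I b g m ζ ≤ C * T ^ (m / 2) := by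
  obtain ⟨N, hN⟩ := exists_nat_ge (m / 2)
  set ε := ζ - 1 - m / 2 with hεd
  have hε : 0 < ε := by linarith
  obtain ⟨C0, hC0, h0⟩ := even_bound N ε hε
  obtain ⟨C1, hC1, h1⟩ := holder_down hε hm (m := 2 * ((N:ℝ) + 1)) (by linarith)
  have hθ : 0 ≤ m / (2 * ((N:ℝ) + 1)) := by positivity
  refine ⟨C1 * C0 ^ (m / (2 * ((N:ℝ) + 1))), ENNReal.mul_ne_top hC1
    (ENNReal.rpow_ne_top_of_nonneg hθ hC0), fun b g g1 g2 T S => ?_⟩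
  have e : ζ = m / 2 + 1 + ε := by rw [hεd]; ring
  rw [e]
  refine (h1 b g S.mg).trans ?_
  calc _ ≤ C1 * (C0 * T ^ ((N:ℝ) + 1)) ^ (m / (2 * ((N:ℝ) + 1))) := by
        gcongr; exact h0 b g g1 g2 T S
    _ = _ := by
      rw [ENNReal.mul_rpow_of_nonneg _ _ hθ, ← ENNReal.rpow_mul, ← mul_assoc]
      congr 2
      field_simp

/-- the rectangle in the complex plane -/
def RectC (b : ℝ) : Set ℂ := {w | (w.re, w.im) ∈ Rect b}

lemma isOpen_Rect (b : ℝ) : IsOpen (Rect b) := isOpen_Ioo.prod isOpen_Ioo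

lemma isOpen_RectC (b : ℝ) : IsOpen (RectC b) :=
  (isOpen_Rect b).preimage (Complex.continuous_re.prodMk Complex.continuous_im)

/-- `(s,t) ↦ s + i t` -/
def toC (z : ℝ × ℝ) : ℂ := ⟨z.1, z.2⟩

lemma continuous_toC : Continuous toC := by
  have : toC = Complex.equivRealProdCLM.symm := by
    funext z; apply Complex.ext <;> simp [toC]
  rw [this]; fun_prop

lemma lint_RectC (b : ℝ) (F : ℂ → ℝ≥0∞) :
    ∫⁻ w in RectC b, F w = ∫⁻ z in Rect b, F (toC z) := by
  have := Complex.volume_preserving_equiv_real_prod.setLIntegral_comp_preimage_emb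
    Complex.measurableEquivRealProd.measurableEmbedding (fun z => F (toC z)) (Rect b)
  rw [← this]
  rfl

lemma cov {b : ℝ} {Φ Φ' : ℂ → ℂ} (hd : ∀ w ∈ RectC b, HasDerivAt Φ (Φ' w) w)
    (hinj : InjOn Φ (RectC b)) (F : ℂ → ℝ≥0∞) :
    ∫⁻ x in Φ '' RectC b, F x = ∫⁻ w in RectC b, ‖Φ' w‖ₑ ^ (2:ℝ) * F (Φ w) := by
  rw [lintegral_image_eq_lintegral_abs_det_fderiv_mul volume (isOpen_RectC b).measurableSet
    (fun w hw => ((hd w hw).hasFDerivAt.restrictScalars ℝ).hasFDerivWithinAt) hinj F]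
  refine lintegral_congr fun w => ?_
  congr 1
  have : ((ContinuousLinearMap.toSpanSingleton ℂ (Φ' w)).restrictScalars ℝ).det = ‖Φ' w‖^2 := by
    simp [ContinuousLinearMap.det, LinearMap.det_restrictScalars,
        Algebra.norm_complex_eq, Complex.normSq_eq_norm_sq]
  rw [this, abs_of_nonneg (by positivity), ENNReal.ofReal_pow (norm_nonneg _), ofReal_norm]
  norm_num

open Classical in
lemma transfer {m ζ : ℝ} (hm : 0 < m) (hζ : 1 + m / 2 < ζ) : ∃ C : ℝ≥0∞, C ≠ ⊤ ∧
    ∀ (b : ℝ) (Φ Φ' : ℂ → ℂ) (U V : Set ℂ) (v : ℂ → ℝ) (ω : ℂ → ℝ≥0∞) (k K : ℝ≥0∞),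
      2 ≤ b → (∀ w ∈ RectC b, HasDerivAt Φ (Φ' w) w) → InjOn Φ (RectC b) → Continuous Φ' →
      IsOpen U → MapsTo Φ (RectC b) U → MapsTo Φ (RectC 2) V → k ≠ ⊤ → K ≠ ⊤ →
      (∀ w ∈ RectC 2, 1 ≤ k * ‖Φ' w‖ₑ ^ (2:ℝ)) →
      (∀ w ∈ RectC b, ‖Φ' w‖ₑ ^ (2:ℝ) * ω (Φ w) ≤ K * W ζ w.re) →
      ContDiffOn ℝ 1 v U →
      ∫⁻ x in Φ '' RectC b, ‖v x‖ₑ ^ m * ω x ≤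
        K * (C * (k * (∫⁻ x in V, ‖v x‖ₑ ^ (2:ℝ)) +
          ∫⁻ x in U, ‖fderiv ℝ v x‖ₑ ^ (2:ℝ)) ^ (m / 2)) := by
  obtain ⟨C, hC, hmain⟩ := strip_main hm hζ
  refine ⟨C, hC, ?_⟩
  intro b Φ Φ' U V v ω k K hb hd hinj hΦ' hU hmap hmap2 hk hK hk1 hω hv
  set T : ℝ≥0∞ := k * (∫⁻ x in V, ‖v x‖ₑ ^ (2:ℝ)) + ∫⁻ x in U, ‖fderiv ℝ v x‖ₑ ^ (2:ℝ) with hT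
  have hsub : RectC 2 ⊆ RectC b := by
    intro w hw
    exact ⟨⟨hw.1.1, hw.1.2.trans_le hb⟩, hw.2⟩
  have hsub' : Rect 2 ⊆ Rect b := by
    intro w hw
    exact ⟨⟨hw.1.1, hw.1.2.trans_le hb⟩, hw.2⟩
  have cΦ : ContinuousOn (fun z => Φ (toC z)) (Rect b) :=
    ContinuousOn.comp (t := RectC b) (fun w hw => (hd w hw).continuousAt.continuousWithinAt)
      continuous_toC.continuousOn (fun z hz => hz)
  have mΦ : MapsTo (fun z => Φ (toC z)) (Rect b) U := fun z hz => hmap (x := toC z) hz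
  have cfv : ContinuousOn (fun z => fderiv ℝ v (Φ (toC z))) (Rect b) :=
    (hv.continuousOn_fderiv_of_isOpen hU le_rfl).comp cΦ mΦ
  have cΦ' : Continuous fun z => Φ' (toC z) := hΦ'.comp continuous_toC
  have hMR := measurableSet_Rect b
  set g : ℝ × ℝ → ℝ := (Rect b).piecewise (fun z => v (Φ (toC z))) 0 with hg
  set g1 : ℝ × ℝ → ℝ := (Rect b).piecewise
    (fun z => fderiv ℝ v (Φ (toC z)) (Φ' (toC z))) 0 with hg1
  set g2 : ℝ × ℝ → ℝ := (Rect b).piecewise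
    (fun z => fderiv ℝ v (Φ (toC z)) (Complex.I * Φ' (toC z))) 0 with hg2
  have hvd : ∀ z ∈ Rect b, HasFDerivAt v (fderiv ℝ v (Φ (toC z))) (Φ (toC z)) := fun z hz =>
    ((hv.differentiableOn one_ne_zero).differentiableAt (hU.mem_nhds (mΦ hz))).hasFDerivAt
  have hD : ∀ (G : ℝ × ℝ → ℝ) (e : ℂ), ‖e‖ₑ = 1 →
      (∀ z ∈ Rect b, G z = fderiv ℝ v (Φ (toC z)) (e * Φ' (toC z))) →
      ∫⁻ z in Rect b, ‖G z‖ₑ ^ (2:ℝ) ≤ T := by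
    intro G e he hG
    calc ∫⁻ z in Rect b, ‖G z‖ₑ ^ (2:ℝ)
        ≤ ∫⁻ z in Rect b, ‖Φ' (toC z)‖ₑ ^ (2:ℝ) * ‖fderiv ℝ v (Φ (toC z))‖ₑ ^ (2:ℝ) := by
          refine setLIntegral_mono' hMR fun z hz => ?_
          rw [hG z hz, ← ENNReal.mul_rpow_of_nonneg _ _ (by norm_num)]
          refine ENNReal.rpow_le_rpow ?_ (by norm_num)
          refine (ContinuousLinearMap.le_opENorm _ _).trans (le_of_eq ?_)
          rw [enorm_mul, he, one_mul, mul_comm]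
      _ = ∫⁻ x in Φ '' RectC b, ‖fderiv ℝ v x‖ₑ ^ (2:ℝ) := by
          rw [cov hd hinj, lint_RectC]
      _ ≤ ∫⁻ x in U, ‖fderiv ℝ v x‖ₑ ^ (2:ℝ) := lintegral_mono_set hmap.image_subset
      _ ≤ T := le_add_self
  have S : Strip b g g1 g2 T := by
    refine ⟨hb, ?_, ?_, ?_, ?_, ?_, ?_, ?_, ?_⟩
    · exact (hv.continuousOn.comp cΦ mΦ).measurable_piecewise continuousOn_const hMR
    · exact (cfv.clm_apply cΦ'.continuousOn).measurable_piecewise continuousOn_const hMR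
    · exact (cfv.clm_apply (continuous_const.mul cΦ').continuousOn).measurable_piecewise
        continuousOn_const hMR
    · rintro ⟨s, t⟩ hz
      have hline : HasDerivAt (fun s : ℝ => toC (s, t)) 1 s := by
        have := (Complex.ofRealCLM.hasDerivAt (x := s)).add_const (t * Complex.I)
        have e : (fun s : ℝ => toC (s, t)) = fun s : ℝ => Complex.ofRealCLM s + t * Complex.I := by
          funext s; apply Complex.ext <;> simp [toC]
        rw [e]; simpa using this
      have h1 := HasDerivAt.scomp s (hd (toC (s, t)) hz) hline
      have h2 := HasFDerivAt.comp_hasDerivAt s (hvd (s, t) hz) h1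
      have e1 : g1 (s, t) = fderiv ℝ v (Φ (toC (s, t))) ((1:ℂ) • Φ' (toC (s, t))) := by
        rw [hg1, piecewise_eq_of_mem _ _ _ hz, one_smul]
      rw [e1]
      refine h2.congr_of_eventuallyEq ?_
      filter_upwards [isOpen_Ioo.mem_nhds hz.1] with σ hσ
      rw [hg, piecewise_eq_of_mem _ _ _ (show (σ, t) ∈ Rect b from ⟨hσ, hz.2⟩)]
      rfl
    · rintro ⟨s, t⟩ hz
      have hline : HasDerivAt (fun t : ℝ => toC (s, t)) Complex.I t := by
        have := ((Complex.ofRealCLM.hasDerivAt (x := t)).mul_const Complex.I).const_add (s : ℂ)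
        have e : (fun t : ℝ => toC (s, t)) = fun t : ℝ => s + Complex.ofRealCLM t * Complex.I := by
          funext s; apply Complex.ext <;> simp [toC]
        rw [e]; simpa using this
      have h1 := HasDerivAt.scomp t (hd (toC (s, t)) hz) hline
      have h2 := HasFDerivAt.comp_hasDerivAt t (hvd (s, t) hz) h1
      have e1 : g2 (s, t) = fderiv ℝ v (Φ (toC (s, t))) (Complex.I • Φ' (toC (s, t))) := by
        rw [hg2, piecewise_eq_of_mem _ _ _ hz, smul_eq_mul]
      rw [e1]
      refine h2.congr_of_eventuallyEq ?_
      filter_upwards [isOpen_Ioo.mem_nhds hz.2] with σ hσ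
      rw [hg, piecewise_eq_of_mem _ _ _ (show (s, σ) ∈ Rect b from ⟨hz.1, hσ⟩)]
      rfl
    · calc ∫⁻ z in Rect 2, ‖g z‖ₑ ^ (2:ℝ)
          ≤ ∫⁻ z in Rect 2, k * (‖Φ' (toC z)‖ₑ ^ (2:ℝ) * ‖v (Φ (toC z))‖ₑ ^ (2:ℝ)) := by
            refine setLIntegral_mono' (measurableSet_Rect 2) fun z hz => ?_
            rw [hg, piecewise_eq_of_mem _ _ _ (hsub' hz), ← mul_assoc]
            exact le_mul_of_one_le_left' (hk1 (toC z) hz)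
        _ = k * ∫⁻ x in Φ '' RectC 2, ‖v x‖ₑ ^ (2:ℝ) := by
            rw [lintegral_const_mul' _ _ hk, cov (fun w hw => hd w (hsub hw)) (hinj.mono hsub),
              lint_RectC]
        _ ≤ k * ∫⁻ x in V, ‖v x‖ₑ ^ (2:ℝ) := by
            gcongr
            exact hmap2.image_subset
        _ ≤ T := le_self_add
    · refine hD g1 1 (by simp) fun z hz => ?_
      rw [hg1, piecewise_eq_of_mem _ _ _ hz, one_mul]
    · refine hD g2 Complex.I (by simp [enorm_eq_nnnorm]) fun z hz => ?_
      rw [hg2, piecewise_eq_of_mem _ _ _ hz]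
  calc ∫⁻ x in Φ '' RectC b, ‖v x‖ₑ ^ m * ω x
      = ∫⁻ z in Rect b, ‖Φ' (toC z)‖ₑ ^ (2:ℝ) * (‖v (Φ (toC z))‖ₑ ^ m * ω (Φ (toC z))) := by
        rw [cov hd hinj, lint_RectC]
    _ ≤ ∫⁻ z in Rect b, K * (‖g z‖ₑ ^ m * W ζ z.1) := by
        refine setLIntegral_mono' hMR fun z hz => ?_
        rw [hg, piecewise_eq_of_mem _ _ _ hz]
        calc _ = ‖v (Φ (toC z))‖ₑ ^ m * (‖Φ' (toC z)‖ₑ ^ (2:ℝ) * ω (Φ (toC z))) := by ring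
          _ ≤ ‖v (Φ (toC z))‖ₑ ^ m * (K * W ζ z.1) := by
            exact mul_le_mul' le_rfl (hω (toC z) hz)
          _ = _ := by ring
    _ = K * I b g m ζ := by rw [lintegral_const_mul' _ _ hK]; rfl
    _ ≤ _ := by
        gcongr
        exact hmain b g g1 g2 T S

/-- the weight -/
def wt (ζ ρ : ℝ) : ℝ≥0∞ :=
  ENNReal.ofReal ((Real.exp 1 + ρ ^ 2)⁻¹ * (Real.log (Real.exp 1 + ρ ^ 2)) ^ (-ζ))

lemma log_ge_one (ρ : ℝ) : 1 ≤ Real.log (Real.exp 1 + ρ ^ 2) := by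
  rw [Real.le_log_iff_exp_le (by positivity)]
  nlinarith [sq_nonneg ρ]

lemma wt_bound {ζ ρ a s : ℝ} (hζ : 0 ≤ ζ) (ha : a ^ 2 ≤ Real.exp 1 + ρ ^ 2) (ha0 : 0 ≤ a)
    (hs : 0 < s) (hsL : s ≤ 4 * Real.log (Real.exp 1 + ρ ^ 2)) :
    ENNReal.ofReal a ^ (2:ℝ) * wt ζ ρ ≤ ENNReal.ofReal (4 ^ ζ) * W ζ s := by
  have hL := log_ge_one ρ
  have e1 : ENNReal.ofReal a ^ (2:ℝ) = ENNReal.ofReal (a ^ 2) := by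
    rw [ENNReal.ofReal_rpow_of_nonneg ha0 (by norm_num)]; norm_num
  unfold wt W
  rw [e1, ← ENNReal.ofReal_mul (by positivity), ← ENNReal.ofReal_mul (by positivity)]
  apply ENNReal.ofReal_le_ofReal
  have h1 : a ^ 2 * (Real.exp 1 + ρ ^ 2)⁻¹ ≤ 1 := by
    rw [← div_eq_mul_inv]; exact div_le_one_of_le₀ ha (by positivity)
  have h2 : (Real.log (Real.exp 1 + ρ ^ 2)) ^ (-ζ) ≤ (s / 4) ^ (-ζ) :=
    rpow_le_rpow_of_nonpos (by positivity) (by linarith) (by linarith)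
  have h3 : (s / 4) ^ (-ζ) = 4 ^ ζ * s ^ (-ζ) := by
    rw [div_rpow hs.le (by norm_num), rpow_neg (by norm_num : (0:ℝ) ≤ 4), div_inv_eq_mul, mul_comm]
  calc _ = (a ^ 2 * (Real.exp 1 + ρ ^ 2)⁻¹) * (Real.log (Real.exp 1 + ρ ^ 2)) ^ (-ζ) := by ring
    _ ≤ 1 * (s / 4) ^ (-ζ) := by gcongr
    _ = _ := by rw [one_mul, h3]

lemma null_real : volume {x : ℂ | x.im = 0} = 0 := by
  have := Measure.addHaar_submodule (volume : Measure ℂ) (LinearMap.ker Complex.imLm) (by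
    rw [Ne, LinearMap.ker_eq_top]
    intro h
    have : Complex.imLm Complex.I = (0 : ℂ →ₗ[ℝ] ℝ) Complex.I := by rw [h]
    simp at this)
  convert this using 2
  ext x; simp

lemma complex_main {m ζ : ℝ} (hm : 0 < m) (hζ : 1 + m / 2 < ζ) : ∃ C : ℝ≥0∞, C ≠ ⊤ ∧
    ∀ (r : ℝ) (v : ℂ → ℝ), 1 ≤ r → ContDiffOn ℝ 1 v (ball 0 r) →
      ∫⁻ x in ball (0:ℂ) r, ‖v x‖ₑ ^ m * wt ζ ‖x‖ ≤
        C * ((∫⁻ x in ball (0:ℂ) (1/2), ‖v x‖ₑ ^ (2:ℝ)) +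
          ∫⁻ x in ball (0:ℂ) r, ‖fderiv ℝ v x‖ₑ ^ (2:ℝ)) ^ (m / 2) := by
  obtain ⟨C, hC, htr⟩ := transfer hm hζ
  set K : ℝ≥0∞ := ENNReal.ofReal (4 ^ ζ) with hK
  set k : ℝ≥0∞ := ENNReal.ofReal (Real.exp 4) with hk
  have hζ0 : 0 ≤ ζ := by linarith
  have hKt : K ≠ ⊤ := ENNReal.ofReal_ne_top
  have hkt : k ≠ ⊤ := ENNReal.ofReal_ne_top
  have hk1 : 1 ≤ k := by rw [hk, ENNReal.one_le_ofReal]; exact Real.one_le_exp (by norm_num)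
  refine ⟨2 * (K * (C * k ^ (m / 2))), ?_, ?_⟩
  · exact ENNReal.mul_ne_top (by simp) (ENNReal.mul_ne_top hKt (ENNReal.mul_ne_top hC
      (ENNReal.rpow_ne_top_of_nonneg (by positivity) hkt)))
  intro r v hr hv
  have he1 : (2.7182818283 : ℝ) < Real.exp 1 := Real.exp_one_gt_d9
  have he2 : Real.exp (-2) < 1 / 7 := by
    have : Real.exp (-2) = (Real.exp 1 * Real.exp 1)⁻¹ := by
      rw [← Real.exp_add, ← Real.exp_neg]; norm_num
    rw [this, one_div]
    apply inv_strictAnti₀ (by norm_num)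
    nlinarith
  have hem1 : Real.exp (-1) < 1 / 2 := by
    rw [Real.exp_neg, one_div]
    apply inv_strictAnti₀ (by norm_num)
    linarith
  have he4 : (49:ℝ) ≤ Real.exp 4 := by
    have : Real.exp 4 = (Real.exp 1 * Real.exp 1) * (Real.exp 1 * Real.exp 1) := by
      rw [← Real.exp_add, ← Real.exp_add]; norm_num
    have h7 : 7 ≤ Real.exp 1 * Real.exp 1 := by nlinarith
    rw [this]; nlinarith
  have hpi : π < 3.15 := Real.pi_lt_d2
  have hpi3 := Real.pi_gt_three
  have hlogr : 0 ≤ Real.log r := Real.log_nonneg hr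
  have nexp : ∀ w : ℂ, ‖Complex.exp (w - 3)‖ = Real.exp (w.re - 3) := by
    intro w; rw [Complex.norm_exp]; simp
  -- the annulus
  have t1 := htr (3 + Real.log r) (fun w => Complex.exp (w - 3)) (fun w => Complex.exp (w - 3))
    (ball 0 r) (ball 0 (1/2)) v (fun x => wt ζ ‖x‖) k K (by linarith)
    (fun w _ => by simpa using ((hasDerivAt_id w).sub_const (3:ℂ)).cexp)
    (by
      intro w1 h1 w2 h2 h
      have e : ∀ w ∈ RectC (3 + Real.log r), Complex.log (Complex.exp (w - 3)) = w - 3 := by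
        intro w hw
        have hw2 : w.im ∈ Ioo (-π) π := hw.2
        apply Complex.log_exp <;> simp [hw2.1, hw2.2.le]
      have h' : Complex.exp (w1 - 3) = Complex.exp (w2 - 3) := h
      have := e w1 h1
      rw [h', e w2 h2] at this
      linear_combination -this)
    (by fun_prop) isOpen_ball
    (by
      intro w hw
      have hw1 : w.re < 3 + Real.log r := hw.1.2
      rw [mem_ball_zero_iff, nexp]
      calc _ < Real.exp (Real.log r) := Real.exp_lt_exp.2 (by linarith)
        _ = r := Real.exp_log (by linarith))
    (by
      intro w hw
      have hw1 : w.re < 2 := hw.1.2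
      rw [mem_ball_zero_iff, nexp]
      exact (Real.exp_lt_exp.2 (by linarith)).trans hem1)
    hkt hKt
    (by
      intro w hw
      have hw1 : 1 < w.re := hw.1.1
      rw [← ofReal_norm, nexp, ENNReal.ofReal_rpow_of_nonneg (by positivity) (by norm_num), hk,
        ← ENNReal.ofReal_mul (by positivity), ENNReal.one_le_ofReal, ← Real.exp_mul, ← Real.exp_add]
      exact Real.one_le_exp (by linarith))
    (by
      intro w hw
      have hw1 : 1 < w.re := hw.1.1
      rw [← ofReal_norm, nexp]
      refine wt_bound hζ0 ?_ (by positivity) (by linarith) ?_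
      · linarith [Real.exp_pos 1]
      · have hL := log_ge_one (Real.exp (w.re - 3))
        have : 2 * (w.re - 3) ≤ Real.log (Real.exp 1 + Real.exp (w.re - 3) ^ 2) := by
          rw [Real.le_log_iff_exp_le (by positivity), ← Real.exp_nat_mul]
          push_cast
          linarith [Real.exp_pos 1]
        linarith)
    hv
  -- the inner rectangle
  have n7 : ‖(1/7 : ℂ)‖ = 1/7 := by simp
  have small : ∀ w ∈ RectC 3, ‖(1/7 : ℂ) * (w - 2)‖ < 1/2 := by
    intro w hw
    have hw1 : 1 < w.re ∧ w.re < 3 := hw.1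
    have hw2 : -π < w.im ∧ w.im < π := hw.2
    rw [norm_mul, n7]
    have : ‖w - 2‖ ^ 2 < (7/2) ^ 2 := by
      rw [← Complex.normSq_eq_norm_sq, Complex.normSq_apply]
      simp
      nlinarith
    have := lt_of_pow_lt_pow_left₀ 2 (by norm_num) this
    linarith
  have t2 := htr 3 (fun w => (1/7 : ℂ) * (w - 2)) (fun w => 1/7)
    (ball 0 r) (ball 0 (1/2)) v (fun x => wt ζ ‖x‖) k K (by norm_num)
    (fun w _ => by simpa using ((hasDerivAt_id w).sub_const (2:ℂ)).const_mul (1/7:ℂ))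
    (by
      intro w1 h1 w2 h2 h
      have h' : (1/7 : ℂ) * (w1 - 2) = (1/7 : ℂ) * (w2 - 2) := h
      linear_combination 7 * h')
    (by fun_prop) isOpen_ball
    (by
      intro w hw
      rw [mem_ball_zero_iff]
      linarith [small w hw])
    (by
      intro w hw
      rw [mem_ball_zero_iff]
      exact small w ⟨⟨hw.1.1, hw.1.2.trans (by norm_num)⟩, hw.2⟩)
    hkt hKt
    (by
      intro w hw
      rw [← ofReal_norm, n7, ENNReal.ofReal_rpow_of_nonneg (by positivity) (by norm_num), hk,
        ← ENNReal.ofReal_mul (by positivity), ENNReal.one_le_ofReal]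
      norm_num
      linarith)
    (by
      intro w hw
      have hw1 : 1 < w.re ∧ w.re < 3 := hw.1
      rw [← ofReal_norm, n7]
      refine wt_bound hζ0 ?_ (by positivity) (by linarith) ?_
      · nlinarith [sq_nonneg ‖(1/7 : ℂ) * (w - 2)‖]
      · linarith [log_ge_one ‖(1/7 : ℂ) * (w - 2)‖])
    hv
  set A := ∫⁻ x in ball (0:ℂ) (1/2), ‖v x‖ₑ ^ (2:ℝ) with hA
  set D := ∫⁻ x in ball (0:ℂ) r, ‖fderiv ℝ v x‖ₑ ^ (2:ℝ) with hD
  have hAD : (k * A + D) ^ (m / 2) ≤ k ^ (m / 2) * (A + D) ^ (m / 2) := by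
    rw [← ENNReal.mul_rpow_of_nonneg _ _ (by positivity), mul_add]
    gcongr
    exact le_mul_of_one_le_left' hk1
  have cover : ball (0:ℂ) r ⊆ ({x : ℂ | x.im = 0} ∪
      (fun w => Complex.exp (w - 3)) '' RectC (3 + Real.log r)) ∪
      (fun w => (1/7 : ℂ) * (w - 2)) '' RectC 3 := by
    intro x hx
    rw [mem_ball_zero_iff] at hx
    by_cases h7 : ‖x‖ < 1/7
    · right
      refine ⟨7 * x + 2, ?_, by ring⟩
      have h1 := (abs_lt.1 ((Complex.abs_re_le_norm x).trans_lt h7))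
      have h2 := (abs_lt.1 ((Complex.abs_im_le_norm x).trans_lt h7))
      refine ⟨⟨?_, ?_⟩, ⟨?_, ?_⟩⟩ <;> simp <;> linarith [h1.1, h1.2, h2.1, h2.2]
    · left
      by_cases him : x.im = 0
      · left; exact him
      right
      push Not at h7
      have hx0 : x ≠ 0 := by rintro rfl; simp at him
      have hxn : 0 < ‖x‖ := norm_pos_iff.2 hx0
      refine ⟨Complex.log x + 3, ?_, ?_⟩
      · have l1 : -2 < Real.log ‖x‖ := by
          rw [Real.lt_log_iff_exp_lt hxn]; linarith
        have l2 : Real.log ‖x‖ < Real.log r := Real.log_lt_log hxn hx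
        have a1 := Complex.neg_pi_lt_arg x
        have a2 : x.arg < π := by
          rw [Complex.arg_lt_pi_iff]; right; exact him
        refine ⟨⟨?_, ?_⟩, ⟨?_, ?_⟩⟩ <;> simp [Complex.log_re, Complex.log_im] <;> linarith
      · simp only [add_sub_cancel_right]
        exact Complex.exp_log hx0
  calc _ ≤ _ := lintegral_mono_set cover
    _ ≤ _ := lintegral_union_le _ _ _
    _ ≤ _ := add_le_add (lintegral_union_le _ _ _) le_rfl
    _ ≤ (0 + K * (C * (k * A + D) ^ (m / 2))) + K * (C * (k * A + D) ^ (m / 2)) := by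
        refine add_le_add (add_le_add ?_ t1) t2
        rw [setLIntegral_measure_zero _ _ null_real]
    _ = 2 * (K * (C * (k * A + D) ^ (m / 2))) := by ring
    _ ≤ 2 * (K * (C * (k ^ (m / 2) * (A + D) ^ (m / 2)))) := by gcongr
    _ = _ := by ring

lemma e2_main {m ζ : ℝ} (hm : 0 < m) (hζ : 1 + m / 2 < ζ) : ∃ C : ℝ≥0∞, C ≠ ⊤ ∧
    ∀ (r : ℝ) (v : E2 → ℝ), 1 ≤ r → ContDiffOn ℝ 1 v (ball 0 r) →
      ∫⁻ x in ball (0:E2) r, ‖v x‖ₑ ^ m * wt ζ ‖x‖ ≤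
        C * ((∫⁻ x in ball (0:E2) (1/2), ‖v x‖ₑ ^ (2:ℝ)) +
          ∫⁻ x in ball (0:E2) r, ‖fderivWithin ℝ v (ball 0 r) x‖ₑ ^ (2:ℝ)) ^ (m / 2) := by
  obtain ⟨C, hC, h⟩ := complex_main hm hζ
  refine ⟨C, hC, fun r v hr hv => ?_⟩
  set e : ℂ ≃ₗᵢ[ℝ] E2 := Complex.orthonormalBasisOneI.repr with he
  have pre : ∀ ρ : ℝ, e ⁻¹' (ball 0 ρ) = ball 0 ρ := by
    intro ρ; ext x; simp
  have cv : ∀ (ρ : ℝ) (F : E2 → ℝ≥0∞), ∫⁻ x in ball (0:ℂ) ρ, F (e x) = ∫⁻ y in ball (0:E2) ρ, F y := by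
    intro ρ F
    rw [← pre ρ]
    exact e.measurePreserving.setLIntegral_comp_preimage_emb
      e.toHomeomorph.measurableEmbedding F (ball 0 ρ)
  have hu : ContDiffOn ℝ 1 (v ∘ e) (ball 0 r) :=
    hv.comp e.contDiff.contDiffOn (fun x hx => by rw [← pre r] at hx; exact hx)
  have key := h r (v ∘ e) hr hu
  rw [← cv r, ← cv (1/2), ← cv r]
  simp only [LinearIsometryEquiv.norm_map]
  refine key.trans (le_of_eq ?_)
  congr 3
  refine setLIntegral_congr_fun measurableSet_ball fun x hx => ?_
  have hx' : e x ∈ ball (0:E2) r := by rw [← pre r] at hx; exact hx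
  have e1 : fderiv ℝ (v ∘ e) x = (fderiv ℝ v (e x)).comp (e : ℂ →L[ℝ] E2) := by
    have hd : DifferentiableAt ℝ v (e x) :=
      (hv.differentiableOn one_ne_zero).differentiableAt (isOpen_ball.mem_nhds hx')
    exact (hd.hasFDerivAt.comp x e.hasFDerivAt).fderiv
  have e2 : ‖fderiv ℝ (v ∘ e) x‖ₑ = ‖fderiv ℝ v (e x)‖ₑ := by
    rw [← ofReal_norm, ← ofReal_norm, e1]
    congr 1
    exact ContinuousLinearMap.opNorm_comp_linearIsometryEquiv _ e
  simp only [e2, fderivWithin_of_isOpen isOpen_ball hx']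

lemma enorm_sq_eq (x : ℝ) : ENNReal.ofReal (x ^ 2) = ‖x‖ₑ ^ (2:ℝ) := by
  rw [← sq_abs, ENNReal.ofReal_pow (abs_nonneg _), ← Real.norm_eq_abs, ofReal_norm]; norm_num

lemma norm_sq_eq {F : Type*} [NormedAddCommGroup F] (x : F) :
    ENNReal.ofReal (‖x‖ ^ 2) = ‖x‖ₑ ^ (2:ℝ) := by
  rw [ENNReal.ofReal_pow (norm_nonneg _), ofReal_norm]; norm_num

lemma sq_integrable {r : ℝ} {v : E2 → ℝ} (hr : 1 ≤ r) (hv : ContDiffOn ℝ 1 v (ball 0 r))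
    (hD : IntegrableOn (fun x => ‖fderivWithin ℝ v (ball (0 : E2) r) x‖ ^ 2) (ball (0 : E2) r)) :
    IntegrableOn (fun x => (v x) ^ 2) (ball (0:E2) 1) := by
  obtain ⟨C, hC, h⟩ := e2_main (m := 2) (ζ := 3) (by norm_num) (by norm_num)
  have key := h r v hr hv
  have hsub : ball (0:E2) 1 ⊆ ball 0 r := ball_subset_ball hr
  have hA : ∫⁻ x in ball (0:E2) (1/2), ‖v x‖ₑ ^ (2:ℝ) < ⊤ := by
    have hc : ContinuousOn (fun x => (v x) ^ 2) (closedBall (0:E2) (1/2)) :=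
      (hv.continuousOn.mono (closedBall_subset_ball (by linarith))).pow 2
    have := (hc.integrableOn_compact (μ := volume) (isCompact_closedBall _ _)).mono_set
      ball_subset_closedBall
    have := this.setLIntegral_lt_top
    simpa only [enorm_sq_eq] using this
  have hD' : ∫⁻ x in ball (0:E2) r, ‖fderivWithin ℝ v (ball 0 r) x‖ₑ ^ (2:ℝ) < ⊤ := by
    have := hD.setLIntegral_lt_top
    simpa only [norm_sq_eq] using this
  have hfin : ∫⁻ x in ball (0:E2) r, ‖v x‖ₑ ^ (2:ℝ) * wt 3 ‖x‖ < ⊤ := by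
    refine key.trans_lt (ENNReal.mul_lt_top (lt_top_iff_ne_top.2 hC)
      (ENNReal.rpow_lt_top_of_nonneg (by norm_num) (ENNReal.add_lt_top.2 ⟨hA, hD'⟩).ne))
  set c : ℝ≥0∞ := wt 3 1 with hc
  have hc0 : c ≠ 0 := by
    have := log_ge_one 1
    rw [hc, wt, Ne, ENNReal.ofReal_eq_zero, not_le]
    positivity
  have hct : c ≠ ⊤ := ENNReal.ofReal_ne_top
  have hle : c * ∫⁻ x in ball (0:E2) 1, ‖v x‖ₑ ^ (2:ℝ) ≤
      ∫⁻ x in ball (0:E2) r, ‖v x‖ₑ ^ (2:ℝ) * wt 3 ‖x‖ := by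
    rw [← lintegral_const_mul' _ _ hct]
    refine (setLIntegral_mono' measurableSet_ball fun x hx => ?_).trans (lintegral_mono_set hsub)
    rw [mul_comm]
    refine mul_le_mul' le_rfl ?_
    rw [mem_ball_zero_iff] at hx
    have hL := log_ge_one ‖x‖
    have hsq : ‖x‖ ^ 2 ≤ 1 ^ 2 := by gcongr
    rw [hc, wt, wt]
    apply ENNReal.ofReal_le_ofReal
    have h1 : (Real.exp 1 + 1 ^ 2)⁻¹ ≤ (Real.exp 1 + ‖x‖ ^ 2)⁻¹ := by gcongr
    have h2 : Real.log (Real.exp 1 + 1 ^ 2) ^ (-3:ℝ) ≤ Real.log (Real.exp 1 + ‖x‖ ^ 2) ^ (-3:ℝ) := by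
      apply rpow_le_rpow_of_nonpos (by linarith) _ (by norm_num)
      gcongr
    exact mul_le_mul h1 h2 (by have := log_ge_one 1; positivity) (by positivity)
  have hlt : ∫⁻ x in ball (0:E2) 1, ‖v x‖ₑ ^ (2:ℝ) < ⊤ := by
    by_contra hcon
    rw [not_lt, top_le_iff] at hcon
    rw [hcon, ENNReal.mul_top hc0] at hle
    exact absurd hfin (not_lt.2 hle)
  refine ⟨((hv.continuousOn.mono hsub).pow 2).aestronglyMeasurable measurableSet_ball, ?_⟩
  rw [hasFiniteIntegral_iff_enorm]
  refine lt_of_le_of_lt (lintegral_mono fun x => ?_) hlt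
  rw [Real.enorm_eq_ofReal (by positivity), enorm_sq_eq]

end WP

open WP

/-- Weighted Poincaré-type inequality on balls B_r, r ≥ 1, with constant independent of r
(Lemma 2.3 of the paper, case Ω = B_r). -/
theorem weighted_poincare_ball (m : ℝ) (hm : 2 ≤ m) (ζ : ℝ) (hζ : 1 + m / 2 < ζ) :
    ∃ C : ℝ, 0 < C ∧ ∀ r : ℝ, 1 ≤ r → ∀ v : E2 → ℝ,
      ContDiffOn ℝ 1 v (ball (0 : E2) r) →
      IntegrableOn (fun x => ‖fderivWithin ℝ v (ball (0 : E2) r) x‖ ^ 2)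
        (ball (0 : E2) r) →
      (∫ x in ball (0 : E2) r, |v x| ^ m * (Real.exp 1 + ‖x‖ ^ 2)⁻¹ *
          (Real.log (Real.exp 1 + ‖x‖ ^ 2)) ^ (-ζ)) ^ (1 / m) ≤
        C * (∫ x in ball (0 : E2) 1, (v x) ^ 2) ^ (1 / 2 : ℝ) +
        C * (∫ x in ball (0 : E2) r,
            ‖fderivWithin ℝ v (ball (0 : E2) r) x‖ ^ 2) ^ (1 / 2 : ℝ) := by
  have hm0 : 0 < m := by linarith
  obtain ⟨C, hC, h⟩ := e2_main hm0 hζ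
  refine ⟨C.toReal ^ (1 / m) + 1, by positivity, fun r hr v hv hD => ?_⟩
  have hI := sq_integrable hr hv hD
  set a := ∫ x in ball (0 : E2) 1, (v x) ^ 2 with ha
  set d := ∫ x in ball (0 : E2) r, ‖fderivWithin ℝ v (ball (0 : E2) r) x‖ ^ 2 with hd
  have ha0 : 0 ≤ a := integral_nonneg fun x => by positivity
  have hd0 : 0 ≤ d := integral_nonneg fun x => by positivity
  have ea : ENNReal.ofReal a = ∫⁻ x in ball (0:E2) 1, ‖v x‖ₑ ^ (2:ℝ) := by
    rw [ha, ofReal_integral_eq_lintegral_ofReal hI (ae_of_all _ fun x => by positivity)]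
    simp only [enorm_sq_eq]
  have ed : ENNReal.ofReal d =
      ∫⁻ x in ball (0:E2) r, ‖fderivWithin ℝ v (ball (0 : E2) r) x‖ₑ ^ (2:ℝ) := by
    rw [hd, ofReal_integral_eq_lintegral_ofReal hD (ae_of_all _ fun x => by positivity)]
    simp only [norm_sq_eq]
  have key : ∫⁻ x in ball (0:E2) r, ‖v x‖ₑ ^ m * wt ζ ‖x‖ ≤
      ENNReal.ofReal (C.toReal * (a + d) ^ (m / 2)) := by
    refine (h r v hr hv).trans ?_
    rw [ENNReal.ofReal_mul ENNReal.toReal_nonneg, ENNReal.ofReal_toReal hC,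
      ← ENNReal.ofReal_rpow_of_nonneg (by positivity) (by positivity), ENNReal.ofReal_add ha0 hd0,
      ea, ed]
    gcongr
    norm_num
  set J := ∫ x in ball (0 : E2) r, |v x| ^ m * (Real.exp 1 + ‖x‖ ^ 2)⁻¹ *
          (Real.log (Real.exp 1 + ‖x‖ ^ 2)) ^ (-ζ) with hJ
  have nn : ∀ x : E2, 0 ≤ |v x| ^ m * (Real.exp 1 + ‖x‖ ^ 2)⁻¹ *
          (Real.log (Real.exp 1 + ‖x‖ ^ 2)) ^ (-ζ) := fun x => by
    have := log_ge_one ‖x‖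
    positivity
  have hJ0 : 0 ≤ J := integral_nonneg nn
  have hJle : J ≤ C.toReal * (a + d) ^ (m / 2) := by
    by_cases hIntg : IntegrableOn (fun x : E2 => |v x| ^ m * (Real.exp 1 + ‖x‖ ^ 2)⁻¹ *
          (Real.log (Real.exp 1 + ‖x‖ ^ 2)) ^ (-ζ)) (ball (0 : E2) r)
    · rw [← ENNReal.ofReal_le_ofReal_iff (by positivity), hJ,
        ofReal_integral_eq_lintegral_ofReal hIntg (ae_of_all _ nn)]
      refine le_trans (lintegral_mono fun x => le_of_eq ?_) key
      rw [mul_assoc, ENNReal.ofReal_mul (by positivity),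
        ← ENNReal.ofReal_rpow_of_nonneg (abs_nonneg _) hm0.le, ← Real.norm_eq_abs, ofReal_norm]
      rfl
    · rw [hJ, integral_undef hIntg]
      positivity
  calc J ^ (1 / m) ≤ (C.toReal * (a + d) ^ (m / 2)) ^ (1 / m) := by gcongr
    _ = C.toReal ^ (1 / m) * (a + d) ^ (1 / 2 : ℝ) := by
      rw [mul_rpow ENNReal.toReal_nonneg (by positivity), ← rpow_mul (by positivity)]
      congr 2
      field_simp
    _ ≤ (C.toReal ^ (1 / m) + 1) * (a ^ (1 / 2 : ℝ) + d ^ (1 / 2 : ℝ)) := by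
      have : (a + d) ^ (1 / 2 : ℝ) ≤ a ^ (1 / 2 : ℝ) + d ^ (1 / 2 : ℝ) :=
        Real.rpow_add_le_add_rpow ha0 hd0 (by norm_num) (by norm_num)
      gcongr
      linarith
    _ = _ := by ring
end
end

section
/- (Improved logarithmic Sobolev inequality of Brezis–Wainger type.) For every p ∈ (2,∞) there exists a constant C = C(p) > 0 such that every continuously differentiable function f : ℝ² → ℝ with f ∈ L^p(ℝ²) and ∇f ∈ L²(ℝ²) ∩ L^p(ℝ²) is bounded and satisfies ‖f‖_{L^∞(ℝ²)}² ≤ C(1 + ‖∇f‖_{L²(ℝ²)}² · log(e + ‖f‖_{L^p(ℝ²)} + ‖∇f‖_{L^p(ℝ²)})). -/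
open MeasureTheory Real Set Metric

noncomputable section

lemma young_aux (p q T s D : ℝ) (hpq : p.HolderConjugate q) (hT : 0 < T) (hs : 0 < s) (hD : 0 ≤ D) :
    D ≤ s * (T ^ (-p) * D ^ p) + T ^ q * s ^ (1 - q) := by
  have h := Real.young_inequality_of_nonneg (a := T⁻¹ * D) (b := T / s) (by positivity) (by positivity) hpq
  have h1 : (T⁻¹ * D) ^ p / p ≤ (T⁻¹ * D) ^ p := div_le_self (by positivity) hpq.lt.le
  have h2 : (T / s) ^ q / q ≤ (T / s) ^ q := div_le_self (by positivity) hpq.symm.lt.le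
  have h3 : (T⁻¹ * D) ^ p = T ^ (-p) * D ^ p := by
    rw [Real.mul_rpow (by positivity) hD, Real.inv_rpow hT.le, Real.rpow_neg hT.le]
  have h4 : s * (T / s) ^ q = T ^ q * s ^ (1 - q) := by
    rw [Real.div_rpow hT.le hs.le, Real.rpow_sub hs, Real.rpow_one]; ring
  have h5 : D = s * (T⁻¹ * D * (T / s)) := by field_simp
  calc D = s * (T⁻¹ * D * (T / s)) := h5
    _ ≤ s * ((T⁻¹ * D) ^ p + (T / s) ^ q) := by gcongr; linarith
    _ = _ := by rw [mul_add, h4, h3]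

lemma amgm_aux (κ s D : ℝ) (hκ : 0 < κ) (hs : 0 < s) :
    D ≤ s * (D ^ 2 / κ) + κ * s⁻¹ := by
  have : s * (D ^ 2 / κ) + κ * s⁻¹ - D = ((s * D - κ / 2) ^ 2 + κ ^ 2 * (3 / 4)) / (s * κ) := by
    field_simp; ring
  have h2 : 0 ≤ ((s * D - κ / 2) ^ 2 + κ ^ 2 * (3 / 4)) / (s * κ) := by positivity
  linarith

lemma oneD (p : ℝ) (hp : 2 < p) (F F' D : ℝ → ℝ) (hF : ∀ s, HasDerivAt F (F' s) s)
    (hF' : Continuous F') (hD : Continuous D) (hFD : ∀ s, |F' s| ≤ D s)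
    (T κ : ℝ) (hT : 1 ≤ T) (hκ : 0 < κ) :
    |F 0| ≤ 1 + (p - 1) / (p - 2) + κ * Real.log (2 * T ^ p / T ^ (-(p / (p - 2)))) +
      ∫ s in (0:ℝ)..(2 * T ^ p), s * (1 / T ^ p * |F s| ^ p + T ^ (-p) * D s ^ p + D s ^ 2 / κ) := by
  have hT0 : 0 < T := by linarith
  set q := p / (p - 1) with hq
  have hpq : p.HolderConjugate q := by
    rw [hq]; exact Real.HolderConjugate.conjExponent (by linarith)
  have hD0 : ∀ s, 0 ≤ D s := fun s => (abs_nonneg _).trans (hFD s)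
  have hFc : Continuous F := continuous_iff_continuousAt.2 fun s => (hF s).continuousAt
  set R := T ^ p with hR
  set δ := T ^ (-(p / (p - 2))) with hδ
  have hR1 : 1 ≤ R := Real.one_le_rpow hT (by linarith)
  have hδ0 : 0 < δ := by positivity
  have hδ1 : δ ≤ 1 := Real.rpow_le_one_of_one_le_of_nonpos hT (by
    have : 0 < p / (p - 2) := div_pos (by linarith) (by linarith)
    linarith)
  have hq2 : -1 < 1 - q := by
    have : q < 2 := by rw [hq, div_lt_iff₀ (by linarith)]; linarith
    linarith
  have cFp : Continuous fun s => |F s| ^ p := hFc.abs.rpow_const fun _ => Or.inr (by linarith)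
  have cDp : Continuous fun s => D s ^ p := hD.rpow_const fun _ => Or.inr (by linarith)
  -- step 1: the fundamental theorem
  have step1 : ∀ r ∈ Icc R (R + 1), |F 0| ≤ r * (1 / R * |F r| ^ p) + (1 + ∫ s in (0:ℝ)..(2 * R), D s) := by
    intro r hr
    have hftc : ∫ s in (0:ℝ)..r, F' s = F r - F 0 :=
      intervalIntegral.integral_eq_sub_of_hasDerivAt (fun s _ => hF s) (hF'.intervalIntegrable _ _)
    have h1 : |∫ s in (0:ℝ)..r, F' s| ≤ ∫ s in (0:ℝ)..r, D s :=
      (intervalIntegral.abs_integral_le_integral_abs (by linarith [hr.1])).trans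
        (intervalIntegral.integral_mono_on (by linarith [hr.1]) (hF'.abs.intervalIntegrable _ _)
          (hD.intervalIntegrable _ _) (fun s _ => hFD s))
    have h2 : ∫ s in (0:ℝ)..r, D s ≤ ∫ s in (0:ℝ)..(2 * R), D s :=
      intervalIntegral.integral_mono_interval le_rfl (by linarith [hr.1]) (by linarith [hr.2])
        (Filter.Eventually.of_forall hD0) (hD.intervalIntegrable _ _)
    have h3 : |F r| ≤ 1 + |F r| ^ p := by
      rcases le_total (|F r|) 1 with h | h
      · have : 0 ≤ |F r| ^ p := by positivity
        linarith
      · have := Real.self_le_rpow_of_one_le h (by linarith : 1 ≤ p)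
        linarith
    have h4 : |F r| ^ p ≤ r * (1 / R * |F r| ^ p) := by
      have : 1 ≤ r * (1 / R) := by
        rw [mul_one_div, le_div_iff₀ (by linarith)]; linarith [hr.1]
      have h0 : 0 ≤ |F r| ^ p := by positivity
      nlinarith
    have h5 : |F 0| ≤ |F r| + |F r - F 0| := by
      have := abs_sub_abs_le_abs_sub (F 0) (F r)
      rw [abs_sub_comm] at this; linarith
    rw [hftc] at h1
    linarith
  have c1 : Continuous fun s => s * (1 / R * |F s| ^ p) := by fun_prop
  have c2 : Continuous fun s => s * (T ^ (-p) * D s ^ p) := by fun_prop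
  have c3 : Continuous fun s => s * (D s ^ 2 / κ) := by fun_prop
  have step2 : |F 0| ≤ (∫ s in (0:ℝ)..(2 * R), s * (1 / R * |F s| ^ p)) + (1 + ∫ s in (0:ℝ)..(2 * R), D s) := by
    have h1 : ∫ r in R..(R+1), |F 0| ≤ ∫ r in R..(R+1), (r * (1 / R * |F r| ^ p) + (1 + ∫ s in (0:ℝ)..(2 * R), D s)) :=
      intervalIntegral.integral_mono_on (by linarith) (by simp)
        ((c1.add continuous_const).intervalIntegrable _ _) step1
    rw [intervalIntegral.integral_add (c1.intervalIntegrable _ _) (by simp)] at h1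
    simp only [intervalIntegral.integral_const, add_sub_cancel_left, one_smul] at h1
    have h2 : ∫ r in R..(R+1), r * (1 / R * |F r| ^ p) ≤ ∫ s in (0:ℝ)..(2 * R), s * (1 / R * |F s| ^ p) := by
      refine intervalIntegral.integral_mono_interval (by linarith) (by linarith) (by linarith) ?_ (c1.intervalIntegrable _ _)
      filter_upwards [ae_restrict_mem measurableSet_Ioc] with s hs
      have := hs.1
      simp only [Pi.zero_apply]
      positivity
    linarith
  have step3 : ∫ s in (0:ℝ)..δ, D s ≤ (∫ s in (0:ℝ)..δ, s * (T ^ (-p) * D s ^ p)) + (p - 1) / (p - 2) := by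
    have i1 : IntervalIntegrable (fun s : ℝ => T ^ q * s ^ (1 - q)) volume 0 δ :=
      (intervalIntegral.intervalIntegrable_rpow' hq2).const_mul _
    have h1 : ∫ s in (0:ℝ)..δ, D s ≤ ∫ s in (0:ℝ)..δ, (s * (T ^ (-p) * D s ^ p) + T ^ q * s ^ (1 - q)) :=
      intervalIntegral.integral_mono_on_of_le_Ioo hδ0.le (hD.intervalIntegrable _ _)
        ((c2.intervalIntegrable _ _).add i1)
        (fun s hs => young_aux p q T s (D s) hpq hT0 hs.1 (hD0 s))
    rw [intervalIntegral.integral_add (c2.intervalIntegrable _ _) i1,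
      intervalIntegral.integral_const_mul, integral_rpow (Or.inl hq2)] at h1
    have h2 : T ^ q * ((δ ^ (1 - q + 1) - 0 ^ (1 - q + 1)) / (1 - q + 1)) = (p - 1) / (p - 2) := by
      rw [Real.zero_rpow (by linarith), sub_zero, hδ, ← Real.rpow_mul hT0.le, ← mul_div_assoc,
        ← Real.rpow_add hT0]
      have e1 : p - 1 ≠ 0 := by linarith
      have e2 : p - 2 ≠ 0 := by linarith
      have e3 : 1 - q + 1 = (p - 2) / (p - 1) := by rw [hq]; field_simp; ring
      have e4 : q + -(p / (p - 2)) * (1 - q + 1) = 0 := by rw [e3, hq]; field_simp; ring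
      rw [e4, e3, Real.rpow_zero, one_div_div]
    rw [h2] at h1
    exact h1
  have step4 : ∫ s in δ..(2 * R), D s ≤ (∫ s in δ..(2 * R), s * (D s ^ 2 / κ)) + κ * Real.log (2 * R / δ) := by
    have hne : (0:ℝ) ∉ uIcc δ (2 * R) := by
      rw [uIcc_of_le (by linarith)]; intro h; linarith [h.1]
    have i1 : IntervalIntegrable (fun s : ℝ => κ * s⁻¹) volume δ (2 * R) :=
      (intervalIntegral.intervalIntegrable_inv (fun x hx => by rintro rfl; exact hne hx) continuousOn_id).const_mul _
    have h1 : ∫ s in δ..(2 * R), D s ≤ ∫ s in δ..(2 * R), (s * (D s ^ 2 / κ) + κ * s⁻¹) :=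
      intervalIntegral.integral_mono_on (by linarith) (hD.intervalIntegrable _ _)
        ((c3.intervalIntegrable _ _).add i1)
        (fun s hs => amgm_aux κ s (D s) hκ (by linarith [hs.1]))
    rw [intervalIntegral.integral_add (c3.intervalIntegrable _ _) i1,
      intervalIntegral.integral_const_mul, integral_inv hne] at h1
    exact h1
  have step5 : ∫ s in (0:ℝ)..δ, s * (T ^ (-p) * D s ^ p) ≤ ∫ s in (0:ℝ)..(2 * R), s * (T ^ (-p) * D s ^ p) := by
    refine intervalIntegral.integral_mono_interval (by linarith) (by linarith) (by linarith) ?_ (c2.intervalIntegrable _ _)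
    filter_upwards [ae_restrict_mem measurableSet_Ioc] with s hs
    have := hs.1
    have := hD0 s
    simp only [Pi.zero_apply]
    positivity
  have step6 : ∫ s in δ..(2 * R), s * (D s ^ 2 / κ) ≤ ∫ s in (0:ℝ)..(2 * R), s * (D s ^ 2 / κ) := by
    refine intervalIntegral.integral_mono_interval (by linarith) (by linarith) (by linarith) ?_ (c3.intervalIntegrable _ _)
    filter_upwards [ae_restrict_mem measurableSet_Ioc] with s hs
    have := hs.1
    simp only [Pi.zero_apply]
    positivity
  have c12 : Continuous fun s => s * (1 / R * |F s| ^ p) + s * (T ^ (-p) * D s ^ p) := c1.add c2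
  have step7 := intervalIntegral.integral_add_adjacent_intervals
    (hD.intervalIntegrable (μ := volume) 0 δ) (hD.intervalIntegrable (μ := volume) δ (2 * R))
  have step8 : ∫ s in (0:ℝ)..(2 * R), s * (1 / R * |F s| ^ p + T ^ (-p) * D s ^ p + D s ^ 2 / κ) =
      (∫ s in (0:ℝ)..(2 * R), s * (1 / R * |F s| ^ p)) + (∫ s in (0:ℝ)..(2 * R), s * (T ^ (-p) * D s ^ p)) +
      ∫ s in (0:ℝ)..(2 * R), s * (D s ^ 2 / κ) := by
    rw [← intervalIntegral.integral_add (c1.intervalIntegrable _ _) (c2.intervalIntegrable _ _),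
      ← intervalIntegral.integral_add (c12.intervalIntegrable _ _) (c3.intervalIntegrable _ _)]
    congr 1; ext s; ring
  rw [step8]
  linarith

def uvec (θ : ℝ) : E2 := !₂[Real.cos θ, Real.sin θ]

lemma polar_E2 (h : E2 → ENNReal) (hh : Measurable h) :
    ∫⁻ θ in Ioo (-π) π, ∫⁻ r in Ioi (0:ℝ), ENNReal.ofReal r * h (r • uvec θ) = ∫⁻ z, h z := by
  have e1 : ∫⁻ z, h z = ∫⁻ w : ℂ, h (Complex.orthonormalBasisOneI.repr w) :=
    ((Complex.orthonormalBasisOneI.measurePreserving_repr).lintegral_comp hh).symm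
  have hu : Continuous uvec := by unfold uvec; fun_prop
  rw [e1, ← Complex.lintegral_comp_polarCoord_symm, polarCoord_target]
  have e2 : ∀ z : ℝ × ℝ, Complex.orthonormalBasisOneI.repr (Complex.polarCoord.symm z) = z.1 • uvec z.2 := by
    intro z
    ext i
    fin_cases i <;> simp [uvec, Complex.polarCoord_symm_apply, Complex.cos_ofReal_re, Complex.sin_ofReal_re]
  simp only [e2]
  rw [Measure.volume_eq_prod, ← Measure.prod_restrict, lintegral_prod_symm]
  · simp [smul_eq_mul]
  · apply Measurable.aemeasurable
    have : Measurable fun z : ℝ × ℝ => z.1 • uvec z.2 := by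
      have : Continuous fun z : ℝ × ℝ => z.1 • uvec z.2 := by fun_prop
      exact this.measurable
    fun_prop

lemma norm_uvec (θ : ℝ) : ‖uvec θ‖ = 1 := by
  simp [uvec, EuclideanSpace.norm_eq]

lemma pointwise_bound (p : ℝ) (hp : 2 < p) (f : E2 → ℝ) (hf : ContDiff ℝ 1 f)
    (h1 : Integrable (fun x => |f x| ^ p))
    (h2 : Integrable (fun x => ‖fderiv ℝ f x‖ ^ 2))
    (h3 : Integrable (fun x => ‖fderiv ℝ f x‖ ^ p))
    (T κ : ℝ) (hT : 1 ≤ T) (hκ : 0 < κ) (x : E2) :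
    |f x| ≤ 1 + (p - 1) / (p - 2) + κ * Real.log (2 * T ^ p / T ^ (-(p / (p - 2)))) +
      (1 / T ^ p * (∫ x, |f x| ^ p) + T ^ (-p) * (∫ x, ‖fderiv ℝ f x‖ ^ p) +
        (∫ x, ‖fderiv ℝ f x‖ ^ 2) / κ) := by
  have hT0 : 0 < T := by linarith
  set c := 1 + (p - 1) / (p - 2) + κ * Real.log (2 * T ^ p / T ^ (-(p / (p - 2)))) with hc
  have hR1 : 1 ≤ T ^ p := Real.one_le_rpow hT (by linarith)
  have hδ1 : T ^ (-(p / (p - 2))) ≤ 1 := Real.rpow_le_one_of_one_le_of_nonpos hT (by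
    have : 0 < p / (p - 2) := div_pos (by linarith) (by linarith)
    linarith)
  have hc0 : 0 ≤ c := by
    have e1 : 0 ≤ (p - 1) / (p - 2) := div_nonneg (by linarith) (by linarith)
    have e2 : 0 ≤ Real.log (2 * T ^ p / T ^ (-(p / (p - 2)))) := by
      apply Real.log_nonneg
      rw [le_div_iff₀ (by positivity)]; linarith
    positivity
  have cf : Continuous f := hf.continuous
  have cdf : Continuous (fderiv ℝ f) := hf.continuous_fderiv (by norm_num)
  set H : E2 → ℝ := fun y => 1 / T ^ p * |f y| ^ p + T ^ (-p) * ‖fderiv ℝ f y‖ ^ p + ‖fderiv ℝ f y‖ ^ 2 / κ with hH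
  have H0 : ∀ y, 0 ≤ H y := fun y => by simp only [hH]; positivity
  have cH : Continuous H := by
    have c1 : Continuous fun s => |f s| ^ p := cf.abs.rpow_const fun _ => Or.inr (by linarith)
    have c2 : Continuous fun s => ‖fderiv ℝ f s‖ ^ p := cdf.norm.rpow_const fun _ => Or.inr (by linarith)
    simp only [hH]; fun_prop
  have iH : Integrable H := ((h1.const_mul _).add (h3.const_mul _)).add (h2.div_const _)
  have intH : ∫ y, H y = 1 / T ^ p * (∫ x, |f x| ^ p) + T ^ (-p) * (∫ x, ‖fderiv ℝ f x‖ ^ p) +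
        (∫ x, ‖fderiv ℝ f x‖ ^ 2) / κ := by
    simp only [hH]
    have h13 : Integrable fun y => 1 / T ^ p * |f y| ^ p + T ^ (-p) * ‖fderiv ℝ f y‖ ^ p :=
      (h1.const_mul _).add (h3.const_mul _)
    rw [integral_add h13 (h2.div_const _),
      integral_add (h1.const_mul _) (h3.const_mul _), integral_const_mul, integral_const_mul, integral_div]
  have dir : ∀ θ : ℝ, ENNReal.ofReal |f x| ≤ ENNReal.ofReal c +
      ∫⁻ r in Ioi (0:ℝ), ENNReal.ofReal r * ENNReal.ofReal (H (x + r • uvec θ)) := by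
    intro θ
    have hline : ∀ s : ℝ, HasDerivAt (fun s : ℝ => x + s • uvec θ) (uvec θ) s := by
      intro s
      simpa using ((hasDerivAt_id s).smul_const (uvec θ)).const_add x
    have cline : Continuous fun s : ℝ => x + s • uvec θ := by fun_prop
    have h := oneD p hp (fun s => f (x + s • uvec θ)) (fun s => fderiv ℝ f (x + s • uvec θ) (uvec θ))
      (fun s => ‖fderiv ℝ f (x + s • uvec θ)‖)
      (fun s => ((hf.differentiable (by norm_num)) _).hasFDerivAt.comp_hasDerivAt s (hline s))
      ((cdf.comp cline).clm_apply continuous_const) (cdf.comp cline).norm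
      (fun s => by
        have := (fderiv ℝ f (x + s • uvec θ)).le_opNorm (uvec θ)
        rwa [norm_uvec, mul_one, Real.norm_eq_abs] at this) T κ hT hκ
    simp only [zero_smul, add_zero] at h
    have cg : Continuous fun s : ℝ => s * H (x + s • uvec θ) := continuous_id.mul (cH.comp cline)
    have hle : ENNReal.ofReal (∫ s in (0:ℝ)..(2 * T ^ p), s * H (x + s • uvec θ)) ≤
        ∫⁻ r in Ioi (0:ℝ), ENNReal.ofReal r * ENNReal.ofReal (H (x + r • uvec θ)) := by
      rw [intervalIntegral.integral_of_le (by positivity), ofReal_integral_eq_lintegral_ofReal]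
      · refine (lintegral_mono_set Ioc_subset_Ioi_self).trans ?_
        refine setLIntegral_mono' measurableSet_Ioi fun s hs => ?_
        rw [ENNReal.ofReal_mul (le_of_lt hs)]
      · exact (cg.intervalIntegrable _ _).1
      · filter_upwards [ae_restrict_mem measurableSet_Ioc] with s hs
        exact mul_nonneg hs.1.le (H0 _)
    calc ENNReal.ofReal |f x| ≤ ENNReal.ofReal (c + ∫ s in (0:ℝ)..(2 * T ^ p), s * H (x + s • uvec θ)) :=
          ENNReal.ofReal_le_ofReal h
      _ ≤ _ := ENNReal.ofReal_add_le
      _ ≤ _ := by gcongr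
  have hint : ∫⁻ θ in Ioo (-π) π, ENNReal.ofReal |f x| ≤ ∫⁻ θ in Ioo (-π) π, (ENNReal.ofReal c +
      ∫⁻ r in Ioi (0:ℝ), ENNReal.ofReal r * ENNReal.ofReal (H (x + r • uvec θ))) :=
    lintegral_mono fun θ => dir θ
  rw [lintegral_add_left measurable_const, polar_E2 (fun y => ENNReal.ofReal (H (x + y)))
      (by have : Continuous fun y => H (x + y) := by fun_prop
          exact this.measurable.ennreal_ofReal),
    lintegral_add_left_eq_self (fun y => ENNReal.ofReal (H y)) x,
    ← ofReal_integral_eq_lintegral_ofReal iH (Filter.Eventually.of_forall H0)] at hint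
  simp only [lintegral_const, Measure.restrict_apply MeasurableSet.univ, univ_inter, Real.volume_Ioo] at hint
  have I0 : 0 ≤ ∫ y, H y := integral_nonneg H0
  have hpi := Real.pi_gt_three
  rw [← ENNReal.ofReal_mul (abs_nonneg _), ← ENNReal.ofReal_mul hc0, ← ENNReal.ofReal_add
    (mul_nonneg hc0 (by linarith)) I0, ENNReal.ofReal_le_ofReal_iff
    (add_nonneg (mul_nonneg hc0 (by linarith)) I0)] at hint
  rw [← intH]
  nlinarith [abs_nonneg (f x)]

/-- Improved logarithmic Sobolev inequality of Brezis–Wainger type (Lemma 2.7 of the paper):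
for p ∈ (2,∞), every C¹ function f with f ∈ L^p, ∇f ∈ L² ∩ L^p is bounded and
‖f‖_∞² ≤ C(1 + ‖∇f‖₂² log(e + ‖f‖_p + ‖∇f‖_p)). -/
theorem log_sobolev_brezis_wainger (p : ℝ) (hp : 2 < p) :
    ∃ C : ℝ, 0 < C ∧ ∀ f : E2 → ℝ, ContDiff ℝ 1 f →
      Integrable (fun x => |f x| ^ p) →
      Integrable (fun x => ‖fderiv ℝ f x‖ ^ 2) →
      Integrable (fun x => ‖fderiv ℝ f x‖ ^ p) →
      (∃ B : ℝ, ∀ x, |f x| ≤ B) ∧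
      eLpNorm f ⊤ volume ^ 2 ≤
        ENNReal.ofReal (C * (1 + (∫ x : E2, ‖fderiv ℝ f x‖ ^ 2) *
          Real.log (Real.exp 1 + (∫ x : E2, |f x| ^ p) ^ (1 / p) +
            (∫ x : E2, ‖fderiv ℝ f x‖ ^ p) ^ (1 / p)))) := by

  have hp0 : 0 < p := by linarith
  have hp2 : 0 < p - 2 := by linarith
  set c : ℝ := p + p / (p - 2) with hcdef
  set K : ℝ := 5 + (p - 1) / (p - 2) + c with hK
  have hk1 : 0 < (p - 1) / (p - 2) := div_pos (by linarith) hp2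
  have hk2 : 0 < c := by positivity
  have hK0 : 0 < K := by positivity
  refine ⟨K ^ 2, by positivity, fun f hf h1 h2 h3 => ?_⟩
  have ha : 0 ≤ ∫ x : E2, |f x| ^ p := integral_nonneg fun x => by positivity
  have hm : 0 ≤ ∫ x : E2, ‖fderiv ℝ f x‖ ^ p := integral_nonneg fun x => by positivity
  have hG : 0 ≤ ∫ x : E2, ‖fderiv ℝ f x‖ ^ 2 := integral_nonneg fun x => by positivity
  have key := fun T κ hT hκ x => pointwise_bound p hp f hf h1 h2 h3 T κ hT hκ x
  generalize (∫ x : E2, |f x| ^ p) = a at *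
  generalize (∫ x : E2, ‖fderiv ℝ f x‖ ^ p) = m at *
  generalize (∫ x : E2, ‖fderiv ℝ f x‖ ^ 2) = G at *
  have hA : 0 ≤ a ^ (1 / p) := by positivity
  have hM : 0 ≤ m ^ (1 / p) := by positivity
  have he : 1 ≤ Real.exp 1 := Real.one_le_exp (by norm_num)
  set T : ℝ := Real.exp 1 + a ^ (1 / p) + m ^ (1 / p) with hTdef
  have hT : 1 ≤ T := by linarith
  have hT0 : 0 < T := by linarith
  set L := Real.log T with hL
  have hL1 : 1 ≤ L := by
    rw [hL, Real.le_log_iff_exp_le hT0]; linarith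
  set s := Real.sqrt (1 + G * L) with hs
  have hGL : 0 ≤ G * L := by positivity
  have hs2 : s ^ 2 = 1 + G * L := Real.sq_sqrt (by positivity)
  have hs1 : 1 ≤ s := by rw [hs]; exact Real.one_le_sqrt.2 (by linarith)
  have hbd : ∀ x, |f x| ≤ K * s := by
    intro x
    have hk := key T (s / L) hT (by positivity) x
    have e1 : 1 / T ^ p * a ≤ 1 := by
      rw [one_div_mul_eq_div, div_le_one (by positivity)]
      calc a = (a ^ (1 / p)) ^ p := by rw [← Real.rpow_mul ha, one_div_mul_cancel hp0.ne', Real.rpow_one]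
        _ ≤ T ^ p := by apply Real.rpow_le_rpow hA _ hp0.le; linarith
    have e2 : T ^ (-p) * m ≤ 1 := by
      rw [Real.rpow_neg hT0.le, inv_mul_eq_div, div_le_one (by positivity)]
      calc m = (m ^ (1 / p)) ^ p := by rw [← Real.rpow_mul hm, one_div_mul_cancel hp0.ne', Real.rpow_one]
        _ ≤ T ^ p := by apply Real.rpow_le_rpow hM _ hp0.le; linarith
    have e3 : G / (s / L) ≤ s := by
      rw [div_div_eq_mul_div, div_le_iff₀ (by linarith)]; nlinarith
    have e4 : s / L * Real.log (2 * T ^ p / T ^ (-(p / (p - 2)))) ≤ s * (1 + c) := by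
      rw [Real.log_div (by positivity) (by positivity), Real.log_mul (by norm_num) (by positivity),
        Real.log_rpow hT0, Real.log_rpow hT0, div_mul_eq_mul_div, div_le_iff₀ (by linarith), mul_assoc]
      have := Real.log_two_lt_d9
      apply mul_le_mul_of_nonneg_left _ (by linarith)
      rw [hcdef]
      linarith
    have e5 : (p - 1) / (p - 2) ≤ (p - 1) / (p - 2) * s := le_mul_of_one_le_right hk1.le hs1
    rw [hK]
    linarith
  refine ⟨⟨_, hbd⟩, ?_⟩
  rw [← hs2, ← mul_pow, ENNReal.ofReal_pow (by positivity)]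
  gcongr
  rw [eLpNorm_exponent_top]
  exact eLpNormEssSup_le_of_ae_bound (Filter.Eventually.of_forall hbd)
end
end

section
/- (Beale–Kato–Majda type inequality in two dimensions.) For every p ∈ (2,∞) there exists a constant C = C(p) > 0 such that for every twice continuously differentiable vector field u = (u¹,u²) : ℝ² → ℝ² with ∇u ∈ L²(ℝ²) ∩ L^p(ℝ²) and ∇²u ∈ L^p(ℝ²), one has ‖∇u‖_{L^∞(ℝ²)} ≤ C(‖div u‖_{L^∞(ℝ²)} + ‖curl u‖_{L^∞(ℝ²)}) · log(e + ‖∇²u‖_{L^p(ℝ²)}) + C‖∇u‖_{L²(ℝ²)} + C. -/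
open MeasureTheory Real Set Metric

noncomputable section

/-- The i-th standard basis vector of ℝ². -/
def e2 (i : Fin 2) : E2 := EuclideanSpace.single i (1 : ℝ)

/-- Divergence of a vector field on ℝ²: div u = ∂₁u¹ + ∂₂u². -/
def div2 (u : E2 → E2) (x : E2) : ℝ := ∑ i, fderiv ℝ u x (e2 i) i

/-- Curl (vorticity) of a vector field on ℝ²: curl u = ∂₂u¹ − ∂₁u². -/
def curl2 (u : E2 → E2) (x : E2) : ℝ :=
  fderiv ℝ u x (e2 1) 0 - fderiv ℝ u x (e2 0) 1

/-- vector potential gradient kernel -/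
def eta (i : Fin 2) (y : E2) : ℝ := 3 * y i / ((1 + 4 * ‖y‖ ^ 2) * (1 + ‖y‖ ^ 2))

/-- its derivatives -/
def deta (i l : Fin 2) (y : E2) : ℝ :=
  3 * (if i = l then 1 else 0) / ((1 + 4 * ‖y‖ ^ 2) * (1 + ‖y‖ ^ 2))
    - 6 * (y i * y l) * (5 + 8 * ‖y‖ ^ 2) / ((1 + 4 * ‖y‖ ^ 2) * (1 + ‖y‖ ^ 2)) ^ 2

/-- the averaging kernel -/
def rho (y : E2) : ℝ := 2 * ((1 + ‖y‖ ^ 2) ^ 2)⁻¹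

lemma hasF_eta (i : Fin 2) (y : E2) : ∃ L : E2 →L[ℝ] ℝ, HasFDerivAt (eta i) L y ∧
    ∀ l, L (e2 l) = deta i l y := by
  have hn : HasFDerivAt (fun y : E2 => ‖y‖ ^ 2) _ y := (hasStrictFDerivAt_norm_sq y).hasFDerivAt
  have hp : HasFDerivAt (fun y : E2 => y i) (EuclideanSpace.proj i : E2 →L[ℝ] ℝ) y :=
    (EuclideanSpace.proj i : E2 →L[ℝ] ℝ).hasFDerivAt
  have h1 : (1 + 4 * ‖y‖ ^ 2) * (1 + ‖y‖ ^ 2) ≠ 0 := by positivity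
  have hd := ((hn.const_mul 4).const_add 1).mul (hn.const_add 1)
  have := (hp.const_mul 3).mul ((hasDerivAt_inv h1).comp_hasFDerivAt y hd)
  refine ⟨_, this, fun l => ?_⟩
  have h2 : inner ℝ y (e2 l) = y l := by simp [e2, EuclideanSpace.inner_single_right]
  have h3 : (e2 l) i = if i = l then 1 else 0 := by simp [e2]
  simp [h2, h3, deta]
  split_ifs <;> field_simp <;> ring

lemma fderiv_eta (i l : Fin 2) (y : E2) : fderiv ℝ (eta i) y (e2 l) = deta i l y := by
  obtain ⟨L, h, h2⟩ := hasF_eta i y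
  rw [h.fderiv, h2]

lemma diff_eta (i : Fin 2) : Differentiable ℝ (eta i) := fun y => by
  obtain ⟨L, h, h2⟩ := hasF_eta i y
  exact h.differentiableAt

lemma deta_symm (i l : Fin 2) (y : E2) : deta i l y = deta l i y := by
  simp only [deta, eq_comm, mul_comm (y i)]

lemma deta_trace (y : E2) : deta 0 0 y + deta 1 1 y = 4 * rho ((2:ℝ) • y) - rho y := by
  simp only [deta, rho, norm_smul, if_true, mul_pow]
  have h : ‖y‖ ^ 2 = y 0 ^ 2 + y 1 ^ 2 := by simp [EuclideanSpace.real_norm_sq_eq]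
  have h1 : (1 + 4 * ‖y‖ ^ 2) ≠ 0 := by positivity
  have h1' : (1 + ‖y‖ ^ 2) ≠ 0 := by positivity
  have h2 : ‖(2:ℝ)‖ ^ 2 = 4 := by norm_num
  rw [h2]
  rw [h] at *
  field_simp
  ring

lemma abs_coord_sq_le (i : Fin 2) (y : E2) : (y i) ^ 2 ≤ ‖y‖ ^ 2 := by
  have h : ‖y‖ ^ 2 = y 0 ^ 2 + y 1 ^ 2 := by simp [EuclideanSpace.real_norm_sq_eq]
  rw [h]; fin_cases i <;> simp <;> positivity

lemma eta_bound (i : Fin 2) (y : E2) : |eta i y| ≤ 3 * (1 + ‖y‖ ^ 2)⁻¹ := by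
  have h := abs_coord_sq_le i y
  have h1 : |y i| ≤ 1 + 4 * ‖y‖ ^ 2 := by
    rw [← sq_abs] at h
    nlinarith [sq_nonneg (|y i| - 1), sq_nonneg (‖y‖)]
  rw [eta, abs_div, abs_mul, abs_of_pos (show (0:ℝ) < 3 by norm_num),
    abs_of_pos (show (0:ℝ) < (1 + 4 * ‖y‖ ^ 2) * (1 + ‖y‖ ^ 2) by positivity)]
  rw [div_le_iff₀ (by positivity)]
  have h1' : (1 + ‖y‖ ^ 2) ≠ 0 := by positivity
  field_simp
  linarith

lemma deta_bound (i l : Fin 2) (y : E2) : |deta i l y| ≤ 51 * ((1 + ‖y‖ ^ 2) ^ 2)⁻¹ := by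
  have hi := abs_coord_sq_le i y
  have hl := abs_coord_sq_le l y
  have h1 : |y i * y l| ≤ ‖y‖ ^ 2 := by
    rw [abs_le]; constructor <;> nlinarith [sq_nonneg (y i - y l), sq_nonneg (y i + y l)]
  set t := ‖y‖ ^ 2 with ht
  have ht0 : 0 ≤ t := by positivity
  have hd : 0 < (1 + 4 * t) * (1 + t) := by positivity
  have A : |3 * (if i = l then (1:ℝ) else 0) / ((1 + 4 * t) * (1 + t))| ≤ 3 * ((1 + t) ^ 2)⁻¹ := by
    rw [abs_div, abs_of_pos hd, div_le_iff₀ hd]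
    have : |3 * (if i = l then (1:ℝ) else 0)| ≤ 3 := by split_ifs <;> norm_num
    refine this.trans ?_
    field_simp
    nlinarith
  have B : |6 * (y i * y l) * (5 + 8 * t) / ((1 + 4 * t) * (1 + t)) ^ 2| ≤ 48 * ((1 + t) ^ 2)⁻¹ := by
    rw [abs_div, abs_of_pos (pow_pos hd 2), div_le_iff₀ (pow_pos hd 2), abs_mul, abs_mul,
      abs_of_pos (show (0:ℝ) < 6 by norm_num), abs_of_pos (show 0 < 5 + 8 * t by positivity)]
    have : 6 * |y i * y l| * (5 + 8 * t) ≤ 6 * t * (5 + 8 * t) := by gcongr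
    refine this.trans ?_
    field_simp
    nlinarith
  unfold deta
  rw [← ht]
  calc _ ≤ _ + _ := abs_sub _ _
    _ ≤ 3 * ((1 + t) ^ 2)⁻¹ + 48 * ((1 + t) ^ 2)⁻¹ := add_le_add A B
    _ = _ := by ring

lemma cont_eta (i : Fin 2) : Continuous (eta i) := (diff_eta i).continuous

lemma cont_deta (i l : Fin 2) : Continuous (deta i l) := by
  unfold deta
  refine Continuous.sub (Continuous.div (by fun_prop) (by fun_prop) fun y => by positivity)
    (Continuous.div (by fun_prop) (by fun_prop) fun y => by positivity)

lemma cont_rho : Continuous rho := by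
  unfold rho
  exact continuous_const.mul (Continuous.inv₀ (by fun_prop) fun y => by positivity)

/-- basic decaying weight -/
def NN (y : E2) : ℝ := (1 + ‖y‖ ^ 2)⁻¹

lemma NN_pos (y : E2) : 0 < NN y := by unfold NN; positivity

lemma cont_NN : Continuous NN := by
  unfold NN
  exact Continuous.inv₀ (by fun_prop) fun y => by positivity

lemma NN_int {r : ℝ} (hr : 1 < r) : Integrable (fun y => NN y ^ r) := by
  have := integrable_rpow_neg_one_add_norm_sq (E := E2) (μ := volume) (r := 2 * r)
    (by simp; linarith)
  refine this.congr (Filter.Eventually.of_forall fun y => ?_)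
  simp only [NN]
  rw [Real.inv_rpow (by positivity), ← Real.rpow_neg (by positivity)]
  congr 1; ring

lemma NN_sq_int : Integrable (fun y => NN y ^ 2) := by
  have := NN_int (r := 2) (by norm_num)
  simpa using this

lemma memLp_aux {s : ℝ} (hs : 0 < s) {F : E2 → ℝ} (hF : Continuous F) (h0 : ∀ x, 0 ≤ F x)
    (hi : Integrable (fun x => F x ^ s)) : MemLp F (ENNReal.ofReal s) := by
  rw [← integrable_norm_rpow_iff hF.aestronglyMeasurable (by simpa using hs) (by simp)]
  refine hi.congr (Filter.Eventually.of_forall fun y => ?_)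
  simp [ENNReal.toReal_ofReal hs.le, abs_of_nonneg (h0 y)]

lemma holder_aux {p q : ℝ} (hpq : p.HolderConjugate q) {f F k : E2 → ℝ} (hf : Continuous f)
    (hF : Continuous F) (hfF : ∀ x, |f x| ≤ F x) (hFi : Integrable (fun x => F x ^ p))
    (hk : Continuous k) {c : ℝ} (hc : 0 ≤ c) (hkc : ∀ x, |k x| ≤ c * NN x) :
    Integrable (fun x => f x * k x) ∧
    |∫ x, f x * k x| ≤ c * (∫ x, NN x ^ q) ^ (1 / q) * (∫ x, F x ^ p) ^ (1 / p) := by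
  have hF0 : ∀ x, 0 ≤ F x := fun x => (abs_nonneg _).trans (hfF x)
  have m1 := memLp_aux hpq.pos hF hF0 hFi
  have m2 := memLp_aux hpq.symm.pos cont_NN (fun x => (NN_pos x).le) (NN_int hpq.symm.lt)
  have H := integral_mul_le_Lp_mul_Lq_of_nonneg hpq (Filter.Eventually.of_forall hF0)
    (Filter.Eventually.of_forall fun x => (NN_pos x).le) m1 m2
  have hI : Integrable (fun x => F x * NN x) := by
    have : (ENNReal.ofReal p).HolderConjugate (ENNReal.ofReal q) := hpq.ennrealOfReal
    exact m1.integrable_mul m2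
  have hb : ∀ x, ‖f x * k x‖ ≤ c * (F x * NN x) := fun x => by
    rw [norm_mul, Real.norm_eq_abs, Real.norm_eq_abs]
    calc _ ≤ F x * (c * NN x) := mul_le_mul (hfF x) (hkc x) (abs_nonneg _) (hF0 x)
      _ = _ := by ring
  refine ⟨(hI.const_mul c).mono' (hf.mul hk).aestronglyMeasurable
    (Filter.Eventually.of_forall hb), ?_⟩
  calc |∫ x, f x * k x| ≤ ∫ x, c * (F x * NN x) :=
        norm_integral_le_of_norm_le (hI.const_mul c) (Filter.Eventually.of_forall hb)
    _ = c * ∫ x, F x * NN x := integral_const_mul _ _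
    _ ≤ c * ((∫ x, F x ^ p) ^ (1 / p) * (∫ x, NN x ^ q) ^ (1 / q)) := by gcongr
    _ = _ := by ring

lemma NN_sq_le (x : E2) : ((1 + ‖x‖ ^ 2) ^ 2)⁻¹ ≤ NN x := by
  unfold NN
  apply inv_anti₀ (by positivity)
  nlinarith [sq_nonneg ‖x‖]

lemma NN_sq (x : E2) : ((1 + ‖x‖ ^ 2) ^ 2)⁻¹ = NN x ^ 2 := by
  simp [NN]

lemma deta_bound' (i l : Fin 2) (y : E2) : |deta i l y| ≤ 51 * NN y :=
  (deta_bound i l y).trans (by gcongr; exact NN_sq_le y)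

lemma rho_bound (y : E2) : |rho y| ≤ 2 * NN y := by
  rw [rho, abs_of_pos (by positivity)]
  gcongr; exact NN_sq_le y

lemma deta_int (i l : Fin 2) : Integrable (deta i l) := by
  refine (NN_sq_int.const_mul 51).mono' (cont_deta i l).aestronglyMeasurable
    (Filter.Eventually.of_forall fun y => ?_)
  rw [← NN_sq]; exact deta_bound i l y

lemma rho_int : Integrable rho := by
  have : rho = fun y => 2 * NN y ^ 2 := by ext y; rw [← NN_sq, rho]
  rw [this]; exact NN_sq_int.const_mul 2

lemma rho_pos (y : E2) : 0 < rho y := by unfold rho; positivity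

lemma rho_int_pos : 0 < ∫ y, rho y := by
  rw [integral_pos_iff_support_of_nonneg (fun y => (rho_pos y).le) rho_int]
  have : Function.support rho = univ := by
    ext y; simp [(rho_pos y).ne']
  rw [this]; simp

/-- components of the gradient -/
def pd (u : E2 → E2) (i k : Fin 2) (x : E2) : ℝ := fderiv ℝ u x (e2 i) k

lemma norm_e2 (i : Fin 2) : ‖e2 i‖ = 1 := by simp [e2]

lemma abs_coord_le (i : Fin 2) (y : E2) : |y i| ≤ ‖y‖ := by
  have := abs_coord_sq_le i y
  exact abs_le_of_sq_le_sq this (norm_nonneg _)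

lemma pd_bound (u : E2 → E2) (i k : Fin 2) (x : E2) : |pd u i k x| ≤ ‖fderiv ℝ u x‖ := by
  refine (abs_coord_le _ _).trans ?_
  simpa [norm_e2] using (fderiv ℝ u x).le_opNorm (e2 i)

lemma hasF_pd {u : E2 → E2} (hu : ContDiff ℝ 2 u) (i k : Fin 2) (x : E2) :
    ∃ L : E2 →L[ℝ] ℝ, HasFDerivAt (pd u i k) L x ∧
      ∀ v, L v = fderiv ℝ (fderiv ℝ u) x v (e2 i) k := by
  have h1 : ContDiff ℝ 1 (fderiv ℝ u) := hu.fderiv_right (by norm_num)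
  have h2 := (h1.differentiable (by norm_num) x).hasFDerivAt
  have h3 := (EuclideanSpace.proj k : E2 →L[ℝ] ℝ).hasFDerivAt.comp x
    (h2.clm_apply (hasFDerivAt_const (e2 i) x))
  exact ⟨_, h3, fun v => by simp⟩

lemma fderiv_pd {u : E2 → E2} (hu : ContDiff ℝ 2 u) (i k : Fin 2) (x v : E2) :
    fderiv ℝ (pd u i k) x v = fderiv ℝ (fderiv ℝ u) x v (e2 i) k := by
  obtain ⟨L, h, h2⟩ := hasF_pd hu i k x
  rw [h.fderiv, h2]

lemma diff_pd {u : E2 → E2} (hu : ContDiff ℝ 2 u) (i k : Fin 2) : Differentiable ℝ (pd u i k) :=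
  fun x => by
  obtain ⟨L, h, h2⟩ := hasF_pd hu i k x
  exact h.differentiableAt

lemma cont_D2 {u : E2 → E2} (hu : ContDiff ℝ 2 u) : Continuous (fderiv ℝ (fderiv ℝ u)) := by
  have h1 : ContDiff ℝ 1 (fderiv ℝ u) := hu.fderiv_right (by norm_num)
  exact h1.continuous_fderiv (by norm_num)

lemma cont_D1 {u : E2 → E2} (hu : ContDiff ℝ 2 u) : Continuous (fderiv ℝ u) :=
  hu.continuous_fderiv (by norm_num)

lemma cont_dpd {u : E2 → E2} (hu : ContDiff ℝ 2 u) (i k : Fin 2) (v : E2) :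
    Continuous (fun x => fderiv ℝ (pd u i k) x v) := by
  simp only [fderiv_pd hu]
  have := cont_D2 hu
  exact (EuclideanSpace.proj k : E2 →L[ℝ] ℝ).continuous.comp
    ((this.clm_apply continuous_const).clm_apply continuous_const)

lemma dpd_symm {u : E2 → E2} (hu : ContDiff ℝ 2 u) (i l k : Fin 2) (x : E2) :
    fderiv ℝ (pd u i k) x (e2 l) = fderiv ℝ (pd u l k) x (e2 i) := by
  rw [fderiv_pd hu, fderiv_pd hu]
  have := (hu.contDiffAt (x := x)).isSymmSndFDerivAt (by simp)
  rw [this.eq]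

/-- size of the second derivative -/
def D2n (u : E2 → E2) (x : E2) : ℝ := ‖iteratedFDeriv ℝ 2 u x‖

lemma cont_D2n {u : E2 → E2} (hu : ContDiff ℝ 2 u) : Continuous (D2n u) := by
  have := hu.continuous_iteratedFDeriv (m := 2) le_rfl
  exact this.norm

lemma D2n_eq (u : E2 → E2) (x : E2) : ‖fderiv ℝ (fderiv ℝ u) x‖ = D2n u x := by
  unfold D2n
  rw [← norm_iteratedFDeriv_fderiv, norm_iteratedFDeriv_one]

lemma dpd_bound {u : E2 → E2} (hu : ContDiff ℝ 2 u) (i l k : Fin 2) (x : E2) :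
    |fderiv ℝ (pd u i k) x (e2 l)| ≤ D2n u x := by
  rw [fderiv_pd hu, ← D2n_eq]
  refine (abs_coord_le _ _).trans ?_
  simpa [norm_e2] using (fderiv ℝ (fderiv ℝ u) x).le_opNorm₂ (e2 l) (e2 i)


lemma dpd_eta_aux {u : E2 → E2} (hu : ContDiff ℝ 2 u) {p : ℝ} (hp : 2 < p)
    (h2 : Integrable (fun x => D2n u x ^ p)) (i l k m : Fin 2) :
    Integrable (fun x => fderiv ℝ (pd u i k) x (e2 l) * eta m x) ∧
    |∫ x, fderiv ℝ (pd u i k) x (e2 l) * eta m x| ≤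
      3 * (∫ x, NN x ^ p.conjExponent) ^ (1 / p.conjExponent) *
      (∫ x, D2n u x ^ p) ^ (1 / p) := by
  have hpq := Real.HolderConjugate.conjExponent (show 1 < p by linarith)
  have hb : ∀ x, |eta m x| ≤ 3 * NN x := eta_bound m
  have c1 : Continuous (fun x => fderiv ℝ (pd u i k) x (e2 l)) := cont_dpd hu i k (e2 l)
  have c2 : Continuous (fun x => D2n u x) := cont_D2n hu
  have c3 : ∀ x, |fderiv ℝ (pd u i k) x (e2 l)| ≤ D2n u x := dpd_bound hu i l k
  have c4 : (0:ℝ) ≤ 3 := by norm_num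
  generalize p.conjExponent = q at *
  have := holder_aux hpq c1 c2 c3 h2 (cont_eta m) c4 hb
  exact this

lemma pd_eta_int {u : E2 → E2} (hu : ContDiff ℝ 2 u)
    (h1 : Integrable (fun x => ‖fderiv ℝ u x‖ ^ (2:ℝ))) (i k m : Fin 2) :
    Integrable (fun x => pd u i k x * eta m x) := by
  have hb : ∀ x, |eta m x| ≤ 3 * NN x := eta_bound m
  exact (holder_aux Real.HolderConjugate.two_two (diff_pd hu i k).continuous (cont_D1 hu).norm
    (pd_bound u i k) h1 (cont_eta m) (by norm_num) hb).1

lemma pd_deta_int {u : E2 → E2} (hu : ContDiff ℝ 2 u)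
    (h1 : Integrable (fun x => ‖fderiv ℝ u x‖ ^ (2:ℝ))) (i l k m : Fin 2) :
    Integrable (fun x => pd u i k x * deta m l x) :=
  (holder_aux Real.HolderConjugate.two_two (diff_pd hu i k).continuous (cont_D1 hu).norm
    (pd_bound u i k) h1 (cont_deta m l) (by norm_num) (deta_bound' m l)).1

lemma ibp0 {f g : E2 → ℝ} {v : E2} (A : Integrable (fun x => fderiv ℝ f x v * g x))
    (C : Integrable (fun x => f x * fderiv ℝ g x v))
    (B : Integrable (fun x => f x * g x)) (d1 : Differentiable ℝ f) (d2 : Differentiable ℝ g) :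
    ∫ x, f x * fderiv ℝ g x v = - ∫ x, fderiv ℝ f x v * g x :=
  integral_mul_fderiv_eq_neg_fderiv_mul_of_integrable A C B (fun x _ => d1 x) (fun x _ => d2 x)

lemma ibp {u : E2 → E2} (hu : ContDiff ℝ 2 u) {p : ℝ} (hp : 2 < p)
    (h1 : Integrable (fun x => ‖fderiv ℝ u x‖ ^ (2:ℝ)))
    (h2 : Integrable (fun x => D2n u x ^ p)) (i l k m : Fin 2) :
    ∫ x, pd u i k x * deta m l x = - ∫ x, fderiv ℝ (pd u i k) x (e2 l) * eta m x := by
  have A := (dpd_eta_aux hu hp h2 i l k m).1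
  have B := pd_eta_int hu h1 i k m
  have C := pd_deta_int hu h1 i l k m
  have e : ∀ x, deta m l x = fderiv ℝ (eta m) x (e2 l) := fun x => (fderiv_eta m l x).symm
  simp only [e] at C ⊢
  exact ibp0 A C B (diff_pd hu i k) (diff_eta m)

lemma swap {u : E2 → E2} (hu : ContDiff ℝ 2 u) {p : ℝ} (hp : 2 < p)
    (h1 : Integrable (fun x => ‖fderiv ℝ u x‖ ^ (2:ℝ)))
    (h2 : Integrable (fun x => D2n u x ^ p)) (i l k m : Fin 2) :
    ∫ x, pd u i k x * deta m l x = ∫ x, pd u l k x * deta m i x := by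
  rw [ibp hu hp h1 h2, ibp hu hp h1 h2]
  simp only [dpd_symm hu i l]


/-- constant for the sup bound -/
def K1 : ℝ := ∑ i : Fin 2, ∑ l : Fin 2, ∫ x, |deta i l x|

lemma deta_le_K1 (i : Fin 2) : (∫ x, |deta i 0 x|) + (∫ x, |deta i 1 x|) ≤ K1 := by
  have h : ∀ i l, 0 ≤ ∫ x, |deta i l x| := fun i l => integral_nonneg fun x => abs_nonneg _
  have h00 := h 0 0
  have h01 := h 0 1
  have h10 := h 1 0
  have h11 := h 1 1
  simp only [K1, Fin.sum_univ_two]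
  fin_cases i <;> simp <;> linarith

lemma bdd_mul_deta {f : E2 → ℝ} {M : ℝ} (hM : ∀ x, |f x| ≤ M) (i l : Fin 2) :
    |∫ x, f x * deta i l x| ≤ M * ∫ x, |deta i l x| := by
  rw [← integral_const_mul, ← Real.norm_eq_abs]
  refine norm_integral_le_of_norm_le ((deta_int i l).abs.const_mul M)
    (Filter.Eventually.of_forall fun x => ?_)
  rw [Real.norm_eq_abs, abs_mul]
  exact mul_le_mul_of_nonneg_right (hM x) (abs_nonneg _)

lemma div2_eq (u : E2 → E2) (x : E2) : div2 u x = pd u 0 0 x + pd u 1 1 x := by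
  simp [div2, pd]

lemma curl2_eq (u : E2 → E2) (x : E2) : curl2 u x = pd u 1 0 x - pd u 0 1 x := by
  simp [curl2, pd]

/-- the increment functional -/
def JJ (u : E2 → E2) (i k : Fin 2) : ℝ := ∫ x, pd u i k x * (deta 0 0 x + deta 1 1 x)

lemma JJ_eq {u : E2 → E2} (hu : ContDiff ℝ 2 u)
    (h1 : Integrable (fun x => ‖fderiv ℝ u x‖ ^ (2:ℝ))) (i k : Fin 2) :
    JJ u i k = (∫ x, pd u i k x * deta 0 0 x) + ∫ x, pd u i k x * deta 1 1 x := by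
  unfold JJ
  rw [← integral_add (pd_deta_int hu h1 _ _ _ _) (pd_deta_int hu h1 _ _ _ _)]
  simp only [mul_add]

lemma JJ_bound1 {u : E2 → E2} (hu : ContDiff ℝ 2 u) {p : ℝ} (hp : 2 < p)
    (h1 : Integrable (fun x => ‖fderiv ℝ u x‖ ^ (2:ℝ)))
    (h2 : Integrable (fun x => D2n u x ^ p)) {M : ℝ} (hd : ∀ x, |div2 u x| ≤ M)
    (hc : ∀ x, |curl2 u x| ≤ M) (i k : Fin 2) : |JJ u i k| ≤ K1 * M := by
  have hM : 0 ≤ M := (abs_nonneg _).trans (hd 0)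
  have I := pd_deta_int hu h1
  have dv : ∀ i l, ∫ x, div2 u x * deta i l x =
      (∫ x, pd u 0 0 x * deta i l x) + ∫ x, pd u 1 1 x * deta i l x := fun i l => by
    rw [← integral_add (I _ _ _ _) (I _ _ _ _)]
    simp only [div2_eq, add_mul]
  have cv : ∀ i l, ∫ x, curl2 u x * deta i l x =
      (∫ x, pd u 1 0 x * deta i l x) - ∫ x, pd u 0 1 x * deta i l x := fun i l => by
    rw [← integral_sub (I _ _ _ _) (I _ _ _ _)]
    simp only [curl2_eq, sub_mul]
  have S := swap hu hp h1 h2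
  have sy : ∀ (a : E2 → ℝ) (i l : Fin 2), ∫ x, a x * deta i l x = ∫ x, a x * deta l i x := fun a i l => by
    simp only [deta_symm i l]
  have b := deta_le_K1 i
  have e : JJ u i k = (∫ x, pd u 0 k x * deta i 0 x) + ∫ x, pd u 1 k x * deta i 1 x := by
    rw [JJ_eq hu h1, S i 0 k 0, S i 1 k 1, sy _ 0 i, sy _ 1 i]
  have B1 := bdd_mul_deta hd i 0
  have B2 := bdd_mul_deta hd i 1
  have B3 := bdd_mul_deta hc i 0
  have B4 := bdd_mul_deta hc i 1
  have bb := mul_le_mul_of_nonneg_left b hM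
  have key : |JJ u i k| ≤ M * ((∫ x, |deta i 0 x|) + (∫ x, |deta i 1 x|)) := by
    have s0 := S 0 1 0 i
    have s1 := S 0 1 1 i
    rw [e]
    rw [dv] at B1 B2
    rw [cv] at B3 B4
    rw [abs_le] at *
    obtain rfl | rfl : k = 0 ∨ k = 1 := by fin_cases k <;> simp
    · constructor <;> linarith [B1.1, B1.2, B4.1, B4.2]
    · constructor <;> linarith [B2.1, B2.2, B3.1, B3.2]
  linarith

/-- constant for the Morrey type bound -/
def K2 (p : ℝ) : ℝ := 6 * (∫ x, NN x ^ p.conjExponent) ^ (1 / p.conjExponent)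

lemma K2_nonneg (p : ℝ) : 0 ≤ K2 p :=
  mul_nonneg (by norm_num) (Real.rpow_nonneg (integral_nonneg fun x =>
    Real.rpow_nonneg (NN_pos x).le _) _)

lemma K1_nonneg : 0 ≤ K1 := by
  unfold K1
  exact Finset.sum_nonneg fun i _ => Finset.sum_nonneg fun l _ =>
    integral_nonneg fun x => abs_nonneg _

lemma JJ_bound2 {u : E2 → E2} (hu : ContDiff ℝ 2 u) {p : ℝ} (hp : 2 < p)
    (h1 : Integrable (fun x => ‖fderiv ℝ u x‖ ^ (2:ℝ)))
    (h2 : Integrable (fun x => D2n u x ^ p)) (i k : Fin 2) :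
    |JJ u i k| ≤ K2 p * (∫ x, D2n u x ^ p) ^ (1 / p) := by
  rw [JJ_eq hu h1, ibp hu hp h1 h2, ibp hu hp h1 h2]
  have a := (dpd_eta_aux hu hp h2 i 0 k 0).2
  have b := (dpd_eta_aux hu hp h2 i 1 k 1).2
  unfold K2
  rw [abs_le] at *
  constructor <;> linarith [a.1, a.2, b.1, b.2]

/-- rescaled field -/
def resc (u : E2 → E2) (x0 : E2) (lam : ℝ) (y : E2) : E2 := lam • u (x0 + lam⁻¹ • y)

lemma resc_contDiff {u : E2 → E2} (hu : ContDiff ℝ 2 u) (x0 : E2) (lam : ℝ) :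
    ContDiff ℝ 2 (resc u x0 lam) := by
  unfold resc
  fun_prop

lemma hasF_comp_aux {E G : Type*} [NormedAddCommGroup E] [NormedSpace ℝ E]
    [NormedAddCommGroup G] [NormedSpace ℝ G] {f : E → G}
    (hf : Differentiable ℝ f) (x0 : E) (lam : ℝ) (y : E) :
    HasFDerivAt (fun y => f (x0 + lam⁻¹ • y)) (lam⁻¹ • fderiv ℝ f (x0 + lam⁻¹ • y)) y := by
  have h : HasFDerivAt (fun y : E => x0 + lam⁻¹ • y) (lam⁻¹ • ContinuousLinearMap.id ℝ E) y :=
    ((hasFDerivAt_id y).const_smul lam⁻¹).const_add x0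
  have := (hf (x0 + lam⁻¹ • y)).hasFDerivAt.comp y h
  have e : lam⁻¹ • fderiv ℝ f (x0 + lam⁻¹ • y) =
    (fderiv ℝ f (x0 + lam⁻¹ • y)).comp (lam⁻¹ • ContinuousLinearMap.id ℝ E) := by
    ext v; simp
  rw [e]; exact this

lemma norm_comp_aux0 {E G : Type*} [NormedAddCommGroup E] [NormedSpace ℝ E]
    [NormedAddCommGroup G] [NormedSpace ℝ G] {f : E → G}
    (hf : Differentiable ℝ f) (x0 : E) {lam : ℝ} (hl : 0 < lam) (y : E) :
    ‖fderiv ℝ (fun y => f (x0 + lam⁻¹ • y)) y‖ =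
      lam⁻¹ * ‖fderiv ℝ f (x0 + lam⁻¹ • y)‖ := by
  rw [(hasF_comp_aux hf x0 lam y).fderiv, norm_smul,
    Real.norm_of_nonneg (by positivity)]

lemma norm_comp_aux {E G : Type*} [NormedAddCommGroup E] [NormedSpace ℝ E]
    [NormedAddCommGroup G] [NormedSpace ℝ G] {f : E → G}
    (hf : ContDiff ℝ 2 f) (x0 : E) {lam : ℝ} (hl : 0 < lam) (y : E) :
    ‖fderiv ℝ (fun y => fderiv ℝ f (x0 + lam⁻¹ • y)) y‖ =
      lam⁻¹ * ‖fderiv ℝ (fderiv ℝ f) (x0 + lam⁻¹ • y)‖ := by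
  have h1 : ContDiff ℝ 1 (fderiv ℝ f) := hf.fderiv_right (by norm_num)
  exact norm_comp_aux0 (h1.differentiable (by norm_num)) x0 hl y

lemma fderiv_resc {u : E2 → E2} (hu : ContDiff ℝ 2 u) (x0 : E2) {lam : ℝ} (hl : 0 < lam) :
    fderiv ℝ (resc u x0 lam) = fun y => fderiv ℝ u (x0 + lam⁻¹ • y) := by
  ext1 y
  have := (hasF_comp_aux (hu.differentiable (by norm_num)) x0 lam y).const_smul lam
  rw [smul_smul, mul_inv_cancel₀ hl.ne', one_smul] at this
  exact this.fderiv

lemma D2n_resc {u : E2 → E2} (hu : ContDiff ℝ 2 u) (x0 : E2) {lam : ℝ} (hl : 0 < lam) (y : E2) :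
    D2n (resc u x0 lam) y = lam⁻¹ * D2n u (x0 + lam⁻¹ • y) := by
  rw [← D2n_eq, ← D2n_eq, fderiv_resc hu x0 hl]
  exact norm_comp_aux hu x0 hl y

lemma pd_resc {u : E2 → E2} (hu : ContDiff ℝ 2 u) (x0 : E2) {lam : ℝ} (hl : 0 < lam)
    (i k : Fin 2) (y : E2) : pd (resc u x0 lam) i k y = pd u i k (x0 + lam⁻¹ • y) := by
  simp only [pd, fderiv_resc hu x0 hl]

lemma int_resc {f : E2 → ℝ} (hf : Integrable f) (x0 : E2) {lam : ℝ} (hl : 0 < lam) :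
    Integrable (fun y => f (x0 + lam⁻¹ • y)) :=
  (hf.comp_add_left x0).comp_smul (R := lam⁻¹) (by positivity)

lemma integral_resc (f : E2 → ℝ) (x0 : E2) (lam : ℝ) :
    ∫ y, f (x0 + lam⁻¹ • y) = lam ^ 2 * ∫ y, f y := by
  have := Measure.integral_comp_smul (volume : Measure E2) (fun y => f (x0 + y)) lam⁻¹
  rw [this, integral_add_left_eq_self]
  simp

/-- averages of the gradient at scale 1/lam -/
def AA (u : E2 → E2) (x0 : E2) (i k : Fin 2) (lam : ℝ) : ℝ :=
  ∫ y, pd u i k (x0 + lam⁻¹ • y) * rho y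

lemma pd_rho {u : E2 → E2} (hu : ContDiff ℝ 2 u)
    (h1 : Integrable (fun x => ‖fderiv ℝ u x‖ ^ (2:ℝ))) (i k : Fin 2) :
    Integrable (fun x => pd u i k x * rho x) ∧
    |∫ x, pd u i k x * rho x| ≤
      2 * (∫ x, NN x ^ (2:ℝ)) ^ (1 / 2 : ℝ) * (∫ x, ‖fderiv ℝ u x‖ ^ (2:ℝ)) ^ (1 / 2 : ℝ) :=
  holder_aux Real.HolderConjugate.two_two (diff_pd hu i k).continuous (cont_D1 hu).norm
    (pd_bound u i k) h1 cont_rho (by norm_num) rho_bound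

lemma resc_int1 {u : E2 → E2} (hu : ContDiff ℝ 2 u)
    (h1 : Integrable (fun x => ‖fderiv ℝ u x‖ ^ (2:ℝ))) (x0 : E2) {lam : ℝ} (hl : 0 < lam) :
    Integrable (fun x => ‖fderiv ℝ (resc u x0 lam) x‖ ^ (2:ℝ)) := by
  rw [fderiv_resc hu x0 hl]
  exact int_resc h1 x0 hl

lemma resc_int2 {u : E2 → E2} (hu : ContDiff ℝ 2 u) {p : ℝ}
    (h2 : Integrable (fun x => D2n u x ^ p)) (x0 : E2) {lam : ℝ} (hl : 0 < lam) :
    Integrable (fun x => D2n (resc u x0 lam) x ^ p) ∧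
    ∫ x, D2n (resc u x0 lam) x ^ p = lam⁻¹ ^ p * (lam ^ 2 * ∫ x, D2n u x ^ p) := by
  have : ∀ x, D2n (resc u x0 lam) x ^ p = lam⁻¹ ^ p * D2n u (x0 + lam⁻¹ • x) ^ p := fun x => by
    rw [D2n_resc hu x0 hl, Real.mul_rpow (by positivity) (show 0 ≤ D2n u _ from norm_nonneg _)]
  simp only [this]
  refine ⟨(int_resc h2 x0 hl).const_mul _, ?_⟩
  rw [integral_const_mul, integral_resc (fun x => D2n u x ^ p) x0 lam]

lemma AA_step {u : E2 → E2} (hu : ContDiff ℝ 2 u)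
    (h1 : Integrable (fun x => ‖fderiv ℝ u x‖ ^ (2:ℝ))) (x0 : E2) {lam : ℝ} (hl : 0 < lam)
    (i k : Fin 2) : AA u x0 i k (2 * lam) - AA u x0 i k lam = JJ (resc u x0 lam) i k := by
  have hl2 : 0 < 2 * lam := by positivity
  have e1 : ∫ y, pd u i k (x0 + lam⁻¹ • y) * rho ((2:ℝ) • y) = 4⁻¹ * AA u x0 i k (2 * lam) := by
    have := Measure.integral_comp_smul (volume : Measure E2)
      (fun y => pd u i k (x0 + (2 * lam)⁻¹ • y) * rho y) 2
    simp only [smul_smul] at this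
    rw [show (2 * lam)⁻¹ * 2 = lam⁻¹ by field_simp] at this
    rw [this, AA]
    norm_num
  have I1 : Integrable (fun y => pd u i k (x0 + lam⁻¹ • y) * rho y) := by
    have := (pd_rho (resc_contDiff hu x0 lam) (resc_int1 hu h1 x0 hl) i k).1
    simpa only [pd_resc hu x0 hl] using this
  have I2 : Integrable (fun y => pd u i k (x0 + lam⁻¹ • y) * rho ((2:ℝ) • y)) := by
    have := (pd_rho (resc_contDiff hu x0 (2 * lam)) (resc_int1 hu h1 x0 hl2) i k).1
    simp only [pd_resc hu x0 hl2] at this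
    have := this.comp_smul (R := 2) (by norm_num)
    simp only [smul_smul] at this
    rwa [show (2 * lam)⁻¹ * 2 = lam⁻¹ by field_simp] at this
  unfold JJ
  simp only [pd_resc hu x0 hl, deta_trace]
  have : ∀ y, pd u i k (x0 + lam⁻¹ • y) * (4 * rho ((2:ℝ) • y) - rho y) =
    4 * (pd u i k (x0 + lam⁻¹ • y) * rho ((2:ℝ) • y)) - pd u i k (x0 + lam⁻¹ • y) * rho y :=
    fun y => by ring
  simp only [this]
  rw [integral_sub (I2.const_mul 4) I1, integral_const_mul, e1]
  unfold AA
  ring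


lemma integral_fderiv_resc {u : E2 → E2} (hu : ContDiff ℝ 2 u) (x0 : E2) {lam : ℝ}
    (hl : 0 < lam) : (∫ x, ‖fderiv ℝ (resc u x0 lam) x‖ ^ (2:ℝ)) ^ (1 / 2 : ℝ) =
      lam * (∫ x, ‖fderiv ℝ u x‖ ^ (2:ℝ)) ^ (1 / 2 : ℝ) := by
  rw [fderiv_resc hu x0 hl, integral_resc (fun x => ‖fderiv ℝ u x‖ ^ (2:ℝ)) x0 lam,
    Real.mul_rpow (by positivity) (integral_nonneg fun x => by positivity),
    ← Real.sqrt_eq_rpow, Real.sqrt_sq hl.le]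

lemma tail_bound {u : E2 → E2} (hu : ContDiff ℝ 2 u)
    (h1 : Integrable (fun x => ‖fderiv ℝ u x‖ ^ (2:ℝ))) (x0 : E2) (i k : Fin 2) {lam : ℝ}
    (hl : 0 < lam) :
    Integrable (fun y => |pd u i k (x0 + lam⁻¹ • y)| * (2 / lam ^ 2 * NN y)) ∧
    ∫ y, |pd u i k (x0 + lam⁻¹ • y)| * (2 / lam ^ 2 * NN y) ≤
      2 * (∫ x, NN x ^ (2:ℝ)) ^ (1 / 2 : ℝ) * (∫ x, ‖fderiv ℝ u x‖ ^ (2:ℝ)) ^ (1 / 2 : ℝ)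
        * lam⁻¹ := by
  have hv := resc_contDiff hu x0 lam
  have c1 : Continuous (fun y => |pd (resc u x0 lam) i k y|) := (diff_pd hv i k).continuous.abs
  have c2 : ∀ y, |(|pd (resc u x0 lam) i k y|)| ≤ ‖fderiv ℝ (resc u x0 lam) y‖ := fun y => by
    rw [abs_abs]; exact pd_bound _ i k y
  have c3 : Continuous (fun y => 2 / lam ^ 2 * NN y) := continuous_const.mul cont_NN
  have c4 : ∀ y, |2 / lam ^ 2 * NN y| ≤ 2 / lam ^ 2 * NN y := fun y => by
    rw [abs_of_pos (mul_pos (by positivity) (NN_pos y))]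
  have := holder_aux Real.HolderConjugate.two_two c1 (cont_D1 hv).norm c2
    (resc_int1 hu h1 x0 hl) c3 (by positivity) c4
  rw [integral_fderiv_resc hu x0 hl] at this
  simp only [pd_resc hu x0 hl] at this
  refine ⟨this.1, (le_abs_self _).trans (this.2.trans (le_of_eq ?_))⟩
  field_simp

lemma AA_lim {u : E2 → E2} (hu : ContDiff ℝ 2 u)
    (h1 : Integrable (fun x => ‖fderiv ℝ u x‖ ^ (2:ℝ))) (x0 : E2) (i k : Fin 2) :
    Filter.Tendsto (fun n : ℕ => AA u x0 i k (2 ^ n)) Filter.atTop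
      (nhds (pd u i k x0 * ∫ y, rho y)) := by
  have hc : Continuous (pd u i k) := (diff_pd hu i k).continuous
  obtain ⟨B0, hB0⟩ := (isCompact_closedBall x0 1).exists_bound_of_continuousOn hc.continuousOn
  set h0 := pd u i k x0 with hh0
  set B := B0 + |h0| with hB
  have hB0' : 0 ≤ B0 := (norm_nonneg _).trans (hB0 x0 (by simp))
  set G : ℕ → E2 → ℝ := fun n y => min |pd u i k (x0 + ((2:ℝ) ^ n)⁻¹ • y) - h0| B * rho y with hG
  set T : ℕ → E2 → ℝ := fun n y =>
    |pd u i k (x0 + ((2:ℝ) ^ n)⁻¹ • y)| * (2 / ((2:ℝ) ^ n) ^ 2 * NN y) with hT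
  have hl : ∀ n : ℕ, (0:ℝ) < 2 ^ n := fun n => by positivity
  have hlim0 : Filter.Tendsto (fun n : ℕ => ((2:ℝ) ^ n)⁻¹) Filter.atTop (nhds 0) := by
    have := tendsto_pow_atTop_nhds_zero_of_lt_one (r := (2:ℝ)⁻¹) (by norm_num) (by norm_num)
    simpa [inv_pow] using this
  have hcn : ∀ n : ℕ, Continuous (fun y => pd u i k (x0 + ((2:ℝ) ^ n)⁻¹ • y)) := fun n =>
    hc.comp (by fun_prop)
  have hGb : ∀ n y, ‖G n y‖ ≤ B * rho y := fun n y => by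
    have : 0 ≤ min |pd u i k (x0 + ((2:ℝ) ^ n)⁻¹ • y) - h0| B :=
      le_min (abs_nonneg _) (by positivity)
    rw [Real.norm_of_nonneg (mul_nonneg this (rho_pos y).le)]
    exact mul_le_mul_of_nonneg_right (min_le_right _ _) (rho_pos y).le
  have hGc : ∀ n, AEStronglyMeasurable (G n) volume := fun n =>
    ((((hcn n).sub continuous_const).abs.min continuous_const).mul
      cont_rho).aestronglyMeasurable
  have hGi : ∀ n, Integrable (G n) := fun n =>
    (rho_int.const_mul B).mono' (hGc n) (Filter.Eventually.of_forall (hGb n))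
  have hGl : Filter.Tendsto (fun n => ∫ y, G n y) Filter.atTop (nhds 0) := by
    have := tendsto_integral_of_dominated_convergence (F := G) (f := fun _ => (0:ℝ))
      (fun y => B * rho y) hGc (rho_int.const_mul B)
      (fun n => Filter.Eventually.of_forall (hGb n)) (Filter.Eventually.of_forall fun y => by
        have a1 : Filter.Tendsto (fun n : ℕ => x0 + ((2:ℝ) ^ n)⁻¹ • y) Filter.atTop
            (nhds (x0 + (0:ℝ) • y)) := (hlim0.smul_const y).const_add x0
        rw [zero_smul, add_zero] at a1
        have a2 := (((hc.tendsto x0).comp a1).sub_const h0).abs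
        have a3 := (a2.min (tendsto_const_nhds (x := B))).mul_const (rho y)
        have hB' : 0 ≤ B := by positivity
        rw [← hh0, sub_self, abs_zero, min_eq_left hB', zero_mul] at a3
        exact a3)
    simpa using this
  have hTl : Filter.Tendsto (fun n => 2 * (∫ x, NN x ^ (2:ℝ)) ^ (1 / 2 : ℝ) *
      (∫ x, ‖fderiv ℝ u x‖ ^ (2:ℝ)) ^ (1 / 2 : ℝ) * ((2:ℝ) ^ n)⁻¹) Filter.atTop (nhds 0) := by
    simpa using hlim0.const_mul (2 * (∫ x, NN x ^ (2:ℝ)) ^ (1 / 2 : ℝ) *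
      (∫ x, ‖fderiv ℝ u x‖ ^ (2:ℝ)) ^ (1 / 2 : ℝ))
  rw [tendsto_iff_norm_sub_tendsto_zero]
  have hsum := hGl.add hTl
  rw [add_zero] at hsum
  refine squeeze_zero (fun n => norm_nonneg _) (fun n => ?_) hsum
  have hTb := tail_bound hu h1 x0 i k (hl n)
  have I1 : Integrable (fun y => pd u i k (x0 + ((2:ℝ) ^ n)⁻¹ • y) * rho y) := by
    have := (pd_rho (resc_contDiff hu x0 _) (resc_int1 hu h1 x0 (hl n)) i k).1
    simpa only [pd_resc hu x0 (hl n)] using this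
  have e : AA u x0 i k (2 ^ n) - h0 * ∫ y, rho y =
      ∫ y, (pd u i k (x0 + ((2:ℝ) ^ n)⁻¹ • y) - h0) * rho y := by
    simp only [sub_mul]
    rw [integral_sub I1 (rho_int.const_mul h0), integral_const_mul, AA]
  rw [e]
  calc ‖∫ y, (pd u i k (x0 + ((2:ℝ) ^ n)⁻¹ • y) - h0) * rho y‖ ≤ ∫ y, (G n y + T n y) := by
        refine norm_integral_le_of_norm_le ((hGi n).add hTb.1)
          (Filter.Eventually.of_forall fun y => ?_)
        rw [Real.norm_eq_abs, abs_mul, abs_of_pos (rho_pos y)]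
        simp only [hG, hT]
        have hT0 : 0 ≤ |pd u i k (x0 + ((2:ℝ) ^ n)⁻¹ • y)| * (2 / ((2:ℝ) ^ n) ^ 2 * NN y) :=
          mul_nonneg (abs_nonneg _) (mul_nonneg (by positivity) (NN_pos y).le)
        rcases le_total |pd u i k (x0 + ((2:ℝ) ^ n)⁻¹ • y) - h0| B with hle | hle
        · rw [min_eq_left hle]; linarith
        · rw [min_eq_right hle]
          by_cases hy : ‖y‖ ≤ 2 ^ n
          · have : |pd u i k (x0 + ((2:ℝ) ^ n)⁻¹ • y)| ≤ B0 := by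
              apply hB0
              rw [mem_closedBall, dist_eq_norm, add_sub_cancel_left, norm_smul,
                Real.norm_of_nonneg (by positivity), inv_mul_le_iff₀ (hl n)]
              linarith
            have h2 : |pd u i k (x0 + ((2:ℝ) ^ n)⁻¹ • y) - h0| ≤ B :=
              (abs_sub _ _).trans (by linarith)
            have := mul_le_mul_of_nonneg_right h2 (rho_pos y).le
            linarith
          · push Not at hy
            have hr : rho y ≤ 2 / ((2:ℝ) ^ n) ^ 2 * NN y := by
              have hs : ((2:ℝ) ^ n) ^ 2 ≤ 1 + ‖y‖ ^ 2 := by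
                have := pow_le_pow_left₀ (hl n).le hy.le 2
                linarith
              rw [rho, NN, sq (1 + ‖y‖ ^ 2), mul_inv, ← mul_assoc, div_eq_mul_inv]
              gcongr
            have h2 : |pd u i k (x0 + ((2:ℝ) ^ n)⁻¹ • y) - h0| ≤
              |pd u i k (x0 + ((2:ℝ) ^ n)⁻¹ • y)| + |h0| := abs_sub _ _
            have h3 := mul_le_mul_of_nonneg_right h2 (rho_pos y).le
            have h4 := mul_le_mul_of_nonneg_left hr (abs_nonneg (pd u i k (x0 + ((2:ℝ) ^ n)⁻¹ • y)))
            have h5 : |h0| * rho y ≤ B * rho y :=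
              mul_le_mul_of_nonneg_right (by linarith) (rho_pos y).le
            linarith
    _ = (∫ y, G n y) + ∫ y, T n y := integral_add (hGi n) hTb.1
    _ ≤ _ := by gcongr; exact hTb.2

lemma step1 {u : E2 → E2} (hu : ContDiff ℝ 2 u) {p : ℝ} (hp : 2 < p)
    (h1 : Integrable (fun x => ‖fderiv ℝ u x‖ ^ (2:ℝ)))
    (h2 : Integrable (fun x => D2n u x ^ p)) {M : ℝ} (hd : ∀ x, |div2 u x| ≤ M)
    (hc : ∀ x, |curl2 u x| ≤ M) (x0 : E2) (i k : Fin 2) {lam : ℝ} (hl : 0 < lam) :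
    |AA u x0 i k (2 * lam) - AA u x0 i k lam| ≤ K1 * M := by
  rw [AA_step hu h1 x0 hl]
  refine JJ_bound1 (resc_contDiff hu x0 lam) hp (resc_int1 hu h1 x0 hl)
    (resc_int2 hu h2 x0 hl).1 (fun x => ?_) (fun x => ?_) i k
  · rw [div2_eq, pd_resc hu x0 hl, pd_resc hu x0 hl, ← div2_eq]; exact hd _
  · rw [curl2_eq, pd_resc hu x0 hl, pd_resc hu x0 hl, ← curl2_eq]; exact hc _

lemma step2 {u : E2 → E2} (hu : ContDiff ℝ 2 u) {p : ℝ} (hp : 2 < p)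
    (h1 : Integrable (fun x => ‖fderiv ℝ u x‖ ^ (2:ℝ)))
    (h2 : Integrable (fun x => D2n u x ^ p)) (x0 : E2) (i k : Fin 2) (j : ℕ) :
    |AA u x0 i k (2 * 2 ^ j) - AA u x0 i k (2 ^ j)| ≤
      K2 p * (∫ x, D2n u x ^ p) ^ (1 / p) * ((2:ℝ) ^ (2 / p - 1)) ^ j := by
  have hl : (0:ℝ) < 2 ^ j := by positivity
  rw [AA_step hu h1 x0 hl]
  refine (JJ_bound2 (resc_contDiff hu x0 _) hp (resc_int1 hu h1 x0 hl)
    (resc_int2 hu h2 x0 hl).1 i k).trans (le_of_eq ?_)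
  rw [(resc_int2 hu h2 x0 hl).2, mul_assoc]
  congr 1
  have hI : 0 ≤ ∫ x, D2n u x ^ p :=
    integral_nonneg fun x => Real.rpow_nonneg (norm_nonneg _) _
  rw [← mul_assoc, Real.mul_rpow (by positivity) hI, mul_comm]
  congr 1
  rw [Real.mul_rpow (by positivity) (by positivity), ← Real.rpow_mul (by positivity),
    mul_one_div_cancel (by linarith), Real.rpow_one, ← Real.rpow_natCast (2 ^ j) 2,
    ← Real.rpow_mul (by positivity), ← Real.rpow_natCast 2 j, ← Real.rpow_neg (by positivity),
    ← Real.rpow_mul (by positivity), ← Real.rpow_add (by positivity),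
    ← Real.rpow_natCast _ j, ← Real.rpow_mul (by positivity)]
  congr 1
  push_cast
  ring

lemma main_pt {u : E2 → E2} (hu : ContDiff ℝ 2 u) {p : ℝ} (hp : 2 < p)
    (h1 : Integrable (fun x => ‖fderiv ℝ u x‖ ^ (2:ℝ)))
    (h2 : Integrable (fun x => D2n u x ^ p)) {M : ℝ} (hd : ∀ x, |div2 u x| ≤ M)
    (hc : ∀ x, |curl2 u x| ≤ M) (x0 : E2) (i k : Fin 2) (N : ℕ) :
    |pd u i k x0| * (∫ y, rho y) ≤
      2 * (∫ x, NN x ^ (2:ℝ)) ^ (1 / 2 : ℝ) * (∫ x, ‖fderiv ℝ u x‖ ^ (2:ℝ)) ^ (1 / 2 : ℝ)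
      + N * (K1 * M) + K2 p * (∫ x, D2n u x ^ p) ^ (1 / p) * ((2:ℝ) ^ (2 / p - 1)) ^ N *
        (1 - (2:ℝ) ^ (2 / p - 1))⁻¹ := by
  set r := (2:ℝ) ^ (2 / p - 1) with hr
  have hr0 : 0 < r := by positivity
  have hr1 : r < 1 := by
    apply Real.rpow_lt_one_of_one_lt_of_neg (by norm_num)
    rw [sub_neg, div_lt_one (by linarith)]; exact hp
  set S := K2 p * (∫ x, D2n u x ^ p) ^ (1 / p) with hS
  have hS0 : 0 ≤ S := mul_nonneg (K2_nonneg p) (Real.rpow_nonneg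
    (integral_nonneg fun x => Real.rpow_nonneg (norm_nonneg _) _) _)
  set X := 2 * (∫ x, NN x ^ (2:ℝ)) ^ (1 / 2 : ℝ) * (∫ x, ‖fderiv ℝ u x‖ ^ (2:ℝ)) ^ (1 / 2 : ℝ)
  have A0 : |AA u x0 i k (2 ^ 0)| ≤ X := by
    have hv := resc_contDiff hu x0 1
    have := (pd_rho hv (resc_int1 hu h1 x0 one_pos) i k).2
    rw [integral_fderiv_resc hu x0 one_pos, one_mul] at this
    simp only [pd_resc hu x0 one_pos] at this
    rw [pow_zero]; exact this
  have A1 : ∀ n : ℕ, |AA u x0 i k (2 ^ n)| ≤ X + n * (K1 * M) := by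
    intro n
    induction n with
    | zero => simpa using A0
    | succ n ih =>
      have := step1 hu hp h1 h2 hd hc x0 i k (lam := 2 ^ n) (by positivity)
      rw [← pow_succ'] at this
      have h3 := abs_sub_abs_le_abs_sub (AA u x0 i k (2 ^ (n + 1))) (AA u x0 i k (2 ^ n))
      push_cast
      linarith
  have A2 : ∀ m : ℕ, |AA u x0 i k (2 ^ (m + N))| ≤
      X + N * (K1 * M) + S * r ^ N * ((1 - r ^ m) * (1 - r)⁻¹) := by
    intro m
    induction m with
    | zero => simpa using A1 N
    | succ m ih =>
      have := step2 hu hp h1 h2 x0 i k (m + N)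
      rw [← pow_succ', ← hS, ← hr] at this
      have h3 := abs_sub_abs_le_abs_sub (AA u x0 i k (2 ^ (m + N + 1))) (AA u x0 i k (2 ^ (m + N)))
      have h4 : S * r ^ N * ((1 - r ^ (m + 1)) * (1 - r)⁻¹) =
          S * r ^ N * ((1 - r ^ m) * (1 - r)⁻¹) + S * r ^ (m + N) := by
        have : 1 - r ≠ 0 := by linarith
        field_simp
        ring
      rw [show m + 1 + N = m + N + 1 by ring, h4]
      linarith
  have L := ((AA_lim hu h1 x0 i k).comp (Filter.tendsto_add_atTop_nat N)).abs
  have := le_of_tendsto L (b := X + N * (K1 * M) + S * r ^ N * (1 - r)⁻¹)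
    (Filter.Eventually.of_forall fun m => by
      refine (A2 m).trans ?_
      have h5 : 0 < (1 - r)⁻¹ := inv_pos.mpr (by linarith)
      have h6 : 0 ≤ r ^ m := by positivity
      gcongr
      nlinarith)
  rwa [abs_mul, abs_of_pos rho_int_pos] at this

lemma norm_le_pd (u : E2 → E2) (x : E2) :
    ‖fderiv ℝ u x‖ ≤ |pd u 0 0 x| + |pd u 0 1 x| + |pd u 1 0 x| + |pd u 1 1 x| := by
  have hn : ∀ y : E2, ‖y‖ ≤ |y 0| + |y 1| := fun y => by
    have h : ‖y‖ ^ 2 = y 0 ^ 2 + y 1 ^ 2 := by simp [EuclideanSpace.real_norm_sq_eq]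
    refine abs_le_of_sq_le_sq' ?_ (by positivity) |>.2
    rw [h, ← sq_abs (y 0), ← sq_abs (y 1)]
    nlinarith [abs_nonneg (y 0), abs_nonneg (y 1)]
  refine ContinuousLinearMap.opNorm_le_bound _ (by positivity) fun v => ?_
  have hv : v = v 0 • e2 0 + v 1 • e2 1 := by
    ext j; fin_cases j <;> simp [e2]
  have h0 := hn (fderiv ℝ u x (e2 0))
  have h1 := hn (fderiv ℝ u x (e2 1))
  calc ‖fderiv ℝ u x v‖ = ‖v 0 • fderiv ℝ u x (e2 0) + v 1 • fderiv ℝ u x (e2 1)‖ := by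
        conv_lhs => rw [hv]
        rw [map_add, map_smul, map_smul]
    _ ≤ |v 0| * ‖fderiv ℝ u x (e2 0)‖ + |v 1| * ‖fderiv ℝ u x (e2 1)‖ := by
        refine (norm_add_le _ _).trans (le_of_eq ?_)
        rw [norm_smul, norm_smul, Real.norm_eq_abs, Real.norm_eq_abs]
    _ ≤ ‖v‖ * (|pd u 0 0 x| + |pd u 0 1 x|) + ‖v‖ * (|pd u 1 0 x| + |pd u 1 1 x|) := by
        gcongr
        · exact abs_coord_le 0 v
        · exact h0
        · exact abs_coord_le 1 v
        · exact h1
    _ = _ := by ring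

lemma pt_of_eLpNorm {f : E2 → ℝ} (hf : Continuous f) (hfin : eLpNorm f ⊤ volume ≠ ⊤) (x : E2) :
    |f x| ≤ (eLpNorm f ⊤ volume).toReal := by
  have hae : ∀ᵐ y ∂(volume : Measure E2), |f y| ≤ (eLpNorm f ⊤ volume).toReal := by
    filter_upwards [ae_le_eLpNormEssSup (f := f) (μ := (volume : Measure E2))] with y hy
    rw [← eLpNorm_exponent_top] at hy
    have := ENNReal.toReal_mono hfin hy
    simpa using this
  by_contra hx
  push Not at hx
  have ho : IsOpen {y | (eLpNorm f ⊤ volume).toReal < |f y|} :=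
    isOpen_lt continuous_const hf.abs
  have hz : volume {y | (eLpNorm f ⊤ volume).toReal < |f y|} = 0 := by
    rw [ae_iff] at hae
    simpa only [not_le] using hae
  have hz := (ho.measure_eq_zero_iff volume).1 hz
  exact (hz ▸ (show x ∈ {y | (eLpNorm f ⊤ volume).toReal < |f y|} from hx) : x ∈ (∅ : Set E2))

lemma main_real (p : ℝ) (hp : 2 < p) : ∃ C : ℝ, 0 < C ∧ ∀ u : E2 → E2, ContDiff ℝ 2 u →
    Integrable (fun x => ‖fderiv ℝ u x‖ ^ (2:ℝ)) → Integrable (fun x => D2n u x ^ p) →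
    ∀ M : ℝ, (∀ x, |div2 u x| ≤ M) → (∀ x, |curl2 u x| ≤ M) → ∀ x, ‖fderiv ℝ u x‖ ≤
      C * M * Real.log (Real.exp 1 + (∫ x, D2n u x ^ p) ^ (1 / p)) +
      (C * (∫ x, ‖fderiv ℝ u x‖ ^ (2:ℝ)) ^ (1 / 2 : ℝ) + C) := by
  set r := (2:ℝ) ^ (2 / p - 1) with hr
  have hr0 : 0 < r := by positivity
  have hr1 : r < 1 := by
    apply Real.rpow_lt_one_of_one_lt_of_neg (by norm_num)
    rw [sub_neg, div_lt_one (by linarith)]; exact hp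
  set b := - Real.log r with hb
  have hb0 : 0 < b := by rw [hb, neg_pos]; exact Real.log_neg hr0 hr1
  set c0 := ∫ y, rho y with hc0
  have hc0' : 0 < c0 := rho_int_pos
  set Y := 2 * (∫ x, NN x ^ (2:ℝ)) ^ (1 / 2 : ℝ) with hY
  have hY0 : 0 ≤ Y := mul_nonneg (by norm_num) (Real.rpow_nonneg (integral_nonneg fun x =>
    Real.rpow_nonneg (NN_pos x).le _) _)
  have h1r : 0 < (1 - r)⁻¹ := inv_pos.mpr (by linarith)
  have hK1 := K1_nonneg
  have hK2 := K2_nonneg p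
  set D := Y + (1 / b + 1) * K1 + K2 p * (1 - r)⁻¹ with hD
  have hY1 : 0 ≤ (1 / b + 1) * K1 := by positivity
  have hY2 : 0 ≤ K2 p * (1 - r)⁻¹ := by positivity
  have hD0 : 0 ≤ D := by positivity
  refine ⟨4 / c0 * D + 1, by positivity, fun u hu h1 h2 M hd hc x => ?_⟩
  have hM : 0 ≤ M := (abs_nonneg _).trans (hd 0)
  set S := (∫ x, D2n u x ^ p) ^ (1 / p) with hS
  have hS0 : 0 ≤ S := Real.rpow_nonneg
    (integral_nonneg fun x => Real.rpow_nonneg (norm_nonneg _) _) _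
  set X := (∫ x, ‖fderiv ℝ u x‖ ^ (2:ℝ)) ^ (1 / 2 : ℝ) with hX
  have hX0 : 0 ≤ X := Real.rpow_nonneg (integral_nonneg fun x => by positivity) _
  set L := Real.log (Real.exp 1 + S) with hL
  have hL1 : 1 ≤ L := by
    rw [hL, Real.le_log_iff_exp_le (by positivity)]; linarith
  have hN1 : L / b ≤ (⌈L / b⌉₊ : ℕ) := Nat.le_ceil _
  have hN2 : ((⌈L / b⌉₊ : ℕ) : ℝ) ≤ (1 / b + 1) * L := by
    have := (Nat.ceil_lt_add_one (show 0 ≤ L / b by positivity)).le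
    refine this.trans ?_
    have : (1 / b + 1) * L = L / b + L := by ring
    rw [this]; linarith
  set N := ⌈L / b⌉₊ with hN
  have hrN : S * r ^ N ≤ 1 := by
    have e1 : r ^ N = Real.exp (- (N * b)) := by
      rw [hb, mul_neg, neg_neg, Real.exp_nat_mul, Real.exp_log hr0]
    have e2 : L ≤ N * b := by rwa [div_le_iff₀ hb0] at hN1
    have e3 : r ^ N ≤ (Real.exp 1 + S)⁻¹ := by
      rw [e1, ← Real.exp_log (show 0 < Real.exp 1 + S by positivity), ← Real.exp_neg]
      exact Real.exp_le_exp.mpr (by linarith)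
    calc S * r ^ N ≤ S * (Real.exp 1 + S)⁻¹ := by gcongr
      _ ≤ 1 := by
        rw [mul_inv_le_iff₀ (by positivity)]
        linarith [Real.exp_pos 1]
  have key : ∀ i k, |pd u i k x| ≤ D / c0 * (M * L + X + 1) := fun i k => by
    have := main_pt hu hp h1 h2 hd hc x i k N
    rw [← hr, ← hS, ← hX, ← hY, ← hc0] at this
    rw [div_mul_eq_mul_div, le_div_iff₀ hc0']
    refine this.trans ?_
    have q1 : N * (K1 * M) ≤ (1 / b + 1) * L * (K1 * M) := by gcongr
    have q2 : K2 p * S * r ^ N * (1 - r)⁻¹ ≤ K2 p * (1 - r)⁻¹ := by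
      have := mul_le_mul_of_nonneg_left hrN hY2
      linarith
    have q3 : 0 ≤ M * L := by positivity
    have t1 : Y * X ≤ D * X := by gcongr; linarith
    have t2 : (1 / b + 1) * K1 * (M * L) ≤ D * (M * L) := by gcongr; linarith
    have t3 : K2 p * (1 - r)⁻¹ ≤ D := by linarith
    nlinarith
  have q3 : 0 ≤ M * L := by positivity
  have e : (4 / c0 * D + 1) * M * L + ((4 / c0 * D + 1) * X + (4 / c0 * D + 1)) =
    4 * (D / c0 * (M * L + X + 1)) + (M * L + X + 1) := by ring
  rw [e]
  linarith [norm_le_pd u x, key 0 0, key 0 1, key 1 0, key 1 1]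

/-- Beale–Kato–Majda type inequality in two dimensions (Lemma 2.8 of the paper). -/
theorem beale_kato_majda_2d (p : ℝ) (hp : 2 < p) :
    ∃ C : ℝ, 0 < C ∧ ∀ u : E2 → E2, ContDiff ℝ 2 u →
      Integrable (fun x => ‖fderiv ℝ u x‖ ^ 2) →
      Integrable (fun x => ‖fderiv ℝ u x‖ ^ p) →
      Integrable (fun x => ‖iteratedFDeriv ℝ 2 u x‖ ^ p) →
      eLpNorm (fun x => ‖fderiv ℝ u x‖) ⊤ volume ≤
        ENNReal.ofReal C * (eLpNorm (div2 u) ⊤ volume + eLpNorm (curl2 u) ⊤ volume) *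
          ENNReal.ofReal
            (Real.log (Real.exp 1 + (∫ x : E2, ‖iteratedFDeriv ℝ 2 u x‖ ^ p) ^ (1 / p))) +
        ENNReal.ofReal (C * (∫ x : E2, ‖fderiv ℝ u x‖ ^ 2) ^ (1 / 2 : ℝ) + C) := by
  obtain ⟨C, hC, H⟩ := main_real p hp
  refine ⟨C, hC, fun u hu h1 _ h2 => ?_⟩
  have e2' : ∀ x, ‖fderiv ℝ u x‖ ^ (2:ℝ) = ‖fderiv ℝ u x‖ ^ 2 := fun x => by
    rw [Real.rpow_two]
  have h1' : Integrable (fun x => ‖fderiv ℝ u x‖ ^ (2:ℝ)) := by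
    simp only [e2']; exact h1
  have HH := H u hu h1' h2
  simp only [e2'] at HH
  have hL : 0 < Real.log (Real.exp 1 + (∫ x : E2, ‖iteratedFDeriv ℝ 2 u x‖ ^ p) ^ (1 / p)) := by
    apply Real.log_pos
    have : 0 ≤ (∫ x : E2, ‖iteratedFDeriv ℝ 2 u x‖ ^ p) ^ (1 / p) :=
      Real.rpow_nonneg (integral_nonneg fun x => Real.rpow_nonneg (norm_nonneg _) _) _
    have h3 : (1:ℝ) < Real.exp 1 := by simp
    linarith
  have cd : Continuous (div2 u) := by
    have : div2 u = fun x => pd u 0 0 x + pd u 1 1 x := funext (div2_eq u)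
    rw [this]
    exact (diff_pd hu _ _).continuous.add (diff_pd hu _ _).continuous
  have cc : Continuous (curl2 u) := by
    have : curl2 u = fun x => pd u 1 0 x - pd u 0 1 x := funext (curl2_eq u)
    rw [this]
    exact (diff_pd hu _ _).continuous.sub (diff_pd hu _ _).continuous
  by_cases hfin : eLpNorm (div2 u) ⊤ volume + eLpNorm (curl2 u) ⊤ volume = ⊤
  · rw [hfin, ENNReal.mul_top (by simpa using hC), ENNReal.top_mul (by simpa using hL), top_add]
    exact le_top
  · have hd : eLpNorm (div2 u) ⊤ volume ≠ ⊤ := fun h => hfin (by rw [h, top_add])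
    have hc : eLpNorm (curl2 u) ⊤ volume ≠ ⊤ := fun h => hfin (by rw [h, add_top])
    have pd1 := pt_of_eLpNorm cd hd
    have pc1 := pt_of_eLpNorm cc hc
    rw [← ENNReal.ofReal_toReal hd, ← ENNReal.ofReal_toReal hc]
    set d := (eLpNorm (div2 u) ⊤ volume).toReal
    set c := (eLpNorm (curl2 u) ⊤ volume).toReal
    have hd0 : 0 ≤ d := ENNReal.toReal_nonneg
    have hc0 : 0 ≤ c := ENNReal.toReal_nonneg
    have fin := HH (d + c) (fun x => (pd1 x).trans (by linarith))
      (fun x => (pc1 x).trans (by linarith))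
    have hX : 0 ≤ (∫ x : E2, ‖fderiv ℝ u x‖ ^ 2) ^ (1 / 2 : ℝ) :=
      Real.rpow_nonneg (integral_nonneg fun x => by positivity) _
    rw [← ENNReal.ofReal_add hd0 hc0, ← ENNReal.ofReal_mul hC.le,
      ← ENNReal.ofReal_mul (by positivity), ← ENNReal.ofReal_add (by positivity) (by positivity),
      eLpNorm_exponent_top]
    refine eLpNormEssSup_le_of_ae_bound (Filter.Eventually.of_forall fun x => ?_)
    rw [norm_norm]
    exact fin x
end
end
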